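/- arXiv:2106.04962 — 4 statements merged into one kernel-verified Lean document; each statement's English description precedes it below -/
import Mathlib

section
/- Let ψ be a Ma-Minda function with ψ(𝔻) a convex set, let k ≥ 2, and let g_k(z) = (z − z^{k+1})/(1 − z) = z + z² + ⋯ + z^k. Suppose r ∈ (0, 1] is such that the function z ↦ g_k(rz)/r belongs to S*(ψ). If f(z) = z + Σ_{n≥2} aₙzⁿ ∈ C(ψ), then the k-th section f_k(z) = z + Σ_{n=2}^k aₙzⁿ satisfies: the function z ↦ f_k(rz)/r belongs to S*(ψ); that is, f_k ∈ S*(ψ) on |z| < r. -/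
open Complex Metric Set

noncomputable section

/-- The open unit disk in `ℂ`. -/
def 𝔻 : Set ℂ := Metric.ball 0 1

/-- The class `𝒜` of analytic functions on `𝔻` normalized by `f 0 = 0`, `f' 0 = 1`. -/
def IsClassA (f : ℂ → ℂ) : Prop :=
  DifferentiableOn ℂ f 𝔻 ∧ f 0 = 0 ∧ deriv f 0 = 1

/-- `g` is subordinate to `F` on the unit disk. -/
def Subordinate (g F : ℂ → ℂ) : Prop :=
  ∃ ω : ℂ → ℂ, DifferentiableOn ℂ ω 𝔻 ∧ ω 0 = 0 ∧ (∀ z ∈ 𝔻, ω z ∈ 𝔻) ∧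
    ∀ z ∈ 𝔻, g z = F (ω z)

/-- `ψ` is a Ma-Minda function: analytic and univalent on `𝔻`, `Re ψ > 0`, `ψ 0 = 1`,
`ψ' 0 > 0`, with real Taylor coefficients (expressed via `ψ (conj z) = conj (ψ z)`). -/
def MaMinda (ψ : ℂ → ℂ) : Prop :=
  DifferentiableOn ℂ ψ 𝔻 ∧ Set.InjOn ψ 𝔻 ∧ (∀ z ∈ 𝔻, 0 < (ψ z).re) ∧
    ψ 0 = 1 ∧ 0 < (deriv ψ 0).re ∧ (deriv ψ 0).im = 0 ∧
    (∀ z ∈ 𝔻, ψ (starRingEnd ℂ z) = starRingEnd ℂ (ψ z))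

/-- The Ma-Minda starlike class `S*(ψ)`. -/
def StarlikeMM (ψ f : ℂ → ℂ) : Prop :=
  IsClassA f ∧ (∀ z ∈ 𝔻, z ≠ 0 → f z ≠ 0) ∧
    Subordinate (fun z => if z = 0 then 1 else z * deriv f z / f z) ψ

/-- The Ma-Minda convex class `C(ψ)`. -/
def ConvexMM (ψ f : ℂ → ℂ) : Prop :=
  IsClassA f ∧ (∀ z ∈ 𝔻, deriv f z ≠ 0) ∧
    Subordinate (fun z => 1 + z * deriv (deriv f) z / deriv f z) ψ

/-- `f` is starlike of order `α`. -/
def StarlikeOrder (α : ℝ) (f : ℂ → ℂ) : Prop :=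
  IsClassA f ∧ (∀ z ∈ 𝔻, z ≠ 0 → f z ≠ 0) ∧
    ∀ z ∈ 𝔻, z ≠ 0 → α < (z * deriv f z / f z).re

/-- `f` is a (normalized) convex function on `𝔻`. -/
def IsConvexFn (f : ℂ → ℂ) : Prop :=
  IsClassA f ∧ (∀ z ∈ 𝔻, deriv f z ≠ 0) ∧
    ∀ z ∈ 𝔻, 0 < (1 + z * deriv (deriv f) z / deriv f z).re

/-- point of the unit circle at angle `t` -/
def ee (t : ℝ) : ℂ := cexp (t * I)

/-- mean value over `[0, 2π]` -/
def mv (h : ℝ → ℂ) : ℂ := (2 * (Real.pi : ℂ))⁻¹ * ∫ t in (0:ℝ)..(2 * Real.pi), h t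

lemma ee_cont : Continuous ee := by unfold ee; fun_prop

lemma ee_norm (t : ℝ) : ‖ee t‖ = 1 := by simp [ee, Complex.norm_exp_ofReal_mul_I]

lemma ee_ne (t : ℝ) : ee t ≠ 0 := Complex.exp_ne_zero _

lemma ee_mem {R : ℝ} (hR : 1 < R) (t : ℝ) : ee t ∈ ball (0:ℂ) R := by
  simp [ee_norm, hR]

lemma ee_conj (t : ℝ) : ee t * (starRingEnd ℂ) (ee t) = 1 := by
  rw [Complex.mul_conj, Complex.normSq_eq_norm_sq, ee_norm]; simp

lemma ee_per (t : ℝ) : ee (t + 2 * Real.pi) = ee t := by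
  unfold ee
  push_cast
  rw [add_mul, Complex.exp_add, Complex.exp_two_pi_mul_I, mul_one]

lemma mv_an {R : ℝ} (hR : 1 < R) {h : ℂ → ℂ} (hh : DifferentiableOn ℂ h (ball 0 R)) :
    mv (fun t => h (ee t)) = h 0 := by
  have h2 : DiffContOnCl ℂ h (ball 0 |1|) := by
    apply DifferentiableOn.diffContOnCl
    rw [abs_one, closure_ball _ one_ne_zero]
    exact hh.mono (closedBall_subset_ball hR)
  rw [← h2.circleAverage, Real.circleAverage, mv]
  simp [circleMap, ee]

lemma mv_add {f g : ℝ → ℂ} (hf : Continuous f) (hg : Continuous g) :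
    mv (fun t => f t + g t) = mv f + mv g := by
  unfold mv
  rw [intervalIntegral.integral_add (hf.intervalIntegrable _ _) (hg.intervalIntegrable _ _), mul_add]

lemma mv_sub {f g : ℝ → ℂ} (hf : Continuous f) (hg : Continuous g) :
    mv (fun t => f t - g t) = mv f - mv g := by
  unfold mv
  rw [intervalIntegral.integral_sub (hf.intervalIntegrable _ _) (hg.intervalIntegrable _ _), mul_sub]

lemma mv_cmul (c : ℂ) (f : ℝ → ℂ) : mv (fun t => c * f t) = c * mv f := by
  unfold mv
  rw [intervalIntegral.integral_const_mul]; ring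

lemma mv_conj (f : ℝ → ℂ) : mv (fun t => (starRingEnd ℂ) (f t)) = (starRingEnd ℂ) (mv f) := by
  unfold mv
  rw [map_mul, intervalIntegral.integral_of_le Real.two_pi_pos.le,
    intervalIntegral.integral_of_le Real.two_pi_pos.le, integral_conj]
  congr 1
  rw [map_inv₀, map_mul, Complex.conj_ofReal, map_ofNat]

lemma mv_swap {F : ℝ → ℝ → ℂ} (hF : Continuous (Function.uncurry F)) :
    mv (fun s => mv (fun t => F s t)) = mv (fun t => mv (fun s => F s t)) := by
  unfold mv
  rw [intervalIntegral.integral_const_mul, intervalIntegral.integral_const_mul,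
    MeasureTheory.intervalIntegral_intervalIntegral_swap]
  rw [uIoc_of_le Real.two_pi_pos.le]
  have : MeasureTheory.IntegrableOn (Function.uncurry F)
      (Icc 0 (2 * Real.pi) ×ˢ Icc 0 (2 * Real.pi)) (MeasureTheory.volume.prod MeasureTheory.volume) :=
    hF.continuousOn.integrableOn_compact (isCompact_Icc.prod isCompact_Icc)
  have := this.mono_set (Set.prod_mono Ioc_subset_Icc_self Ioc_subset_Icc_self)
  exact this

lemma mv_cont {F : ℝ → ℝ → ℂ} (hF : Continuous (Function.uncurry F)) :
    Continuous (fun s => mv (fun t => F s t)) := by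
  unfold mv
  exact continuous_const.mul
    (intervalIntegral.continuous_parametric_intervalIntegral_of_continuous' hF _ _)

lemma dslope_symm (φ : ℂ → ℂ) (a b : ℂ) : dslope φ a b = dslope φ b a := by
  by_cases h : b = a
  · subst h; rfl
  · rw [dslope_of_ne _ h, dslope_of_ne _ (Ne.symm h), slope_comm]

lemma dslope_mul (φ : ℂ → ℂ) (a b : ℂ) : (b - a) * dslope φ a b = φ b - φ a := by
  simpa using sub_smul_dslope φ a b

lemma dslope_diff {R : ℝ} {φ : ℂ → ℂ} (hφ : DifferentiableOn ℂ φ (ball 0 R)) {a : ℂ}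
    (ha : a ∈ ball (0:ℂ) R) : DifferentiableOn ℂ (dslope φ a) (ball 0 R) :=
  (Complex.differentiableOn_dslope (isOpen_ball.mem_nhds ha)).2 hφ

lemma dslope_cont {R : ℝ} (hR : 1 < R) {φ : ℂ → ℂ} (hφ : DifferentiableOn ℂ φ (ball 0 R)) :
    Continuous (fun x : ℝ × ℝ => dslope φ (ee x.1) (ee x.2)) := by
  -- integral representation
  set c : ℝ → ℝ := fun u => max 0 (min u 1) with hc
  have hc0 : ∀ u, 0 ≤ c u := fun u => le_max_left _ _
  have hc1 : ∀ u, c u ≤ 1 := fun u => max_le zero_le_one (min_le_right _ _)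
  have hcc : Continuous c := by fun_prop
  have hd : DifferentiableOn ℂ (deriv φ) (ball 0 R) := hφ.deriv isOpen_ball
  have hmem : ∀ (s t u : ℝ), 0 ≤ u → u ≤ 1 → ee s + (u:ℂ) * (ee t - ee s) ∈ ball (0:ℂ) R := by
    intro s t u h0 h1
    have := (convex_ball (0:ℂ) R) (ee_mem hR s) (ee_mem hR t) (sub_nonneg.2 h1) h0 (by ring)
    convert this using 1
    simp only [Complex.real_smul]; push_cast; ring
  have key : (fun x : ℝ × ℝ => dslope φ (ee x.1) (ee x.2)) = fun x : ℝ × ℝ =>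
      ∫ u in (0:ℝ)..1, deriv φ (ee x.1 + (c u : ℂ) * (ee x.2 - ee x.1)) := by
    ext ⟨s, t⟩
    simp only
    have e1 : ∫ u in (0:ℝ)..1, deriv φ (ee s + (c u : ℂ) * (ee t - ee s)) =
        ∫ u in (0:ℝ)..1, deriv φ (ee s + (u : ℂ) * (ee t - ee s)) := by
      apply intervalIntegral.integral_congr
      intro u hu
      rw [uIcc_of_le zero_le_one] at hu
      have : c u = u := by simp [hc, hu.1, hu.2]
      simp only [this]
    rw [e1]
    by_cases hst : ee t = ee s
    · rw [hst]; simp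
    · have hne : ee t - ee s ≠ 0 := sub_ne_zero.2 hst
      apply mul_left_cancel₀ hne
      rw [dslope_mul, ← intervalIntegral.integral_const_mul]
      have := intervalIntegral.integral_eq_sub_of_hasDerivAt (a := (0:ℝ)) (b := 1)
        (f := fun u : ℝ => φ (ee s + (u : ℂ) * (ee t - ee s)))
        (f' := fun u : ℝ => (ee t - ee s) * deriv φ (ee s + (u : ℂ) * (ee t - ee s))) ?_ ?_
      · rw [this]; simp
      · intro u hu
        rw [uIcc_of_le zero_le_one] at hu
        have h1 : HasDerivAt φ (deriv φ (ee s + (u : ℂ) * (ee t - ee s)))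
            (ee s + (u : ℂ) * (ee t - ee s)) :=
          (hφ.differentiableAt (isOpen_ball.mem_nhds (hmem s t u hu.1 hu.2))).hasDerivAt
        have h2 : HasDerivAt (fun u : ℝ => ee s + (u : ℂ) * (ee t - ee s)) (ee t - ee s) u := by
          have := ((Complex.ofRealCLM.hasDerivAt (x := u)).mul_const (ee t - ee s)).const_add (ee s)
          simpa using this
        have := h1.comp_of_eq u h2 rfl
        rw [mul_comm]
        exact this
      · apply ContinuousOn.intervalIntegrable
        apply ContinuousOn.mul continuousOn_const
        apply hd.continuousOn.comp (by fun_prop)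
        intro u hu
        rw [uIcc_of_le zero_le_one] at hu
        exact hmem s t u hu.1 hu.2
  rw [key]
  apply intervalIntegral.continuous_parametric_intervalIntegral_of_continuous'
  have : Continuous (fun x : (ℝ × ℝ) × ℝ => ee x.1.1 + (c x.2 : ℂ) * (ee x.1.2 - ee x.1.1)) := by
    have := ee_cont
    fun_prop
  exact hd.continuousOn.comp_continuous this (fun x => hmem _ _ _ (hc0 _) (hc1 _))

/-- a closed curve winding once around the origin with increasing argument -/
def Polar (γ : ℝ → ℂ) (ρ Ψ : ℝ → ℝ) : Prop :=
  Continuous ρ ∧ (∀ t, 0 < ρ t) ∧ StrictMono Ψ ∧ Continuous Ψ ∧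
    (∀ t, Ψ (t + 2 * Real.pi) = Ψ t + 2 * Real.pi) ∧ ∀ t, γ t = ρ t * cexp (Ψ t * I)

lemma polar_of {R : ℝ} (hR : 1 < R) {B : ℂ → ℂ} (hB : DifferentiableOn ℂ B (ball 0 R))
    (hB0 : B 0 = 1) (hpos : ∀ t, 0 < (B (ee t)).re) {γ : ℝ → ℂ} (hγ0 : γ 0 ≠ 0)
    (hγ : ∀ t, HasDerivAt γ (I * B (ee t) * γ t) t) : ∃ ρ Ψ, Polar γ ρ Ψ := by
  have hBc : Continuous (fun t => B (ee t)) :=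
    hB.continuousOn.comp_continuous ee_cont (fun t => ee_mem hR t)
  set J : ℝ → ℂ := fun t => ∫ u in (0:ℝ)..t, B (ee u) with hJ
  have hJd : ∀ t, HasDerivAt J (B (ee t)) t := fun t =>
    intervalIntegral.integral_hasDerivAt_right (hBc.intervalIntegrable _ _)
      hBc.aestronglyMeasurable.stronglyMeasurableAtFilter hBc.continuousAt
  have hJc : Continuous J := continuous_iff_continuousAt.2 fun t => (hJd t).continuousAt
  have hJ0 : J 0 = 0 := by simp [hJ]
  have hJper : ∀ t, J (t + 2 * Real.pi) = J t + 2 * Real.pi := by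
    intro t
    have hper : Function.Periodic (fun t => B (ee t)) (2 * Real.pi) := by
      intro t; simp only [ee_per]
    have h1 := hper.intervalIntegral_add_eq t 0
    have h2 := mv_an hR hB
    rw [hB0, mv] at h2
    have h3 : ∫ u in (0:ℝ)..(2 * Real.pi), B (ee u) = 2 * Real.pi := by
      have : (2 * (Real.pi:ℂ)) ≠ 0 := by simp [Real.pi_ne_zero]
      field_simp at h2
      rw [h2]
    rw [zero_add, h3] at h1
    simp only [hJ]
    rw [← intervalIntegral.integral_add_adjacent_intervals (hBc.intervalIntegrable 0 t)
      (hBc.intervalIntegrable t _), h1]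
  have hexp : ∀ t, γ t = γ 0 * cexp (I * J t) := by
    have hd : ∀ t, HasDerivAt (fun t => γ t * cexp (-(I * J t))) 0 t := by
      intro t
      have h1 : HasDerivAt (fun t => cexp (-(I * J t))) (cexp (-(I * J t)) * -(I * B (ee t))) t :=
        (((hJd t).const_mul I).neg).cexp
      have h2 := (hγ t).mul h1
      have h3 : I * B (ee t) * γ t * cexp (-(I * J t)) + γ t * (cexp (-(I * J t)) * -(I * B (ee t))) = 0 := by
        ring
      rw [h3] at h2
      exact h2
    intro t
    have := is_const_of_deriv_eq_zero (fun t => (hd t).differentiableAt) (fun t => (hd t).deriv) t 0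
    simp only [hJ0, mul_zero, neg_zero, Complex.exp_zero, mul_one] at this
    rw [← this, mul_assoc, ← Complex.exp_add]; simp
  refine ⟨fun t => ‖γ 0‖ * Real.exp (-(J t).im), fun t => (γ 0).arg + (J t).re, ?_, ?_, ?_, ?_, ?_, ?_⟩
  · have := Complex.continuous_im.comp hJc
    exact continuous_const.mul (Real.continuous_exp.comp this.neg)
  · intro t; positivity
  · apply strictMono_of_deriv_pos
    intro t
    have h1 : HasDerivAt (fun t => (J t).re) (B (ee t)).re t :=
      Complex.reCLM.hasFDerivAt.comp_hasDerivAt t (hJd t)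
    rw [(h1.const_add _).deriv]
    exact hpos t
  · exact continuous_const.add (Complex.continuous_re.comp hJc)
  · intro t
    simp only [hJper]
    simp
    ring
  · intro t
    rw [hexp t]
    conv_lhs => rw [← Complex.norm_mul_exp_arg_mul_I (γ 0)]
    have : I * J t = -(J t).im + (J t).re * I := by
      conv_lhs => rw [← Complex.re_add_im (J t)]
      linear_combination ((J t).im : ℂ) * I_sq
    rw [this]
    push_cast
    rw [Complex.exp_add, add_mul, Complex.exp_add]
    ring

/-- chord lemma for convex curves -/
lemma chord {u T : ℝ → ℂ} {τ Θ : ℝ → ℝ} (hT : Polar T τ Θ) (hu : ∀ t, HasDerivAt u (T t) t)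
    (hper : ∀ t, u (t + 2 * Real.pi) = u t) (P s : ℝ) (h1 : P < s) (h2 : s ≤ P + 2 * Real.pi) :
    ∃ d : ℂ, (∀ t, P < t → t < s → 0 < (d * (u t - u P)).im) ∧
      (∀ t, s < t → t < P + 2 * Real.pi → (d * (u t - u P)).im < 0) := by
  obtain ⟨-, hτ, hmono, hcont, hΘper, hpol⟩ := hT
  have hk : ∀ (d : ℂ) t, HasDerivAt (fun t => (d * (u t - u P)).im) ((d * T t).im) t := fun d t =>
    Complex.imCLM.hasFDerivAt.comp_hasDerivAt t (((hu t).sub_const (u P)).const_mul d)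
  have hkc : ∀ (d : ℂ), Continuous (fun t => (d * (u t - u P)).im) := fun d =>
    continuous_iff_continuousAt.2 fun t => (hk d t).continuousAt
  have hpi := Real.pi_pos
  -- im formula
  have him : ∀ (c a t : ℝ), (((c:ℂ) * cexp (-(a * I))) * T t).im = c * τ t * Real.sin (Θ t - a) := by
    intro c a t
    rw [hpol]
    have : ((c:ℂ) * cexp (-(a * I))) * (τ t * cexp (Θ t * I)) =
      ((c * τ t : ℝ) : ℂ) * cexp (((Θ t - a : ℝ) : ℂ) * I) := by
      have : (((Θ t - a : ℝ) : ℂ) * I) = -(a * I) + Θ t * I := by push_cast; ring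
      rw [this, Complex.exp_add]; push_cast; ring
    rw [this, Complex.im_ofReal_mul, Complex.exp_ofReal_mul_I_im]
  have hmonoOn : ∀ (d : ℂ) (x y : ℝ), (∀ t ∈ Ioo x y, 0 < (d * T t).im) →
      StrictMonoOn (fun t => (d * (u t - u P)).im) (Icc x y) := by
    intro d x y h
    apply strictMonoOn_of_deriv_pos (convex_Icc _ _) (hkc d).continuousOn
    intro t ht
    rw [interior_Icc] at ht
    rw [(hk d t).deriv]
    exact h t ht
  have hantiOn : ∀ (d : ℂ) (x y : ℝ), (∀ t ∈ Ioo x y, (d * T t).im < 0) →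
      StrictAntiOn (fun t => (d * (u t - u P)).im) (Icc x y) := by
    intro d x y h
    apply strictAntiOn_of_deriv_neg (convex_Icc _ _) (hkc d).continuousOn
    intro t ht
    rw [interior_Icc] at ht
    rw [(hk d t).deriv]
    exact h t ht
  have hend : ∀ d : ℂ, (d * (u (P + 2 * Real.pi) - u P)).im = 0 := by intro d; simp [hper]
  have hstart : ∀ d : ℂ, (d * (u P - u P)).im = 0 := by intro d; simp
  rcases h2.lt_or_eq with h2 | h2
  · -- genuine chord
    obtain ⟨d0, hd0, hds⟩ : ∃ d0 : ℂ, d0 ≠ 0 ∧ (d0 * (u s - u P)).im = 0 := by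
      by_cases h : u s - u P = 0
      · exact ⟨1, one_ne_zero, by simp [h]⟩
      · refine ⟨(starRingEnd ℂ) (u s - u P), (map_ne_zero _).2 h, ?_⟩
        rw [mul_comm, Complex.mul_conj]; simp
    obtain ⟨m1, hm1, hm1'⟩ := exists_hasDerivAt_eq_zero h1 (hkc d0).continuousOn
      (by rw [hstart, hds]) (fun t _ => hk d0 t)
    obtain ⟨m2, hm2, hm2'⟩ := exists_hasDerivAt_eq_zero h2 (hkc d0).continuousOn
      (by rw [hend, hds]) (fun t _ => hk d0 t)
    have hdeq : d0 = (‖d0‖ : ℂ) * cexp (-((-d0.arg : ℝ) * I)) := by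
      conv_lhs => rw [← Complex.norm_mul_exp_arg_mul_I d0]
      simp
    have hn : 0 < ‖d0‖ := norm_pos_iff.2 hd0
    rw [hdeq, him] at hm1' hm2'
    have e1 : Real.sin (Θ m1 - -d0.arg) = 0 := by
      have := (hτ m1).ne'
      simpa [hn.ne', this] using hm1'
    have e2 : Real.sin (Θ m2 - -d0.arg) = 0 := by
      have := (hτ m2).ne'
      simpa [hn.ne', this] using hm2'
    have hcos := Real.sin_sq_add_cos_sq (Θ m1 - -d0.arg)
    have e3 : Real.sin (Θ m2 - Θ m1) = 0 := by
      have : Θ m2 - Θ m1 = (Θ m2 - -d0.arg) - (Θ m1 - -d0.arg) := by ring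
      rw [this, Real.sin_sub, e1, e2]; ring
    have l1 : Θ m1 < Θ m2 := hmono (hm1.2.trans hm2.1)
    have l2 : Θ m2 < Θ m1 + 2 * Real.pi := by
      rw [← hΘper]; apply hmono; linarith [hm1.1, hm2.2]
    have e4 : Θ m2 = Θ m1 + Real.pi := by
      obtain ⟨n, hn⟩ := Real.sin_eq_zero_iff.1 e3
      have a1 : (0:ℝ) < n := by
        by_contra hcon
        push Not at hcon
        nlinarith
      have a2 : (n:ℝ) < 2 := by
        by_contra hcon
        push Not at hcon
        nlinarith
      have : n = 1 := by
        have b1 : (0:ℤ) < n := by exact_mod_cast a1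
        have b2 : n < (2:ℤ) := by exact_mod_cast a2
        omega
      subst this
      push_cast at hn
      linarith
    -- the multiplier
    set d : ℂ := ((-1 : ℝ) : ℂ) * cexp (-((Θ m1 : ℝ) * I)) with hd
    have hdT : ∀ t, (d * T t).im = - (τ t * Real.sin (Θ t - Θ m1)) := by
      intro t; rw [hd, him]; ring
    have hds' : (d * (u s - u P)).im = 0 := by
      -- d is a real multiple of d0
      obtain ⟨c, hc⟩ : ∃ c : ℝ, d = (c : ℂ) * d0 := by
        refine ⟨-(Real.cos (Θ m1 + d0.arg)) / ‖d0‖, ?_⟩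
        have hx : d = -cexp (-((Θ m1 + d0.arg : ℝ) * I)) * cexp (d0.arg * I) := by
          rw [hd, neg_mul, ← Complex.exp_add]
          have : -(((Θ m1 + d0.arg : ℝ):ℂ) * I) + d0.arg * I = -((Θ m1 : ℝ) * I) := by
            push_cast; ring
          rw [this]; simp
        have hy : cexp (-((Θ m1 + d0.arg : ℝ) * I)) = ((Real.cos (Θ m1 + d0.arg) : ℝ) : ℂ) := by
          have e1' : Real.sin (Θ m1 + d0.arg) = 0 := by rw [← e1]; congr 1; ring
          have : -(((Θ m1 + d0.arg : ℝ):ℂ) * I) = ((-(Θ m1 + d0.arg) : ℝ) : ℂ) * I := by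
            push_cast; ring
          rw [this]
          apply Complex.ext
          · rw [Complex.exp_ofReal_mul_I_re, Real.cos_neg, Complex.ofReal_re]
          · rw [Complex.exp_ofReal_mul_I_im, Real.sin_neg, e1', Complex.ofReal_im, neg_zero]
        rw [hx, hy]
        have hz := Complex.norm_mul_exp_arg_mul_I d0
        have hn' : ((‖d0‖ : ℝ) : ℂ) ≠ 0 := by exact_mod_cast hn.ne'
        rw [Complex.ofReal_div, Complex.ofReal_neg, div_mul_eq_mul_div, eq_div_iff hn']
        linear_combination -((Real.cos (Θ m1 + d0.arg) : ℝ) : ℂ) * hz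
      rw [hc, mul_assoc, Complex.im_ofReal_mul, hds, mul_zero]
    have s1 := hmonoOn d P m1 (by
      intro t ht
      rw [hdT]
      have a1 : Θ t < Θ m1 := hmono ht.2
      have a2 : Θ m2 < Θ t + 2 * Real.pi := by
        rw [← hΘper]; apply hmono; linarith [ht.1, hm2.2]
      have := Real.sin_neg_of_neg_of_neg_pi_lt (x := Θ t - Θ m1) (by linarith) (by linarith)
      nlinarith [hτ t])
    have s2 := hantiOn d m1 m2 (by
      intro t ht
      rw [hdT]
      have a1 : Θ m1 < Θ t := hmono ht.1
      have a2 : Θ t < Θ m2 := hmono ht.2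
      have := Real.sin_pos_of_pos_of_lt_pi (x := Θ t - Θ m1) (by linarith) (by linarith)
      nlinarith [hτ t])
    have s3 := hmonoOn d m2 (P + 2 * Real.pi) (by
      intro t ht
      rw [hdT]
      have a1 : Θ m2 < Θ t := hmono ht.1
      have a2 : Θ t < Θ m1 + 2 * Real.pi := by
        rw [← hΘper]; apply hmono; linarith [ht.2, hm1.1]
      have := Real.sin_neg_of_neg_of_neg_pi_lt (x := Θ t - Θ m1 - 2 * Real.pi)
        (by linarith) (by linarith)
      rw [Real.sin_sub_two_pi] at this
      nlinarith [hτ t])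
    refine ⟨d, ?_, ?_⟩
    · intro t ht1 ht2
      rcases le_total t m1 with h | h
      · have := s1 ⟨le_refl _, hm1.1.le⟩ ⟨ht1.le, h⟩ ht1
        simpa [hstart] using this
      · have := s2 ⟨h, by linarith [hm2.1]⟩ ⟨hm1.2.le, hm2.1.le⟩ ht2
        simp only [hds'] at this
        exact this
    · intro t ht1 ht2
      rcases le_total t m2 with h | h
      · have := s2 ⟨hm1.2.le, hm2.1.le⟩ ⟨by linarith [hm1.2], h⟩ ht1
        simp only [hds'] at this
        exact this
      · have := s3 ⟨h, ht2.le⟩ ⟨hm2.2.le, le_refl _⟩ ht2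
        simp only [hend] at this
        exact this
  · -- tangent
    obtain ⟨m, hm, hmm⟩ : ∃ m ∈ Icc P (P + 2 * Real.pi), Θ m = Θ P + Real.pi := by
      apply intermediate_value_Icc (by linarith) hcont.continuousOn
      rw [hΘper]; constructor <;> linarith
    set d : ℂ := ((1 : ℝ) : ℂ) * cexp (-((Θ P : ℝ) * I)) with hd
    have hdT : ∀ t, (d * T t).im = τ t * Real.sin (Θ t - Θ P) := by
      intro t; rw [hd, him]; ring
    have s1 := hmonoOn d P m (by
      intro t ht
      rw [hdT]
      have a1 : Θ P < Θ t := hmono ht.1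
      have a2 : Θ t < Θ m := hmono ht.2
      have := Real.sin_pos_of_pos_of_lt_pi (x := Θ t - Θ P) (by linarith) (by linarith)
      exact mul_pos (hτ t) this)
    have s2 := hantiOn d m (P + 2 * Real.pi) (by
      intro t ht
      rw [hdT]
      have a1 : Θ m < Θ t := hmono ht.1
      have a2 : Θ t < Θ P + 2 * Real.pi := by rw [← hΘper]; exact hmono ht.2
      have := Real.sin_neg_of_neg_of_neg_pi_lt (x := Θ t - Θ P - 2 * Real.pi)
        (by linarith) (by linarith)
      rw [Real.sin_sub_two_pi] at this
      exact mul_neg_of_pos_of_neg (hτ t) this)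
    refine ⟨d, ?_, ?_⟩
    · intro t ht1 ht2
      rw [h2] at ht2
      rcases le_total t m with h | h
      · have := s1 ⟨le_refl _, hm.1⟩ ⟨ht1.le, h⟩ ht1
        simpa [hstart] using this
      · have := s2 ⟨h, ht2.le⟩ ⟨hm.2, le_refl _⟩ ht2
        simp only [hend] at this
        exact this
    · intro t ht1 ht2
      linarith

lemma sign_lemma {u T : ℝ → ℂ} {τ Θ : ℝ → ℝ} (hT : Polar T τ Θ) (hu : ∀ t, HasDerivAt u (T t) t)
    (hper : ∀ t, u (t + 2 * Real.pi) = u t) {γ : ℝ → ℂ} {ρ Ψ : ℝ → ℝ} (hγ : Polar γ ρ Ψ)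
    (P q : ℝ) (h1 : P ≤ q) (h2 : q < P + 2 * Real.pi) :
    ∃ (d : ℂ) (s : ℝ), Real.sin (Ψ s - Ψ q) = 0 ∧ ∀ t, P < t → t < P + 2 * Real.pi → t ≠ s → t ≠ q →
      0 < (d * (u t - u P)).im * Real.sin ((t - q) / 2) * Real.sin (Ψ t - Ψ q) := by
  obtain ⟨-, -, hmono, hcont, hΨper, -⟩ := hγ
  have hpi := Real.pi_pos
  obtain ⟨s0, hs0, hs0'⟩ : ∃ m ∈ Icc q (q + 2 * Real.pi), Ψ m = Ψ q + Real.pi := by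
    apply intermediate_value_Icc (by linarith) hcont.continuousOn
    rw [hΨper]; constructor <;> linarith
  have hq1 : q < s0 := hmono.lt_iff_lt.1 (by linarith)
  have hq2 : s0 < q + 2 * Real.pi := hmono.lt_iff_lt.1 (by rw [hΨper]; linarith)
  have halfneg : ∀ t, P < t → t < q → Real.sin ((t - q) / 2) < 0 := fun t a b =>
    Real.sin_neg_of_neg_of_neg_pi_lt (by linarith) (by linarith)
  have halfpos : ∀ t, q < t → t < P + 2 * Real.pi → 0 < Real.sin ((t - q) / 2) := fun t a b =>
    Real.sin_pos_of_pos_of_lt_pi (by linarith) (by linarith)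
  have sp : ∀ t, q < t → t < s0 → 0 < Real.sin (Ψ t - Ψ q) := fun t a b =>
    Real.sin_pos_of_pos_of_lt_pi (by linarith [hmono a]) (by linarith [hmono b])
  have sn : ∀ t, s0 < t → t < q + 2 * Real.pi → Real.sin (Ψ t - Ψ q) < 0 := by
    intro t a b
    have h4 := hmono b
    rw [hΨper] at h4
    have := Real.sin_neg_of_neg_of_neg_pi_lt (x := Ψ t - Ψ q - 2 * Real.pi)
        (by linarith) (by linarith [hmono a])
    rwa [Real.sin_sub_two_pi] at this
  have sper : ∀ t, Real.sin (Ψ (t + 2 * Real.pi) - Ψ q) = Real.sin (Ψ t - Ψ q) := by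
    intro t
    rw [hΨper, ← Real.sin_add_two_pi (Ψ t - Ψ q)]; congr 1; ring
  rcases le_or_gt s0 (P + 2 * Real.pi) with hc | hc
  · obtain ⟨d, hd1, hd2⟩ := chord hT hu hper P s0 (by linarith) hc
    refine ⟨d, s0, by rw [hs0']; simp, ?_⟩
    intro t t1 t2 ts tq
    rcases lt_or_gt_of_ne tq with h | h
    · have a := hd1 t t1 (by linarith)
      have b := halfneg t t1 h
      have c := sn (t + 2 * Real.pi) (by linarith) (by linarith)
      rw [sper] at c
      exact mul_pos_of_neg_of_neg (mul_neg_of_pos_of_neg a b) c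
    · have b := halfpos t h t2
      rcases lt_or_gt_of_ne ts with h' | h'
      · exact mul_pos (mul_pos (hd1 t t1 h') b) (sp t h h')
      · exact mul_pos_of_neg_of_neg (mul_neg_of_neg_of_pos (hd2 t h' t2) b)
          (sn t h' (by linarith))
  · obtain ⟨d, hd1, hd2⟩ := chord hT hu hper P (s0 - 2 * Real.pi) (by linarith) (by linarith)
    have hs' : Ψ (s0 - 2 * Real.pi) = Ψ q - Real.pi := by
      have := hΨper (s0 - 2 * Real.pi)
      rw [sub_add_cancel] at this
      linarith
    refine ⟨-d, s0 - 2 * Real.pi, by rw [hs']; simp, ?_⟩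
    intro t t1 t2 ts tq
    rw [neg_mul, Complex.neg_im]
    rcases lt_or_gt_of_ne tq with h | h
    · have b := halfneg t t1 h
      rcases lt_or_gt_of_ne ts with h' | h'
      · have a := hd1 t t1 h'
        have c := sp (t + 2 * Real.pi) (by linarith) (by linarith)
        rw [sper] at c
        exact mul_pos (mul_pos_of_neg_of_neg (neg_neg_of_pos a) b) c
      · have a := hd2 t h' t2
        have c := sn (t + 2 * Real.pi) (by linarith) (by linarith)
        rw [sper] at c
        exact mul_pos_of_neg_of_neg (mul_neg_of_pos_of_neg (neg_pos_of_neg a) b) c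
    · have b := halfpos t h t2
      have a := hd2 t (by linarith) t2
      exact mul_pos (mul_pos (neg_pos_of_neg a) b) (sp t h (by linarith))

lemma ee_sub (t q : ℝ) : ee t - ee q = 2 * I * (Real.sin ((t - q) / 2) : ℂ) * ee ((t + q) / 2) := by
  have h1 : ee t = cexp (((t - q) / 2 : ℝ) * I) * ee ((t + q) / 2) := by
    unfold ee; rw [← Complex.exp_add]; congr 1; push_cast; ring
  have h2 : ee q = cexp (-(((t - q) / 2 : ℝ)) * I) * ee ((t + q) / 2) := by
    unfold ee; rw [← Complex.exp_add]; congr 1; push_cast; ring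
  rw [h1, h2, Complex.ofReal_sin, Complex.sin]
  linear_combination -(cexp (-(((t - q) / 2 : ℝ)) * I) - cexp (((t - q) / 2 : ℝ) * I)) * ee ((t + q) / 2) * I_sq

/-- the functional `L` -/
def Lf (φ p : ℂ → ℂ) : ℂ := mv (fun t => φ (ee t) * (starRingEnd ℂ) (p (ee t)))

/-- the kernel `E` -/
def Ef (φ p : ℂ → ℂ) (P : ℝ) : ℂ :=
  mv (fun t => ee t * dslope φ (ee P) (ee t) * (starRingEnd ℂ) (p (ee t)))

lemma circ_cont {R : ℝ} (hR : 1 < R) {h : ℂ → ℂ} (hh : DifferentiableOn ℂ h (ball 0 R)) :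
    Continuous (fun t => h (ee t)) :=
  hh.continuousOn.comp_continuous ee_cont (fun t => ee_mem hR t)

lemma nonvan {R : ℝ} (hR : 1 < R) {φ p : ℂ → ℂ} (hφ : DifferentiableOn ℂ φ (ball 0 R))
    (hp : DifferentiableOn ℂ p (ball 0 R)) (hp0 : p 0 = 0)
    {T : ℝ → ℂ} {τ Θ : ℝ → ℝ} (hT : Polar T τ Θ) (hu : ∀ t, HasDerivAt (fun t => φ (ee t)) (T t) t)
    {ρ Ψ : ℝ → ℝ} (hγ : Polar (fun t => p (ee t)) ρ Ψ)
    (P q : ℝ) (h1 : P ≤ q) (h2 : q < P + 2 * Real.pi) :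
    Lf φ p - (1 - ee P * (starRingEnd ℂ) (ee q)) * Ef φ p P ≠ 0 := by
  intro hzero
  have hpi := Real.pi_pos
  obtain ⟨d, s, hs, hsign⟩ := sign_lemma hT hu (by intro t; simp only [ee_per]) hγ P q h1 h2
  have hφc := circ_cont hR hφ
  have hpc := circ_cont hR hp
  have hDd := dslope_diff hφ (ee_mem hR P)
  have hDc := circ_cont hR hDd
  have hcc : Continuous (starRingEnd ℂ) := Complex.continuous_conj
  have hpcc : Continuous (fun t => (starRingEnd ℂ) (p (ee t))) := hcc.comp hpc
  have hec := ee_cont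
  set F : ℝ → ℂ := fun t => dslope φ (ee P) (ee t) * (starRingEnd ℂ) (p (ee t)) *
    (ee P * (ee t * (starRingEnd ℂ) (ee q) - 1)) with hF
  set F2 : ℝ → ℂ := fun t => dslope φ (ee P) (ee t) * p (ee t) * (ee t - ee q) with hF2
  have hFc : Continuous F :=
    (hDc.mul hpcc).mul (continuous_const.mul ((hec.mul continuous_const).sub continuous_const))
  have hF2c : Continuous F2 := (hDc.mul hpc).mul (hec.sub continuous_const)
  have mp : mv (fun t => (starRingEnd ℂ) (p (ee t))) = 0 := by
    rw [mv_conj, mv_an hR hp, hp0, map_zero]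
  have mF : mv F = 0 := by
    have e : F = fun t => (φ (ee t) * (starRingEnd ℂ) (p (ee t)) -
        φ (ee P) * (starRingEnd ℂ) (p (ee t))) - (1 - ee P * (starRingEnd ℂ) (ee q)) *
        (ee t * dslope φ (ee P) (ee t) * (starRingEnd ℂ) (p (ee t))) := by
      ext t
      simp only [hF]
      linear_combination (starRingEnd ℂ) (p (ee t)) * dslope_mul φ (ee P) (ee t)
    have c1 : Continuous (fun t => φ (ee t) * (starRingEnd ℂ) (p (ee t))) := hφc.mul hpcc
    have c2 : Continuous (fun t => φ (ee P) * (starRingEnd ℂ) (p (ee t))) :=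
      continuous_const.mul hpcc
    have c3 : Continuous (fun t => (1 - ee P * (starRingEnd ℂ) (ee q)) *
        (ee t * dslope φ (ee P) (ee t) * (starRingEnd ℂ) (p (ee t)))) :=
      continuous_const.mul ((hec.mul hDc).mul hpcc)
    have c4 : Continuous (fun t => φ (ee t) * (starRingEnd ℂ) (p (ee t)) -
      φ (ee P) * (starRingEnd ℂ) (p (ee t))) := c1.sub c2
    rw [e, mv_sub c4 c3, mv_sub c1 c2, mv_cmul, mv_cmul,
      mp, mul_zero, sub_zero]
    exact hzero
  have mF2 : mv F2 = 0 := by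
    have := mv_an hR (h := fun z => dslope φ (ee P) z * p z * (z - ee q))
      ((hDd.mul hp).mul (by fun_prop))
    simp only [hp0, mul_zero, zero_mul] at this
    exact this
  set κ : ℂ := cexp (-((Ψ q + (q - P) / 2 : ℝ) * I)) with hκ
  set G : ℝ → ℂ := fun t => κ / (2 * I) * (d * F2 t - (starRingEnd ℂ) d * (starRingEnd ℂ) (F t)) with hG
  have hGc : Continuous G := by
    have : Continuous (fun t => (starRingEnd ℂ) (F t)) := hcc.comp hFc
    simp only [hG]; fun_prop
  have mG : mv G = 0 := by
    have : Continuous (fun t => (starRingEnd ℂ) (F t)) := hcc.comp hFc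
    rw [hG, mv_cmul, mv_sub (by fun_prop) (by fun_prop), mv_cmul, mv_cmul, mv_conj, mF, mF2]
    simp
  have hGper : Function.Periodic G (2 * Real.pi) := by
    intro t
    simp only [hG, hF, hF2, ee_per]
  have iG : ∫ t in P..(P + 2 * Real.pi), G t = 0 := by
    have h1 := hGper.intervalIntegral_add_eq P 0
    rw [h1, zero_add]
    rw [mv] at mG
    have : (2 * (Real.pi:ℂ))⁻¹ ≠ 0 := by simp [Real.pi_ne_zero]
    exact (mul_eq_zero.1 mG).resolve_left this
  have iG' : ∫ t in P..(P + 2 * Real.pi), (G t).im = 0 := by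
    have := Complex.imCLM.intervalIntegral_comp_comm (μ := MeasureTheory.volume) (hGc.intervalIntegrable P (P + 2 * Real.pi))
    simp only [Complex.imCLM_apply] at this
    rw [this, iG]; simp
  have hGim : ∀ t, P < t → t < P + 2 * Real.pi → (G t).im =
      ρ t / Real.sin ((t - P) / 2) *
      ((d * (φ (ee t) - φ (ee P))).im * Real.sin ((t - q) / 2) * Real.sin (Ψ t - Ψ q)) := by
    intro t t1 t2
    have hsin : 0 < Real.sin ((t - P) / 2) :=
      Real.sin_pos_of_pos_of_lt_pi (by linarith) (by linarith)
    have hsin' : (Real.sin ((t - P) / 2) : ℂ) ≠ 0 := by exact_mod_cast hsin.ne'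
    have hne : ee t - ee P ≠ 0 := by
      rw [ee_sub]
      exact mul_ne_zero (mul_ne_zero (by simp) hsin') (ee_ne _)
    have hX := dslope_mul φ (ee P) (ee t)
    have hconjF : (ee t - ee P) * (starRingEnd ℂ) (F t) =
        (starRingEnd ℂ) (φ (ee t) - φ (ee P)) * p (ee t) * (ee t - ee q) := by
      rw [← hX]
      simp only [hF, map_mul, map_sub, Complex.conj_conj, map_one]
      have a1 := ee_conj t
      have a2 := ee_conj P
      linear_combination ((starRingEnd ℂ) (dslope φ (ee P) (ee t)) * p (ee t)) *
        (((starRingEnd ℂ) (ee P) * ee q - 1) * a1 - ((starRingEnd ℂ) (ee t) * ee q - 1) * a2)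
    have hzG : (ee t - ee P) * G t = κ * p (ee t) * (ee t - ee q) *
        ((d * (φ (ee t) - φ (ee P))).im : ℂ) := by
      have him : ((d * (φ (ee t) - φ (ee P))).im : ℂ) * (2 * I) =
          d * (φ (ee t) - φ (ee P)) - (starRingEnd ℂ) (d * (φ (ee t) - φ (ee P))) := by
        rw [Complex.sub_conj]; push_cast; ring
      have hI : (2 * I : ℂ) ≠ 0 := by simp
      apply mul_right_cancel₀ hI
      have hκ2 : κ / (2 * I) * (2 * I) = κ := div_mul_cancel₀ _ hI
      rw [map_mul] at him
      simp only [hG, hF2]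
      linear_combination (-κ * (starRingEnd ℂ) d) * hconjF + κ * d * p (ee t) * (ee t - ee q) * hX
        - κ * p (ee t) * (ee t - ee q) * him
        + (ee t - ee P) * (d * (dslope φ (ee P) (ee t) * p (ee t) * (ee t - ee q)) - (starRingEnd ℂ) d * (starRingEnd ℂ) (F t)) * hκ2
    have hrat : (ee t - ee q) * (Real.sin ((t - P) / 2) : ℂ) =
        (ee t - ee P) * (Real.sin ((t - q) / 2) : ℂ) * cexp (((q - P) / 2 : ℝ) * I) := by
      rw [ee_sub, ee_sub]
      have : ee ((t + q) / 2) = ee ((t + P) / 2) * cexp (((q - P) / 2 : ℝ) * I) := by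
        unfold ee; rw [← Complex.exp_add]; congr 1; push_cast; ring
      rw [this]; ring
    have hfin : G t = ((ρ t / Real.sin ((t - P) / 2) *
      ((d * (φ (ee t) - φ (ee P))).im * Real.sin ((t - q) / 2)) : ℝ) : ℂ) *
        cexp ((Ψ t - Ψ q : ℝ) * I) := by
      apply mul_left_cancel₀ hne
      apply mul_right_cancel₀ hsin'
      have hpt : p (ee t) = ρ t * cexp (Ψ t * I) := hγ.2.2.2.2.2 t
      rw [hzG, hpt]
      have hexp : cexp ((Ψ t - Ψ q : ℝ) * I) =
          κ * cexp (((q - P) / 2 : ℝ) * I) * cexp (Ψ t * I) := by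
        rw [hκ, ← Complex.exp_add, ← Complex.exp_add]; congr 1; push_cast; ring
      rw [hexp]
      rw [Complex.ofReal_mul, Complex.ofReal_div, Complex.ofReal_mul]
      have hS := div_mul_cancel₀ (ρ t : ℂ) hsin'
      linear_combination (((d * (φ (ee t) - φ (ee P))).im : ℂ) * κ * ρ t * cexp (Ψ t * I)) * hrat
        - (ee t - ee P) * ((d * (φ (ee t) - φ (ee P))).im * Real.sin ((t - q) / 2)) *
          (κ * cexp (((q - P) / 2 : ℝ) * I) * cexp (Ψ t * I)) * hS
    rw [hfin, Complex.im_ofReal_mul, Complex.exp_ofReal_mul_I_im]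
    ring
  have hpos : ∀ t, P < t → t < P + 2 * Real.pi → t ≠ s → t ≠ q → 0 < (G t).im := by
    intro t t1 t2 ts tq
    rw [hGim t t1 t2]
    have hsin : 0 < Real.sin ((t - P) / 2) :=
      Real.sin_pos_of_pos_of_lt_pi (by linarith) (by linarith)
    exact mul_pos (div_pos (hγ.2.1 t) hsin) (hsign t t1 t2 ts tq)
  have hnn : ∀ t ∈ Ioo P (P + 2 * Real.pi), 0 ≤ (G t).im := by
    intro t ht
    by_cases ts : t = s
    · rw [hGim t ht.1 ht.2, ts, hs]; simp
    by_cases tq : t = q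
    · rw [hGim t ht.1 ht.2, tq]; simp
    exact (hpos t ht.1 ht.2 ts tq).le
  have hGimc : Continuous (fun t => (G t).im) := Complex.continuous_im.comp hGc
  have hnn' : Icc P (P + 2 * Real.pi) ⊆ (fun t => (G t).im) ⁻¹' (Ici 0) := by
    rw [← closure_Ioo (by linarith : P ≠ P + 2 * Real.pi)]
    exact (isClosed_Ici.preimage hGimc).closure_subset_iff.2 hnn
  obtain ⟨c, hc, hcf⟩ : ((Ioo P (P + 2 * Real.pi)) \ {s, q}).Nonempty :=
    ((Ioo_infinite (by linarith)).sdiff (Set.toFinite _)).nonempty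
  have hcs : c ≠ s := fun h => hcf (by simp [h])
  have hcq : c ≠ q := fun h => hcf (by simp [h])
  have := intervalIntegral.integral_pos (by linarith : P < P + 2 * Real.pi) hGimc.continuousOn
    (fun t ht => hnn' ⟨ht.1.le, ht.2⟩) ⟨c, ⟨hc.1.le, hc.2.le⟩, hpos c hc.1 hc.2 hcs hcq⟩
  rw [iG'] at this
  exact lt_irrefl _ this

lemma F3 {R : ℝ} (hR : 1 < R) {φ p B : ℂ → ℂ} (hφ : DifferentiableOn ℂ φ (ball 0 R))
    (hp : DifferentiableOn ℂ p (ball 0 R)) (hB : DifferentiableOn ℂ B (ball 0 R))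
    (hφ0 : φ 0 = 0) :
    mv (fun P => Ef φ p P * B (ee P)) = B 0 * Lf φ p := by
  have hD := dslope_cont hR hφ
  have hpc := circ_cont hR hp
  have hBc := circ_cont hR hB
  have hcc : Continuous (starRingEnd ℂ) := Complex.continuous_conj
  have hpcc : Continuous (fun t => (starRingEnd ℂ) (p (ee t))) := hcc.comp hpc
  have e1 : (fun P => Ef φ p P * B (ee P)) = fun P => mv (fun t =>
      B (ee P) * (ee t * dslope φ (ee P) (ee t) * (starRingEnd ℂ) (p (ee t)))) := by
    ext P
    rw [mv_cmul, mul_comm]; rfl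
  have hK : Continuous (Function.uncurry (fun P t =>
      B (ee P) * (ee t * dslope φ (ee P) (ee t) * (starRingEnd ℂ) (p (ee t))))) :=
    (hBc.comp continuous_fst).mul (((ee_cont.comp continuous_snd).mul hD).mul
      (hpcc.comp continuous_snd))
  rw [e1, mv_swap hK, Lf, ← mv_cmul]
  congr 1
  ext t
  have h1 := mv_an hR ((dslope_diff hφ (ee_mem hR t)).mul hB)
  have h2 := dslope_mul φ (ee t) 0
  have e2 : (fun s => B (ee s) * (ee t * dslope φ (ee s) (ee t) * (starRingEnd ℂ) (p (ee t)))) =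
      fun s => (ee t * (starRingEnd ℂ) (p (ee t))) * ((dslope φ (ee t) * B) (ee s)) := by
    ext s
    rw [dslope_symm φ (ee s)]
    simp only [Pi.mul_apply]
    ring
  rw [e2, mv_cmul, h1]
  simp only [Pi.mul_apply]
  rw [hφ0] at h2
  linear_combination -(starRingEnd ℂ) (p (ee t)) * B 0 * h2

lemma Ef_eq {R : ℝ} (hR : 1 < R) {φ p : ℂ → ℂ} (hφ : DifferentiableOn ℂ φ (ball 0 R))
    (hp : DifferentiableOn ℂ p (ball 0 R)) (hp0 : p 0 = 0) (P : ℝ) :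
    Ef φ p P = φ (ee P) * (starRingEnd ℂ) (p (ee P)) -
      mv (fun t => (starRingEnd ℂ) (ee P) * (φ (ee t) * (starRingEnd ℂ) (dslope p (ee P) (ee t)))) := by
  have hcc : Continuous (starRingEnd ℂ) := Complex.continuous_conj
  have hφc := circ_cont hR hφ
  have hDd := dslope_diff hφ (ee_mem hR P)
  have hDpd := dslope_diff hp (ee_mem hR P)
  have hDc := circ_cont hR hDd
  have hDpc : Continuous (fun t => (starRingEnd ℂ) (dslope p (ee P) (ee t))) :=
    hcc.comp (circ_cont hR hDpd)
  have c1 : Continuous (fun t => (starRingEnd ℂ) (p (ee P)) * (ee t * dslope φ (ee P) (ee t))) :=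
    continuous_const.mul (ee_cont.mul hDc)
  have c2 : Continuous (fun t => (starRingEnd ℂ) (ee P) * φ (ee P) *
      (starRingEnd ℂ) (dslope p (ee P) (ee t))) := continuous_const.mul hDpc
  have c3 : Continuous (fun t => (starRingEnd ℂ) (ee P) * (φ (ee t) *
      (starRingEnd ℂ) (dslope p (ee P) (ee t)))) := continuous_const.mul (hφc.mul hDpc)
  have c4 : Continuous (fun t => (starRingEnd ℂ) (p (ee P)) * (ee t * dslope φ (ee P) (ee t)) +
      (starRingEnd ℂ) (ee P) * φ (ee P) *
      (starRingEnd ℂ) (dslope p (ee P) (ee t))) := c1.add c2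
  have e : (fun t => ee t * dslope φ (ee P) (ee t) * (starRingEnd ℂ) (p (ee t))) = fun t =>
      (starRingEnd ℂ) (p (ee P)) * (ee t * dslope φ (ee P) (ee t)) +
      (starRingEnd ℂ) (ee P) * φ (ee P) * (starRingEnd ℂ) (dslope p (ee P) (ee t)) -
      (starRingEnd ℂ) (ee P) * (φ (ee t) * (starRingEnd ℂ) (dslope p (ee P) (ee t))) := by
    ext t
    have a1 := dslope_mul φ (ee P) (ee t)
    have a2 := congrArg (starRingEnd ℂ) (dslope_mul p (ee P) (ee t))
    simp only [map_mul, map_sub] at a2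
    have b1 := ee_conj t
    have b2 := ee_conj P
    linear_combination (- ee t * dslope φ (ee P) (ee t)) * a2 -
      (starRingEnd ℂ) (ee P) * (starRingEnd ℂ) (dslope p (ee P) (ee t)) * a1 +
      dslope φ (ee P) (ee t) * (starRingEnd ℂ) (dslope p (ee P) (ee t)) * (b1 - b2)
  have h1 : mv (fun t => ee t * dslope φ (ee P) (ee t)) = 0 := by
    have := mv_an hR (h := fun z => z * dslope φ (ee P) z) (differentiableOn_id.mul hDd)
    simpa using this
  have h2 : mv (fun t => (starRingEnd ℂ) (dslope p (ee P) (ee t))) =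
      (starRingEnd ℂ) (dslope p (ee P) 0) := by
    rw [mv_conj, mv_an hR hDpd]
  rw [Ef, e, mv_sub c4 c3, mv_add c1 c2, mv_cmul, mv_cmul, h1, h2]
  have h3 := congrArg (starRingEnd ℂ) (dslope_mul p (ee P) 0)
  rw [hp0] at h3
  simp only [map_mul, map_sub, map_zero] at h3
  linear_combination -φ (ee P) * h3

lemma F2 {R : ℝ} (hR : 1 < R) {φ p B : ℂ → ℂ} (hφ : DifferentiableOn ℂ φ (ball 0 R))
    (hp : DifferentiableOn ℂ p (ball 0 R)) (hB : DifferentiableOn ℂ B (ball 0 R))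
    (hp0 : p 0 = 0) :
    mv (fun P => Ef φ p P * (starRingEnd ℂ) (B (ee P))) =
      mv (fun P => φ (ee P) * (starRingEnd ℂ) (p (ee P) * B (ee P))) := by
  have hcc : Continuous (starRingEnd ℂ) := Complex.continuous_conj
  have hφc := circ_cont hR hφ
  have hpc : Continuous (fun t => (starRingEnd ℂ) (p (ee t))) := hcc.comp (circ_cont hR hp)
  have hBc : Continuous (fun t => (starRingEnd ℂ) (B (ee t))) := hcc.comp (circ_cont hR hB)
  have heb : Continuous (fun t => (starRingEnd ℂ) (ee t)) := hcc.comp ee_cont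
  have hD : Continuous (fun x : ℝ × ℝ => (starRingEnd ℂ) (dslope p (ee x.1) (ee x.2))) :=
    hcc.comp (dslope_cont hR hp)
  have hK : Continuous (Function.uncurry (fun P t => (starRingEnd ℂ) (B (ee P)) *
      ((starRingEnd ℂ) (ee P) * (φ (ee t) * (starRingEnd ℂ) (dslope p (ee P) (ee t)))))) :=
    (hBc.comp continuous_fst).mul ((heb.comp continuous_fst).mul
      ((hφc.comp continuous_snd).mul hD))
  have e : (fun P => Ef φ p P * (starRingEnd ℂ) (B (ee P))) = fun P =>
      φ (ee P) * (starRingEnd ℂ) (p (ee P) * B (ee P)) -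
      mv (fun t => (starRingEnd ℂ) (B (ee P)) *
      ((starRingEnd ℂ) (ee P) * (φ (ee t) * (starRingEnd ℂ) (dslope p (ee P) (ee t))))) := by
    ext P
    rw [Ef_eq hR hφ hp hp0 P, mv_cmul ((starRingEnd ℂ) (B (ee P))), map_mul]
    ring
  have c1 : Continuous (fun P => φ (ee P) * (starRingEnd ℂ) (p (ee P) * B (ee P))) := by
    simp only [map_mul]
    exact hφc.mul (hpc.mul hBc)
  rw [e, mv_sub c1 (mv_cont hK), mv_swap hK]
  have e2 : (fun t => mv (fun P => (starRingEnd ℂ) (B (ee P)) *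
      ((starRingEnd ℂ) (ee P) * (φ (ee t) * (starRingEnd ℂ) (dslope p (ee P) (ee t)))))) =
      fun t => 0 := by
    ext t
    have h1 := mv_an hR (h := fun z => z * (dslope p (ee t) z * B z))
      (differentiableOn_id.mul ((dslope_diff hp (ee_mem hR t)).mul hB))
    have e3 : (fun P => (starRingEnd ℂ) (B (ee P)) *
      ((starRingEnd ℂ) (ee P) * (φ (ee t) * (starRingEnd ℂ) (dslope p (ee P) (ee t))))) =
      fun P => φ (ee t) * (starRingEnd ℂ) (ee P * (dslope p (ee t) (ee P) * B (ee P))) := by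
      ext P
      rw [dslope_symm p (ee P)]
      simp only [map_mul]
      ring
    rw [e3, mv_cmul, mv_conj, h1]
    simp
  rw [e2]
  simp [mv]

lemma Ef_cont {R : ℝ} (hR : 1 < R) {φ p : ℂ → ℂ} (hφ : DifferentiableOn ℂ φ (ball 0 R))
    (hp : DifferentiableOn ℂ p (ball 0 R)) : Continuous (Ef φ p) := by
  have hcc : Continuous (starRingEnd ℂ) := Complex.continuous_conj
  have hpc : Continuous (fun t => (starRingEnd ℂ) (p (ee t))) := hcc.comp (circ_cont hR hp)
  have hK : Continuous (Function.uncurry (fun P t =>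
      ee t * dslope φ (ee P) (ee t) * (starRingEnd ℂ) (p (ee t)))) :=
    ((ee_cont.comp continuous_snd).mul (dslope_cont hR hφ)).mul (hpc.comp continuous_snd)
  exact mv_cont hK

/-- exhaust the circle starting from any base point -/
lemma exists_angle (P : ℝ) {u : ℂ} (hu : ‖u‖ = 1) :
    ∃ q, P ≤ q ∧ q < P + 2 * Real.pi ∧ ee P * (starRingEnd ℂ) (ee q) = u := by
  have hpi := Real.two_pi_pos
  refine ⟨toIcoMod hpi P (P - u.arg), (toIcoMod_mem_Ico hpi P _).1, (toIcoMod_mem_Ico hpi P _).2, ?_⟩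
  have hu' : cexp (u.arg * I) = u := by
    have := Complex.norm_mul_exp_arg_mul_I u
    rw [hu] at this; simpa using this
  have h1 : ee (toIcoMod hpi P (P - u.arg)) = ee (P - u.arg) := by
    have := self_sub_toIcoMod hpi P (P - u.arg)
    have h2 : P - u.arg = toIcoMod hpi P (P - u.arg) + (toIcoDiv hpi P (P - u.arg) : ℤ) * (2 * Real.pi) := by
      rw [zsmul_eq_mul] at this; linarith
    conv_rhs => rw [h2]
    unfold ee
    push_cast
    rw [add_mul, Complex.exp_add]
    have h3 := Complex.exp_int_mul_two_pi_mul_I (toIcoDiv hpi P (P - u.arg))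
    rw [← mul_assoc] at h3
    rw [← mul_assoc]
    have h4 : ((toIcoDiv hpi P (P - u.arg) : ℤ) : ℂ) * 2 * Real.pi * I = (toIcoDiv hpi P (P - u.arg) : ℤ) * (2 * Real.pi * I) := by ring
    rw [h4, Complex.exp_int_mul_two_pi_mul_I, mul_one]
  rw [h1]
  have h5 : ee P = ee (P - u.arg) * u := by
    have h6 : ee P = ee (P - u.arg) * cexp (u.arg * I) := by
      unfold ee
      rw [← Complex.exp_add]; congr 1; push_cast; ring
    rw [hu'] at h6
    exact h6
  rw [h5]
  linear_combination u * ee_conj (P - u.arg)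

lemma core {R : ℝ} (hR : 1 < R) {φ p B : ℂ → ℂ} (hφ : DifferentiableOn ℂ φ (ball 0 R))
    (hp : DifferentiableOn ℂ p (ball 0 R)) (hB : DifferentiableOn ℂ B (ball 0 R))
    (hφ0 : φ 0 = 0) (hp0 : p 0 = 0) (hB0 : B 0 = 1)
    {T : ℝ → ℂ} {τ Θ : ℝ → ℝ} (hT : Polar T τ Θ) (hu : ∀ t, HasDerivAt (fun t => φ (ee t)) (T t) t)
    {ρ Ψ : ℝ → ℝ} (hγ : Polar (fun t => p (ee t)) ρ Ψ)
    {U : Set ℂ} (hUo : IsOpen U) (hUc : Convex ℝ U) (hBU : ∀ t, (starRingEnd ℂ) (B (ee t)) ∈ U) :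
    Lf φ p ≠ 0 ∧ mv (fun t => φ (ee t) * (starRingEnd ℂ) (p (ee t) * B (ee t))) / Lf φ p ∈ U := by
  have hpi := Real.pi_pos
  have hL : Lf φ p ≠ 0 := by
    have := nonvan hR hφ hp hp0 hT hu hγ 0 0 le_rfl (by linarith)
    rw [ee_conj] at this
    simpa using this
  refine ⟨hL, ?_⟩
  set L := Lf φ p with hLdef
  have hEc := Ef_cont hR hφ hp
  have hcc : Continuous (starRingEnd ℂ) := Complex.continuous_conj
  have hBc := circ_cont hR hB
  have hBcc : Continuous (fun t => (starRingEnd ℂ) (B (ee t))) := hcc.comp hBc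
  set e : ℝ → ℂ := fun P => Ef φ p P / L with he
  have hec : Continuous e := hEc.div_const _
  have hecc : Continuous (fun t => (starRingEnd ℂ) (e t)) := hcc.comp hec
  set Q : ℝ → ℝ := fun P => 2 * (e P).re - 1 with hQ
  have hQc : Continuous Q :=
    (continuous_const.mul (Complex.continuous_re.comp hec)).sub continuous_const
  have hQe : ∀ P, (Q P : ℂ) = e P + (starRingEnd ℂ) (e P) - 1 := by
    intro P
    rw [Complex.add_conj]; simp only [hQ]; push_cast; ring
  have hQ0 : ∀ P, Q P ≠ 0 := by
    intro P hP
    have h1 := hQe P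
    rw [hP] at h1
    set x := e P with hx
    have hx0 : x ≠ 0 := by
      intro h; rw [h] at h1; simp at h1
    have hn : ‖1 - x⁻¹‖ = 1 := by
      have h2 : (1 - x⁻¹) * (starRingEnd ℂ) (1 - x⁻¹) = 1 := by
        have hx1 : (starRingEnd ℂ) x ≠ 0 := (map_ne_zero _).2 hx0
        simp only [map_sub, map_one, map_inv₀]
        field_simp
        push_cast at h1
        linear_combination h1
      rw [Complex.mul_conj, Complex.normSq_eq_norm_sq] at h2
      have h3 : ‖1 - x⁻¹‖ ^ 2 = 1 := by exact_mod_cast h2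
      have h4 := norm_nonneg (1 - x⁻¹)
      nlinarith
    obtain ⟨q, q1, q2, q3⟩ := exists_angle P hn
    apply nonvan hR hφ hp hp0 hT hu hγ P q q1 q2
    rw [q3]
    have hE : Ef φ p P = x * L := by rw [hx, he]; field_simp
    rw [hE, ← hLdef]
    field_simp
    ring
  -- weighted means
  have key : ∀ b : ℂ → ℂ, DifferentiableOn ℂ b (ball 0 R) → b 0 = 1 →
      mv (fun t => (starRingEnd ℂ) (b (ee t)) * (Q t : ℂ)) =
        mv (fun t => φ (ee t) * (starRingEnd ℂ) (p (ee t) * b (ee t))) / L := by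
    intro b hb hb0
    have hbc := circ_cont hR hb
    have hbcc : Continuous (fun t => (starRingEnd ℂ) (b (ee t))) := hcc.comp hbc
    have k1 := F3 hR hφ hp hb hφ0
    have k2 := F2 hR hφ hp hb hp0
    have c1 : Continuous (fun t => L⁻¹ * (Ef φ p t * (starRingEnd ℂ) (b (ee t)))) :=
      continuous_const.mul (hEc.mul hbcc)
    have c2 : Continuous (fun t => (starRingEnd ℂ) (L⁻¹ * (Ef φ p t * b (ee t)))) :=
      hcc.comp (continuous_const.mul (hEc.mul hbc))
    have c3 : Continuous (fun t => L⁻¹ * (Ef φ p t * (starRingEnd ℂ) (b (ee t))) +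
      (starRingEnd ℂ) (L⁻¹ * (Ef φ p t * b (ee t)))) := c1.add c2
    have e1 : (fun t => (starRingEnd ℂ) (b (ee t)) * (Q t : ℂ)) = fun t =>
        L⁻¹ * (Ef φ p t * (starRingEnd ℂ) (b (ee t))) +
        (starRingEnd ℂ) (L⁻¹ * (Ef φ p t * b (ee t))) - (starRingEnd ℂ) (b (ee t)) := by
      ext t
      rw [hQe]
      simp only [he, map_mul, map_inv₀, map_div₀]
      ring
    rw [e1, mv_sub c3 hbcc, mv_add c1 c2, mv_cmul, mv_conj, mv_conj, mv_cmul, k1, k2, mv_an hR hb,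
      hb0, one_mul, ← hLdef, inv_mul_cancel₀ hL]
    ring
  have hpic : (2 * (Real.pi:ℂ)) ≠ 0 := by simp [Real.pi_ne_zero]
  have hQint : ∫ t in (0:ℝ)..(2 * Real.pi), Q t = 2 * Real.pi := by
    have h1 := key (fun _ => 1) (by fun_prop) rfl
    simp only [map_one, one_mul, mul_one] at h1
    have h2 : mv (fun t => φ (ee t) * (starRingEnd ℂ) (p (ee t))) = L := rfl
    rw [h2, div_self hL, mv, intervalIntegral.integral_ofReal, inv_mul_eq_iff_eq_mul₀ hpic] at h1
    rw [mul_one] at h1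
    exact_mod_cast h1
  have hQpos : ∀ P, 0 < Q P := by
    by_contra hcon
    push Not at hcon
    obtain ⟨P0, hP0⟩ := hcon
    have hall : ∀ P, Q P ≤ 0 := by
      intro P
      by_contra h
      push Not at h
      obtain ⟨c, hc⟩ := mem_range_of_exists_le_of_exists_ge hQc ⟨P0, hP0⟩ ⟨P, h.le⟩
      exact hQ0 c hc
    have := intervalIntegral.integral_nonneg (μ := MeasureTheory.volume) Real.two_pi_pos.le
      (f := fun t => - Q t) (fun t _ => neg_nonneg.2 (hall t))
    rw [intervalIntegral.integral_neg, hQint] at this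
    linarith
  rw [← key B hB hB0]
  by_contra hy
  set y := mv (fun t => (starRingEnd ℂ) (B (ee t)) * (Q t : ℂ)) with hydef
  obtain ⟨ℓ, hℓ⟩ := geometric_hahn_banach_open_point hUc hUo hy
  have hic : Continuous (fun t => (starRingEnd ℂ) (B (ee t)) * (Q t : ℂ)) :=
    hBcc.mul (Complex.continuous_ofReal.comp hQc)
  have h1 : ∫ t in (0:ℝ)..(2 * Real.pi), (starRingEnd ℂ) (B (ee t)) * (Q t : ℂ) =
      (2 * Real.pi : ℝ) • y := by
    rw [hydef, mv, Complex.real_smul]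
    push_cast
    rw [mul_inv_cancel_left₀ hpic]
  have h2 := ℓ.intervalIntegral_comp_comm (μ := MeasureTheory.volume)
    (hic.intervalIntegrable 0 (2 * Real.pi))
  rw [h1, map_smul, smul_eq_mul] at h2
  have e2 : (fun t => ℓ ((starRingEnd ℂ) (B (ee t)) * (Q t : ℂ))) = fun t =>
      Q t * ℓ ((starRingEnd ℂ) (B (ee t))) := by
    ext t
    rw [mul_comm, ← Complex.real_smul, map_smul, smul_eq_mul]
  rw [e2] at h2
  have c5 : Continuous (fun t => Q t * ℓ ((starRingEnd ℂ) (B (ee t)))) :=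
    hQc.mul (ℓ.continuous.comp hBcc)
  have c6 : Continuous (fun t => ℓ y * Q t) := continuous_const.mul hQc
  have h3 : 0 < ∫ t in (0:ℝ)..(2 * Real.pi), (ℓ y * Q t - Q t * ℓ ((starRingEnd ℂ) (B (ee t)))) := by
    apply intervalIntegral.intervalIntegral_pos_of_pos
      ((c6.sub c5).intervalIntegrable _ _) _ Real.two_pi_pos
    intro t
    have := hℓ _ (hBU t)
    have := hQpos t
    show 0 < ℓ y * Q t - Q t * ℓ ((starRingEnd ℂ) (B (ee t)))
    nlinarith
  rw [intervalIntegral.integral_sub (c6.intervalIntegrable _ _) (c5.intervalIntegrable _ _),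
    intervalIntegral.integral_const_mul, hQint, h2] at h3
  linarith

lemma inv_diff {ψ : ℂ → ℂ} (hd : DifferentiableOn ℂ ψ (ball 0 1)) (hi : InjOn ψ (ball 0 1)) :
    IsOpen (ψ '' ball 0 1) ∧ ∃ χ : ℂ → ℂ, DifferentiableOn ℂ χ (ψ '' ball 0 1) ∧
      (∀ y ∈ ψ '' ball 0 1, χ y ∈ ball (0:ℂ) 1 ∧ ψ (χ y) = y) ∧ ∀ z ∈ ball (0:ℂ) 1, χ (ψ z) = z := by
  have han : AnalyticOnNhd ℂ ψ (ball 0 1) := hd.analyticOnNhd isOpen_ball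
  have hopen : ∀ s ⊆ ball (0:ℂ) 1, IsOpen s → IsOpen (ψ '' s) := by
    rcases han.is_constant_or_isOpen (convex_ball 0 1).isPreconnected with ⟨w, hw⟩ | h
    · exfalso
      have h0 : (0:ℂ) ∈ ball (0:ℂ) 1 := by simp
      have h1 : (1/2:ℂ) ∈ ball (0:ℂ) 1 := by simp; norm_num
      have := hi h0 h1 ((hw _ h0).trans (hw _ h1).symm)
      norm_num at this
    · exact h
  have hVo := hopen _ Subset.rfl isOpen_ball
  refine ⟨hVo, Function.invFunOn ψ (ball 0 1), ?_, ?_, ?_⟩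
  rotate_left
  · rintro y ⟨z, hz, rfl⟩
    exact ⟨Function.invFunOn_mem ⟨z, hz, rfl⟩, Function.invFunOn_eq ⟨z, hz, rfl⟩⟩
  · intro z hz
    exact hi.leftInvOn_invFunOn hz
  set χ := Function.invFunOn ψ (ball (0:ℂ) 1) with hχ
  have hl : ∀ z ∈ ball (0:ℂ) 1, χ (ψ z) = z := fun z hz => hi.leftInvOn_invFunOn hz
  have hc : ∀ z ∈ ball (0:ℂ) 1, ContinuousAt χ (ψ z) := by
    intro z hz N hN
    rw [hl z hz] at hN
    obtain ⟨O, hON, hO, hzO⟩ := _root_.mem_nhds_iff.1 hN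
    have h1 := hopen (O ∩ ball 0 1) inter_subset_right (hO.inter isOpen_ball)
    apply Filter.mem_of_superset (h1.mem_nhds ⟨z, ⟨hzO, hz⟩, rfl⟩)
    rintro _ ⟨x, ⟨hx1, hx2⟩, rfl⟩
    simp only [mem_preimage]
    rw [hl x hx2]
    exact hON hx1
  have hder : ∀ z ∈ ball (0:ℂ) 1, deriv ψ z ≠ 0 → DifferentiableAt ℂ χ (ψ z) := by
    intro z hz hne
    have h1 : HasDerivAt ψ (deriv ψ z) (χ (ψ z)) := by
      rw [hl z hz]
      exact (hd.differentiableAt (isOpen_ball.mem_nhds hz)).hasDerivAt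
    refine (HasDerivAt.of_local_left_inverse (hc z hz) h1 hne ?_).differentiableAt
    filter_upwards [hVo.mem_nhds ⟨z, hz, rfl⟩] with y hy
    exact Function.invFunOn_eq hy
  rintro _ ⟨z, hz, rfl⟩
  apply DifferentiableAt.differentiableWithinAt
  have hd1 : AnalyticAt ℂ (deriv ψ) z := (han z hz).deriv
  rcases hd1.eventually_eq_zero_or_eventually_ne_zero with h | h
  · exfalso
    obtain ⟨ε, hε, hb⟩ := Metric.eventually_nhds_iff_ball.1 (h.and (isOpen_ball.mem_nhds hz))
    have hconst : ∀ y ∈ ball z ε, ψ y = ψ z := by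
      intro y hy
      refine (convex_ball z ε).is_const_of_fderivWithin_eq_zero (𝕜 := ℂ)
        (hd.mono (fun x hx => (hb x hx).2)) ?_ hy (mem_ball_self hε)
      intro x hx
      rw [fderivWithin_of_isOpen isOpen_ball hx]
      ext
      simpa using (hb x hx).1
    have hy : z + (ε / 2 : ℝ) ∈ ball z ε := by
      simp [abs_of_pos hε]
      linarith
    have := hi (hb _ hy).2 hz (hconst _ hy)
    simp at this
    exact hε.ne' this
  · apply AnalyticAt.differentiableAt
    apply Complex.analyticAt_of_differentiable_on_punctured_nhds_of_continuousAt _ (hc z hz)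
    rw [eventually_nhdsWithin_iff] at h ⊢
    obtain ⟨O, hO', hO, hzO⟩ := _root_.mem_nhds_iff.1 h
    have h1 := hopen (O ∩ ball 0 1) inter_subset_right (hO.inter isOpen_ball)
    filter_upwards [h1.mem_nhds ⟨z, ⟨hzO, hz⟩, rfl⟩]
    rintro _ ⟨x, ⟨hx1, hx2⟩, rfl⟩ hne
    exact hder x hx2 (hO' hx1 (fun h => hne (by rw [mem_singleton_iff.1 h]; rfl)))

lemma mv_orth (n j : ℕ) :
    mv (fun t => ee t ^ n * (starRingEnd ℂ) (ee t) ^ j) = if n = j then 1 else 0 := by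
  have hpow : ∀ m : ℕ, mv (fun t => ee t ^ m) = (0:ℂ) ^ m := fun m =>
    mv_an (R := 2) (by norm_num) (h := fun z => z ^ m) (by fun_prop)
  rcases le_total j n with h | h
  · obtain ⟨m, rfl⟩ := Nat.exists_eq_add_of_le h
    have : (fun t => ee t ^ (j + m) * (starRingEnd ℂ) (ee t) ^ j) = fun t => ee t ^ m := by
      ext t
      rw [pow_add, mul_right_comm, ← mul_pow, ee_conj, one_pow, one_mul]
    rw [this, hpow]
    rcases m with _ | m <;> simp
  · obtain ⟨m, rfl⟩ := Nat.exists_eq_add_of_le h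
    have : (fun t => ee t ^ n * (starRingEnd ℂ) (ee t) ^ (n + m)) =
        fun t => (starRingEnd ℂ) (ee t ^ m) := by
      ext t
      rw [pow_add, ← mul_assoc, ← mul_pow, ee_conj, one_pow, one_mul, map_pow]
    rw [this, mv_conj, hpow]
    rcases m with _ | m <;> simp

lemma mv_coef {f : ℂ → ℂ} {a : ℕ → ℂ}
    (hrep : ∀ z ∈ ball (0:ℂ) 1, HasSum (fun n => a n * z^n) (f z)) {σ : ℝ} (h0 : 0 < σ) (h1 : σ < 1)
    (j : ℕ) : mv (fun t => f (σ * ee t) * (starRingEnd ℂ) (ee t) ^ j) = a j * σ ^ j := by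
  have hcc : Continuous (starRingEnd ℂ) := Complex.continuous_conj
  have hec := ee_cont
  have hecc : Continuous (fun t => (starRingEnd ℂ) (ee t)) := hcc.comp hec
  have hsum : Summable (fun n => ‖a n‖ * σ ^ n) := by
    have := (hrep (σ:ℂ) (by simp [abs_of_pos h0, h1])).summable.norm
    simpa [abs_of_pos h0] using this
  have key := intervalIntegral.hasSum_integral_of_dominated_convergence (a := 0) (b := 2 * Real.pi)
    (μ := MeasureTheory.volume)
    (F := fun n t => a n * (σ * ee t) ^ n * (starRingEnd ℂ) (ee t) ^ j)
    (f := fun t => f (σ * ee t) * (starRingEnd ℂ) (ee t) ^ j)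
    (fun n _ => ‖a n‖ * σ ^ n)
    (by
      intro n
      apply Continuous.aestronglyMeasurable
      fun_prop)
    (by
      intro n
      refine Filter.Eventually.of_forall fun t _ => ?_
      simp [ee_norm, abs_of_pos h0])
    (Filter.Eventually.of_forall fun t _ => hsum)
    (by simp)
    (Filter.Eventually.of_forall fun t _ => (hrep _ (by simp [ee_norm, abs_of_pos h0, h1])).mul_right _)
  have key2 := key.mul_left ((2 * (Real.pi : ℂ))⁻¹)
  have e : (fun n => (2 * (Real.pi : ℂ))⁻¹ * ∫ t in (0:ℝ)..(2 * Real.pi),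
      a n * (σ * ee t) ^ n * (starRingEnd ℂ) (ee t) ^ j) =
      fun n => if n = j then a j * σ ^ j else 0 := by
    ext n
    have : (fun t => a n * (σ * ee t) ^ n * (starRingEnd ℂ) (ee t) ^ j) =
      fun t => (a n * σ ^ n) * (ee t ^ n * (starRingEnd ℂ) (ee t) ^ j) := by
      ext t; rw [mul_pow]; ring
    change mv (fun t => a n * (σ * ee t) ^ n * (starRingEnd ℂ) (ee t) ^ j) = _
    rw [this, mv_cmul, mv_orth]
    split_ifs with h
    · rw [h, mul_one]
    · rw [mul_zero]
  rw [e] at key2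
  exact key2.unique (hasSum_ite_eq j _)

lemma mv_poly {f : ℂ → ℂ} {a : ℕ → ℂ} (hf : DifferentiableOn ℂ f (ball 0 1))
    (hrep : ∀ z ∈ ball (0:ℂ) 1, HasSum (fun n => a n * z^n) (f z)) {σ : ℝ} (h0 : 0 < σ) (h1 : σ < 1)
    (c : ℕ → ℂ) (s : Finset ℕ) :
    mv (fun t => f (σ * ee t) * (starRingEnd ℂ) (∑ j ∈ s, c j * ee t ^ j)) =
      ∑ j ∈ s, (starRingEnd ℂ) (c j) * (a j * σ ^ j) := by
  have hcc : Continuous (starRingEnd ℂ) := Complex.continuous_conj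
  have hec := ee_cont
  have hfc : Continuous (fun t => f (σ * ee t)) :=
    hf.continuousOn.comp_continuous (by fun_prop) (fun t => by simp [ee_norm, abs_of_pos h0, h1])
  induction s using Finset.induction_on with
  | empty => simp [mv]
  | insert j s hj ih =>
    rw [Finset.sum_insert hj, ← ih, ← mv_coef hrep h0 h1, ← mv_cmul, ← mv_add]
    · congr 1
      ext t
      rw [Finset.sum_insert hj, map_add, map_mul, map_pow]
      ring
    · exact continuous_const.mul (hfc.mul ((hcc.comp hec).pow _))
    · exact hfc.mul (hcc.comp (by fun_prop))

lemma poly_deriv (c : ℕ → ℂ) (s : Finset ℕ) {r : ℂ} (hr : r ≠ 0) (z : ℂ) :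
    HasDerivAt (fun z => (∑ i ∈ s, c i * (r * z) ^ i) / r)
      (∑ i ∈ s, c i * (i * (r * z) ^ (i - 1))) z := by
  have h1 : ∀ i ∈ s, HasDerivAt (fun z => c i * (r * z) ^ i) (c i * (i * (r * z) ^ (i - 1) * r)) z := by
    intro i _
    have h : HasDerivAt (fun z : ℂ => r * z) r z := by
      simpa using (hasDerivAt_id z).const_mul r
    exact (h.pow i).const_mul (c i)
  have h2 := (HasDerivAt.fun_sum h1).div_const r
  suffices h3 : (∑ i ∈ s, c i * (i * (r * z) ^ (i - 1))) =
      (∑ i ∈ s, c i * (i * (r * z) ^ (i - 1) * r)) / r by rw [h3]; exact h2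
  rw [Finset.sum_div]
  apply Finset.sum_congr rfl
  intro i _
  field_simp

lemma poly_deriv_mul (c : ℕ → ℂ) (k : ℕ) (r z : ℂ) :
    r * (z * (∑ i ∈ Finset.Icc 1 k, c i * (i * (r * z) ^ (i - 1)))) =
      ∑ i ∈ Finset.Icc 1 k, c i * (i * (r * z) ^ i) := by
  rw [Finset.mul_sum, Finset.mul_sum]
  apply Finset.sum_congr rfl
  intro i hi
  obtain ⟨m, rfl⟩ := Nat.exists_eq_add_of_le (Finset.mem_Icc.1 hi).1
  rw [Nat.add_sub_cancel_left, pow_add, pow_one]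
  ring

lemma ee_hasDeriv (t : ℝ) : HasDerivAt ee (I * ee t) t := by
  have h1 : HasDerivAt (fun t : ℝ => (t : ℂ) * I) I t := by
    simpa using (Complex.ofRealCLM.hasDerivAt (x := t)).mul_const I
  have h2 := h1.cexp
  rw [mul_comm] at h2
  exact h2

lemma pointwise (ψ : ℂ → ℂ) (hψ : MaMinda ψ) (hconv : Convex ℝ (ψ '' 𝔻))
    (k : ℕ) (r : ℝ) (h0 : 0 < r)
    (hgk : StarlikeMM ψ (fun z => (∑ i ∈ Finset.Icc 1 k, ((r:ℂ)*z) ^ i) / (r:ℂ)))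
    (f : ℂ → ℂ) (a : ℕ → ℂ)
    (hrep : ∀ z ∈ 𝔻, HasSum (fun n => a n * z^n) (f z))
    (hfC : ConvexMM ψ f) (z₀ : ℂ) (hz₀ : z₀ ∈ 𝔻) (hz₀' : z₀ ≠ 0) :
    (∑ i ∈ Finset.Icc 1 k, a i * ((r:ℂ)*z₀)^i) ≠ 0 ∧
    (∑ i ∈ Finset.Icc 1 k, a i * (i * ((r:ℂ)*z₀)^i)) /
      (∑ i ∈ Finset.Icc 1 k, a i * ((r:ℂ)*z₀)^i) ∈ ψ '' 𝔻 := by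
  unfold 𝔻 at *
  obtain ⟨hψd, hψi, hψre, hψ0, -, -, hψc⟩ := hψ
  obtain ⟨⟨-, -, -⟩, hgne, ωg, hωgd, hωg0, hωgm, hωg⟩ := hgk
  obtain ⟨⟨hfd, hf0, -⟩, hfne, ωf, hωfd, hωf0, hωfm, hωf⟩ := hfC
  unfold 𝔻 at *
  have hUo := (inv_diff hψd hψi).1
  have hr : (r:ℂ) ≠ 0 := by exact_mod_cast h0.ne'
  have hn0 : 0 < ‖z₀‖ := norm_pos_iff.2 hz₀'
  have hn1 : ‖z₀‖ < 1 := by simpa using hz₀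
  obtain ⟨σ, hσ1, hσ2⟩ := exists_between hn1
  have hσ0 : 0 < σ := hn0.trans hσ1
  have hσc : (σ:ℂ) ≠ 0 := by exact_mod_cast hσ0.ne'
  set w : ℂ := z₀ / σ with hw
  have hwn : ‖w‖ < 1 := by
    rw [hw, norm_div, Complex.norm_real, Real.norm_of_nonneg hσ0.le]
    exact (div_lt_one hσ0).2 hσ1
  have hw0 : w ≠ 0 := div_ne_zero hz₀' hσc
  have hwn0 : 0 < ‖w‖ := norm_pos_iff.2 hw0
  set v : ℂ := (starRingEnd ℂ) w with hv
  have hvn : ‖v‖ = ‖w‖ := by simp [hv]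
  have hv0 : v ≠ 0 := by simpa [hv] using hw0
  set R : ℝ := min (1 / σ) (1 / ‖w‖) with hRdef
  have hR : 1 < R := lt_min ((one_lt_div hσ0).2 hσ2) ((one_lt_div hwn0).2 hwn)
  have mσ : ∀ z ∈ ball (0:ℂ) R, (σ:ℂ) * z ∈ ball (0:ℂ) 1 := by
    intro z hz
    have h1 : ‖z‖ < 1 / σ := lt_of_lt_of_le (mem_ball_zero_iff.1 hz) (min_le_left _ _)
    rw [lt_div_iff₀ hσ0] at h1
    simpa [abs_of_pos hσ0, mul_comm] using h1
  have mv' : ∀ z ∈ ball (0:ℂ) R, v * z ∈ ball (0:ℂ) 1 := by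
    intro z hz
    have h1 : ‖z‖ < 1 / ‖w‖ := lt_of_lt_of_le (mem_ball_zero_iff.1 hz) (min_le_right _ _)
    rw [lt_div_iff₀ hwn0] at h1
    simpa [hvn, mul_comm] using h1
  set G : ℂ → ℂ := fun z => (∑ i ∈ Finset.Icc 1 k, ((r:ℂ)*z) ^ i) / (r:ℂ) with hG
  have hGd : ∀ z, HasDerivAt G (∑ i ∈ Finset.Icc 1 k, (i:ℂ) * ((r:ℂ) * z) ^ (i - 1)) z := by
    intro z
    simpa using poly_deriv (fun _ => 1) (Finset.Icc 1 k) hr z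
  have hGm : ∀ z, (r:ℂ) * (z * deriv G z) = ∑ i ∈ Finset.Icc 1 k, (i:ℂ) * ((r:ℂ) * z) ^ i := by
    intro z
    rw [(hGd z).deriv]
    simpa using poly_deriv_mul (fun _ => 1) k (r:ℂ) z
  have hG0 : G 0 = 0 := by
    simp only [hG, mul_zero]
    rw [Finset.sum_eq_zero, zero_div]
    intro i hi
    exact zero_pow (by have := (Finset.mem_Icc.1 hi).1; omega)
  have hGB : ∀ z ∈ ball (0:ℂ) 1, z * deriv G z = ψ (ωg z) * G z := by
    intro z hz
    by_cases h : z = 0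
    · rw [h, hG0]; simp
    · have h1 := hωg z hz
      simp only [h, if_false] at h1
      rw [← h1]
      exact (div_mul_cancel₀ _ (hgne z hz h)).symm
  set p : ℂ → ℂ := fun z => (r:ℂ) * G (v * z) with hp
  set B : ℂ → ℂ := fun z => ψ (ωg (v * z)) with hB
  set φ : ℂ → ℂ := fun z => f (σ * z) with hφ
  set C : ℂ → ℂ := fun z => ψ (ωf (σ * z)) with hC
  have hφd : DifferentiableOn ℂ φ (ball 0 R) := hfd.comp (by fun_prop) mσ
  have hpd : DifferentiableOn ℂ p (ball 0 R) := by
    intro z _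
    have : DifferentiableAt ℂ G (v * z) := (hGd _).differentiableAt
    exact ((this.comp z (by fun_prop)).const_mul _).differentiableWithinAt
  have hBd : DifferentiableOn ℂ B (ball 0 R) :=
    hψd.comp (hωgd.comp (by fun_prop) mv') (fun z hz => hωgm _ (mv' z hz))
  have hCd : DifferentiableOn ℂ C (ball 0 R) :=
    hψd.comp (hωfd.comp (by fun_prop) mσ) (fun z hz => hωfm _ (mσ z hz))
  have hφ0 : φ 0 = 0 := by simp [hφ, hf0]
  have hp0 : p 0 = 0 := by simp [hp, hG0]
  have hB0 : B 0 = 1 := by simp [hB, hωg0, hψ0]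
  have hC0 : C 0 = 1 := by simp [hC, hωf0, hψ0]
  have hpB : ∀ t, p (ee t) * B (ee t) = r * ((v * ee t) * deriv G (v * ee t)) := by
    intro t
    rw [hGB _ (mv' _ (ee_mem hR t))]
    simp only [hp, hB]; ring
  -- polar form of the polynomial
  obtain ⟨ρ, Ψ, hγ⟩ := polar_of (γ := fun t => p (ee t)) hR hBd hB0
    (fun t => hψre _ (hωgm _ (mv' _ (ee_mem hR t))))
    (mul_ne_zero hr (hgne _ (mv' _ (ee_mem hR 0)) (mul_ne_zero hv0 (ee_ne 0))))
    (by
      intro t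
      have h1 : HasDerivAt (fun t => v * ee t) (v * (I * ee t)) t := (ee_hasDeriv t).const_mul v
      have h2 : HasDerivAt G (deriv G (v * ee t)) (v * ee t) := (hGd _).differentiableAt.hasDerivAt
      have h3 : HasDerivAt (fun t => (r:ℂ) * G (v * ee t)) (r * (deriv G (v * ee t) * (v * (I * ee t)))) t :=
        (h2.comp t h1).const_mul _
      have h4 : I * B (ee t) * p (ee t) = r * (deriv G (v * ee t) * (v * (I * ee t))) := by
        linear_combination I * hpB t
      rw [h4]
      exact h3)
  -- polar form of the tangent
  have hσd : ∀ t, HasDerivAt (fun t => (σ:ℂ) * ee t) (σ * (I * ee t)) t := fun t =>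
    (ee_hasDeriv t).const_mul _
  have hfdd : DifferentiableOn ℂ (deriv f) (ball 0 1) := hfd.deriv isOpen_ball
  have hu : ∀ t, HasDerivAt (fun t => φ (ee t)) (deriv f (σ * ee t) * (σ * (I * ee t))) t := by
    intro t
    have h2 : HasDerivAt f (deriv f (σ * ee t)) (σ * ee t) :=
      (hfd.differentiableAt (isOpen_ball.mem_nhds (mσ _ (ee_mem hR t)))).hasDerivAt
    exact h2.comp t (hσd t)
  obtain ⟨τ, Θ, hT⟩ := polar_of (γ := fun t => deriv f (σ * ee t) * (σ * (I * ee t))) hR hCd hC0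
    (fun t => hψre _ (hωfm _ (mσ _ (ee_mem hR t))))
    (mul_ne_zero (hfne _ (mσ _ (ee_mem hR 0))) (mul_ne_zero hσc (mul_ne_zero I_ne_zero (ee_ne 0))))
    (by
      intro t
      have h2 : HasDerivAt (deriv f) (deriv (deriv f) (σ * ee t)) (σ * ee t) :=
        (hfdd.differentiableAt (isOpen_ball.mem_nhds (mσ _ (ee_mem hR t)))).hasDerivAt
      have h3 : HasDerivAt (fun t => deriv f (σ * ee t))
        (deriv (deriv f) (σ * ee t) * (σ * (I * ee t))) t :=
        HasDerivAt.comp (h₂ := deriv f) (h := fun t : ℝ => (σ:ℂ) * ee t) t h2 (hσd t)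
      have h4 : HasDerivAt (fun t => (σ:ℂ) * (I * ee t)) (σ * (I * (I * ee t))) t :=
        ((ee_hasDeriv t).const_mul I).const_mul _
      have h5 := h3.mul h4
      have h6 : C (ee t) = _ := (hωf _ (mσ _ (ee_mem hR t))).symm
      have hne := hfne _ (mσ _ (ee_mem hR t))
      have h7 : I * C (ee t) * (deriv f (σ * ee t) * (σ * (I * ee t))) =
          deriv (deriv f) (σ * ee t) * (σ * (I * ee t)) * (σ * (I * ee t)) +
          deriv f (σ * ee t) * (σ * (I * (I * ee t))) := by
        rw [h6]
        field_simp
        ring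
      rw [h7]
      exact h5)
  have hBU : ∀ t, (starRingEnd ℂ) (B (ee t)) ∈ ψ '' ball 0 1 := by
    intro t
    have hm := hωgm _ (mv' _ (ee_mem hR t))
    refine ⟨(starRingEnd ℂ) (ωg (v * ee t)), by simpa using hm, hψc _ hm⟩
  obtain ⟨hL, hmem⟩ := core hR hφd hpd hBd hφ0 hp0 hB0 hT hu hγ hUo hconv hBU
  have hvw : (starRingEnd ℂ) v * σ = z₀ := by
    rw [hv, Complex.conj_conj, hw, div_mul_cancel₀ _ hσc]
  have e1 : Lf φ p = ∑ i ∈ Finset.Icc 1 k, a i * ((r:ℂ)*z₀)^i := by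
    have h1 := mv_poly hfd hrep hσ0 hσ2 (fun i => (r * v) ^ i) (Finset.Icc 1 k)
    have h2 : Lf φ p = mv (fun t => f (σ * ee t) *
        (starRingEnd ℂ) (∑ j ∈ Finset.Icc 1 k, (r * v) ^ j * ee t ^ j)) := by
      unfold Lf
      congr 1
      ext t
      simp only [hφ, hp, hG]
      rw [mul_div_cancel₀ _ hr]
      congr 2
      apply Finset.sum_congr rfl
      intro i _
      rw [← mul_pow, mul_assoc]
    rw [h2, h1]
    apply Finset.sum_congr rfl
    intro i _
    rw [← hvw, map_pow, map_mul, Complex.conj_ofReal]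
    ring
  have e2 : mv (fun t => φ (ee t) * (starRingEnd ℂ) (p (ee t) * B (ee t))) =
      ∑ i ∈ Finset.Icc 1 k, a i * (i * ((r:ℂ)*z₀)^i) := by
    have h1 := mv_poly hfd hrep hσ0 hσ2 (fun i => i * (r * v) ^ i) (Finset.Icc 1 k)
    have h2 : mv (fun t => φ (ee t) * (starRingEnd ℂ) (p (ee t) * B (ee t))) =
        mv (fun t => f (σ * ee t) *
        (starRingEnd ℂ) (∑ j ∈ Finset.Icc 1 k, (j * (r * v) ^ j) * ee t ^ j)) := by
      congr 1
      ext t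
      rw [hpB, hGm]
      simp only [hφ]
      congr 2
      apply Finset.sum_congr rfl
      intro i _
      rw [mul_assoc (i:ℂ), ← mul_pow, mul_assoc (r:ℂ)]
    rw [h2, h1]
    apply Finset.sum_congr rfl
    intro i _
    rw [← hvw, map_mul, map_pow, map_mul, Complex.conj_ofReal, map_natCast]
    ring
  rw [e1] at hL hmem
  rw [e2] at hmem
  exact ⟨hL, hmem⟩

theorem stmt12 (ψ : ℂ → ℂ) (hψ : MaMinda ψ) (hconv : Convex ℝ (ψ '' 𝔻))
    (k : ℕ) (hk : 2 ≤ k) (r : ℝ) (h0 : 0 < r) (h1 : r ≤ 1)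
    (hgk : StarlikeMM ψ (fun z => (∑ i ∈ Finset.Icc 1 k, ((r:ℂ)*z) ^ i) / (r:ℂ)))
    (f : ℂ → ℂ) (a : ℕ → ℂ) (ha0 : a 0 = 0) (ha1 : a 1 = 1)
    (hrep : ∀ z ∈ 𝔻, HasSum (fun n => a n * z^n) (f z))
    (hfC : ConvexMM ψ f) :
    StarlikeMM ψ (fun z => (∑ i ∈ Finset.Icc 1 k, a i * ((r:ℂ)*z)^i) / (r:ℂ)) := by
  have hr : (r:ℂ) ≠ 0 := by exact_mod_cast h0.ne'
  have hpt := pointwise ψ hψ hconv k r h0 hgk f a hrep hfC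
  obtain ⟨hψd, hψi, hψre, hψ0, -, -, hψc⟩ := hψ
  unfold 𝔻 at *
  obtain ⟨hUo, χ, hχd, hχ1, hχ2⟩ := inv_diff hψd hψi
  set F : ℂ → ℂ := fun z => (∑ i ∈ Finset.Icc 1 k, a i * ((r:ℂ)*z)^i) / (r:ℂ) with hF
  set D : ℂ → ℂ := fun z => ∑ i ∈ Finset.Icc 1 k, a i * (i * ((r:ℂ) * z) ^ (i - 1)) with hD
  set S : ℂ → ℂ := fun z => ∑ i ∈ Finset.Icc 1 k, a i * ((r:ℂ) * z) ^ (i - 1) with hS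
  have hFD : ∀ z, HasDerivAt F (D z) z := fun z => poly_deriv a (Finset.Icc 1 k) hr z
  have hDm : ∀ z, r * (z * D z) = ∑ i ∈ Finset.Icc 1 k, a i * (i * ((r:ℂ) * z) ^ i) := fun z =>
    poly_deriv_mul a k r z
  have hFS : ∀ z, F z = z * S z := by
    intro z
    simp only [hF, hS]
    rw [div_eq_iff hr, Finset.mul_sum, Finset.sum_mul]
    apply Finset.sum_congr rfl
    intro i hi
    obtain ⟨m, rfl⟩ := Nat.exists_eq_add_of_le (Finset.mem_Icc.1 hi).1
    rw [Nat.add_sub_cancel_left, pow_add, pow_one]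
    ring
  have h1k : 1 ∈ Finset.Icc 1 k := Finset.mem_Icc.2 ⟨le_rfl, by omega⟩
  have hD0 : D 0 = 1 := by
    simp only [hD, mul_zero]
    rw [Finset.sum_eq_single_of_mem 1 h1k]
    · simp [ha1]
    · intro i hi hne
      have := (Finset.mem_Icc.1 hi).1
      rw [zero_pow (by omega)]; simp
  have hS0 : S 0 = 1 := by
    simp only [hS, mul_zero]
    rw [Finset.sum_eq_single_of_mem 1 h1k]
    · simp [ha1]
    · intro i hi hne
      have := (Finset.mem_Icc.1 hi).1
      rw [zero_pow (by omega)]; simp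
  have hFne : ∀ z ∈ ball (0:ℂ) 1, z ≠ 0 → F z ≠ 0 := fun z hz hne =>
    div_ne_zero (hpt z hz hne).1 hr
  have hSne : ∀ z ∈ ball (0:ℂ) 1, S z ≠ 0 := by
    intro z hz
    by_cases h : z = 0
    · rw [h, hS0]; exact one_ne_zero
    · intro h2
      exact hFne z hz h (by rw [hFS, h2, mul_zero])
  have hDd : Differentiable ℂ D := by
    simp only [hD]; fun_prop
  have hSd : Differentiable ℂ S := by
    simp only [hS]; fun_prop
  have hh : ∀ z ∈ ball (0:ℂ) 1, (if z = 0 then 1 else z * deriv F z / F z) = D z / S z := by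
    intro z hz
    split_ifs with h
    · rw [h, hD0, hS0, div_one]
    · rw [(hFD z).deriv, hFS, mul_div_mul_left _ _ h]
  have hmem : ∀ z ∈ ball (0:ℂ) 1, D z / S z ∈ ψ '' ball 0 1 := by
    intro z hz
    by_cases h : z = 0
    · rw [h, hD0, hS0, div_one, ← hψ0]
      exact ⟨0, by simp, rfl⟩
    · have h2 := (hpt z hz h).2
      rw [← hDm z] at h2
      have h3 : (∑ i ∈ Finset.Icc 1 k, a i * ((r:ℂ)*z)^i) = r * F z := by
        simp only [hF]; rw [mul_div_cancel₀ _ hr]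
      rw [h3, mul_div_mul_left _ _ hr, hFS, mul_div_mul_left _ _ h] at h2
      exact h2
  refine ⟨⟨fun z _ => (hFD z).differentiableAt.differentiableWithinAt, ?_, ?_⟩, hFne,
    fun z => χ (D z / S z), ?_, ?_, ?_, ?_⟩
  · rw [hFS, zero_mul]
  · rw [(hFD 0).deriv, hD0]
  · exact hχd.comp (hDd.differentiableOn.div hSd.differentiableOn hSne) hmem
  · simp only
    rw [hD0, hS0, div_one, ← hψ0]
    exact hχ2 0 (by simp)
  · intro z hz
    exact (hχ1 _ (hmem z hz)).1
  · intro z hz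
    simp only
    rw [(hχ1 _ (hmem z hz)).2]
    exact hh z hz
end
end

section
/- Let ψ be a Ma-Minda function with ψ(𝔻) a convex set, let 0 < q < 1, and let H(z) = z/((1 − qz)(1 − z)). Suppose r ∈ (0, 1] is such that the function z ↦ H(rz)/r belongs to S*(ψ). If f is a convex function (f ∈ C), then the function G(z) = z·d_q f(z) = (f(z) − f(qz))/(1 − q) satisfies: z ↦ G(rz)/r belongs to S*(ψ); that is, z·d_q f(z) ∈ S*(ψ) on |z| < r. -/
open Complex Metric Set

noncomputable section

lemma isOpen_DD : IsOpen 𝔻 := Metric.isOpen_ball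

lemma mem_DD {z : ℂ} : z ∈ 𝔻 ↔ ‖z‖ < 1 := by simp [𝔻]

/-- support inequality on the circle -/
lemma supp_circle (f : ℂ → ℂ) (hf : IsConvexFn f) (a : ℂ) (ha0 : a ≠ 0) (ha : a ∈ 𝔻)
    (θ : ℝ) (h0 : 0 < θ) (h1 : θ < 2 * Real.pi) :
    ((f (a * exp (θ * I)) - f a) / (a * deriv f a)).re < 0 := by
  obtain ⟨⟨hd, -, -⟩, hne, hre⟩ := hf
  have hd1 : DifferentiableOn ℂ (deriv f) 𝔻 := hd.deriv isOpen_DD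
  have hd2 : DifferentiableOn ℂ (deriv (deriv f)) 𝔻 := hd1.deriv isOpen_DD
  obtain ⟨L, hL⟩ := (DifferentiableOn.isExactOn_ball (c := 0) (r := 1)
    (f := fun z => deriv (deriv f) z / deriv f z) (hd2.div hd1 hne))
  have hz : ∀ t : ℝ, a * exp (t * I) ∈ 𝔻 := by
    intro t; rw [mem_DD] at *; simpa [Complex.norm_exp_ofReal_mul_I] using ha
  -- the derivative is a constant times exp L
  have hexp : ∀ z ∈ 𝔻, deriv f z = deriv f a * exp (L z - L a) := by
    have hc : ∀ z ∈ 𝔻, HasDerivAt (fun z => deriv f z * exp (-L z)) 0 z := by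
      intro z hz
      have h1 := ((hd1 z hz).differentiableAt (isOpen_DD.mem_nhds hz)).hasDerivAt
      have h2 := (hL z hz).neg.cexp
      refine (h1.mul h2).congr_deriv ?_
      have := hne z hz
      field_simp
      ring
    intro z hz
    have hconst := (convex_ball (0:ℂ) 1).is_const_of_fderivWithin_eq_zero (𝕜 := ℂ)
      (f := fun z => deriv f z * exp (-L z))
      (fun w hw => (hc w hw).differentiableAt.differentiableWithinAt)
      (fun w hw => by
        rw [fderivWithin_of_isOpen isOpen_ball hw]
        have := (hc w hw).hasFDerivAt.fderiv
        rw [this]; ext; simp) hz ha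
    have e1 : exp (L z - L a) = exp (L z) * exp (-L a) := by rw [← Complex.exp_add]; ring_nf
    have e2 : exp (-L z) * exp (L z) = 1 := by rw [← Complex.exp_add]; simp
    rw [e1]
    calc deriv f z = (deriv f z * exp (-L z)) * exp (L z) := by rw [mul_assoc, e2, mul_one]
      _ = _ := by rw [hconst]; ring
  set α : ℝ → ℝ := fun t => t + (L (a * exp (t * I)) - L a).im with hα
  set h : ℝ → ℝ := fun t => ((f (a * exp (t * I)) - f a) / (a * deriv f a)).re with hh
  have hcirc : ∀ t : ℝ, HasDerivAt (fun t : ℝ => a * exp (t * I)) (a * exp (t * I) * I) t := by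
    intro t
    have := ((((hasDerivAt_id (t:ℂ)).mul_const I).cexp).const_mul a).comp_ofReal
    refine this.congr_deriv ?_
    simp; ring
  have hαd : ∀ t : ℝ, HasDerivAt α ((1 + (a * exp (t * I)) * deriv (deriv f) (a * exp (t * I)) /
      deriv f (a * exp (t * I))).re) t := by
    intro t
    have h1 := (hL _ (hz t)).comp t (hcirc t)
    have h2 := (Complex.imCLM.hasFDerivAt.comp_hasDerivAt t (h1.sub_const (L a)))
    refine ((hasDerivAt_id t).add h2).congr_deriv ?_
    simp only [imCLM_apply, add_re, one_re]
    congr 1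
    rw [← mul_assoc, Complex.mul_I_im]
    congr 1; ring
  have hαm : StrictMono α := strictMono_of_deriv_pos (fun t => by
    rw [(hαd t).deriv]; exact hre _ (hz t))
  have hα0 : α 0 = 0 := by simp [hα]
  have hα2 : α (2 * Real.pi) = 2 * Real.pi := by simp [hα]
  have hhd : ∀ t : ℝ, HasDerivAt h (-(Real.exp ((L (a * exp (t * I)) - L a).re) * Real.sin (α t))) t := by
    intro t
    have h1 := (((hd _ (hz t)).differentiableAt (isOpen_DD.mem_nhds (hz t))).hasDerivAt).comp t (hcirc t)
    have h2 := Complex.reCLM.hasFDerivAt.comp_hasDerivAt t ((h1.sub_const (f a)).div_const (a * deriv f a))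
    refine h2.congr_deriv ?_
    simp only [reCLM_apply]
    have hne' := hne a ha
    have : deriv f (a * exp (t * I)) * (a * exp (t * I) * I) / (a * deriv f a) =
        exp ((L (a * exp (t * I)) - L a) + t * I) * I := by
      rw [hexp _ (hz t), Complex.exp_add]
      field_simp
    rw [this, Complex.mul_I_re, Complex.exp_im]
    simp [hα, add_comm]
  have hh0 : h 0 = 0 := by simp [hh]
  have hh2 : h (2 * Real.pi) = 0 := by simp [hh]
  have hcont : Continuous h := continuous_iff_continuousAt.2 fun t => (hhd t).continuousAt
  change h θ < 0
  rcases le_or_gt (α θ) Real.pi with hle | hgt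
  · have : StrictAntiOn h (Icc 0 θ) := by
      refine strictAntiOn_of_deriv_neg (convex_Icc _ _) hcont.continuousOn ?_
      intro t ht
      rw [interior_Icc] at ht
      rw [(hhd t).deriv]
      have := Real.sin_pos_of_pos_of_lt_pi (x := α t) (by rw [← hα0]; exact hαm ht.1)
        (lt_of_lt_of_le (hαm ht.2) hle)
      have := mul_pos (Real.exp_pos ((L (a * exp (t * I)) - L a).re)) this
      linarith
    rw [← hh0]
    exact this (left_mem_Icc.2 h0.le) (right_mem_Icc.2 h0.le) h0
  · have : StrictMonoOn h (Icc θ (2 * Real.pi)) := by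
      refine strictMonoOn_of_deriv_pos (convex_Icc _ _) hcont.continuousOn ?_
      intro t ht
      rw [interior_Icc] at ht
      rw [(hhd t).deriv]
      have h3 : 0 < Real.sin (α t - Real.pi) := Real.sin_pos_of_pos_of_lt_pi
        (by have := hαm ht.1; linarith) (by have := hαm ht.2; linarith)
      rw [Real.sin_sub_pi] at h3
      have := mul_pos (Real.exp_pos ((L (a * exp (t * I)) - L a).re)) h3
      linarith
    rw [← hh2]
    exact this (left_mem_Icc.2 h1.le) (right_mem_Icc.2 h1.le) h1

lemma exists_angle_s13 (a c : ℂ) (ha0 : a ≠ 0) (hn : ‖c‖ = ‖a‖) (hne : c ≠ a) :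
    ∃ θ : ℝ, 0 < θ ∧ θ < 2 * Real.pi ∧ c = a * exp (θ * I) := by
  have hu : ‖c / a‖ = 1 := by rw [norm_div, hn, div_self (norm_ne_zero_iff.2 ha0)]
  have he : exp (arg (c / a) * I) = c / a := by
    have := Complex.norm_mul_exp_arg_mul_I (c / a)
    rwa [hu, ofReal_one, one_mul] at this
  have hc : c = a * exp (arg (c / a) * I) := by rw [he]; field_simp
  have hne0 : arg (c / a) ≠ 0 := by
    intro h; rw [h] at hc; simp at hc; exact hne hc
  rcases lt_or_gt_of_ne hne0 with h | h
  · refine ⟨arg (c / a) + 2 * Real.pi, by linarith [Complex.neg_pi_lt_arg (c / a), Real.pi_pos], by linarith, ?_⟩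
    rw [hc]
    push_cast
    rw [add_mul, Complex.exp_add, Complex.exp_two_pi_mul_I, mul_one, ← hc]
    exact hc
  · exact ⟨_, h, by linarith [Complex.arg_le_pi (c / a), Real.pi_pos], hc⟩

/-- strict support inequality on the closed disc -/
lemma supp_disc (f : ℂ → ℂ) (hf : IsConvexFn f) (a c : ℂ) (ha0 : a ≠ 0) (ha : a ∈ 𝔻)
    (hc : ‖c‖ ≤ ‖a‖) (hne : c ≠ a) :
    0 < ((f a - f c) / (a * deriv f a)).re := by
  have hcirc : ∀ c, ‖c‖ = ‖a‖ → c ≠ a → 0 < ((f a - f c) / (a * deriv f a)).re := by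
    intro c hn hne
    obtain ⟨θ, h0, h1, rfl⟩ := exists_angle_s13 a c ha0 hn hne
    have := supp_circle f hf a ha0 ha θ h0 h1
    rw [← neg_sub, neg_div, neg_re]; linarith
  rcases hc.eq_or_lt with h | hlt
  · exact hcirc c h hne
  by_contra hcon
  push Not at hcon
  have hna : 0 < ‖a‖ := norm_pos_iff.2 ha0
  set E : ℂ → ℂ := fun c => exp (-((f a - f c) / (a * deriv f a))) with hE
  have hEn : ∀ z, ‖E z‖ = Real.exp (-((f a - f z) / (a * deriv f a)).re) := by
    intro z; simp [hE, Complex.norm_exp]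
  have hsub : closedBall (0:ℂ) ‖a‖ ⊆ 𝔻 := by
    intro z hz; rw [mem_DD] at *; simp at hz; linarith
  have hdE : DifferentiableOn ℂ E 𝔻 := by
    have := hf.1.1
    exact (((this.const_sub (f a)).div_const _).neg).cexp
  have hcl : DiffContOnCl ℂ E (ball 0 ‖a‖) := by
    refine DifferentiableOn.diffContOnCl ?_
    rw [closure_ball _ hna.ne']
    exact hdE.mono hsub
  have hle : ∀ z ∈ closure (ball (0:ℂ) ‖a‖), ‖E z‖ ≤ 1 := by
    intro z hz
    refine Complex.norm_le_of_forall_mem_frontier_norm_le isBounded_ball hcl ?_ hz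
    intro w hw
    rw [frontier_ball _ hna.ne'] at hw
    rw [hEn, Real.exp_le_one_iff]
    by_cases hwa : w = a
    · simp [hwa]
    · have := hcirc w (by simpa using hw) hwa
      linarith
  have hmax : IsMaxOn (norm ∘ E) (ball 0 ‖a‖) c := by
    intro z hz
    have h1 := hle z (subset_closure hz)
    have h2 : 1 ≤ ‖E c‖ := by rw [hEn, Real.one_le_exp_iff]; linarith
    exact h1.trans h2
  have heq := Complex.norm_eqOn_closure_of_isPreconnected_of_isMaxOn
    (convex_ball (0:ℂ) ‖a‖).isPreconnected isOpen_ball hcl (by simpa using hlt) hmax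
  have hmem : -a ∈ closure (ball (0:ℂ) ‖a‖) := by
    rw [closure_ball _ hna.ne']; simp
  have h3 := heq hmem
  have h4 : 0 < ((f a - f (-a)) / (a * deriv f a)).re :=
    hcirc (-a) (by simp) (by intro h; apply ha0; exact self_eq_neg.1 h.symm)
  simp only [Function.comp, Function.const] at h3
  rw [hEn, hEn] at h3
  have := Real.exp_injective h3
  linarith

lemma conv_inj (f : ℂ → ℂ) (hf : IsConvexFn f) : InjOn f 𝔻 := by
  have key : ∀ a ∈ 𝔻, ∀ c ∈ 𝔻, ‖c‖ ≤ ‖a‖ → f a = f c → a = c := by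
    intro a ha c hc hle heq
    by_contra hne
    have ha0 : a ≠ 0 := by
      rintro rfl
      simp at hle; exact hne hle.symm
    have := supp_disc f hf a c ha0 ha hle (Ne.symm hne)
    simp [heq] at this
  intro a ha c hc heq
  rcases le_total ‖c‖ ‖a‖ with h | h
  · exact key a ha c hc h heq
  · exact (key c hc a ha h heq.symm).symm

open Filter Topology in
lemma inv_holo (f : ℂ → ℂ) (ρ : ℝ) (hρ : 0 < ρ) (hd : DifferentiableOn ℂ f (ball 0 ρ))
    (hinj : InjOn f (ball 0 ρ)) :
    IsOpen (f '' ball 0 ρ) ∧ ∃ g : ℂ → ℂ, DifferentiableOn ℂ g (f '' ball 0 ρ) ∧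
      (∀ z ∈ ball 0 ρ, g (f z) = z) := by
  set U : Set ℂ := ball 0 ρ with hU
  have hUo : IsOpen U := isOpen_ball
  have hUc : IsPreconnected U := (convex_ball (0:ℂ) ρ).isPreconnected
  have han : AnalyticOnNhd ℂ f U := hd.analyticOnNhd hUo
  have h0 : (0:ℂ) ∈ U := by simp [hU, hρ]
  have h2 : ((ρ / 2 : ℝ) : ℂ) ∈ U := by
    simp only [hU, mem_ball_zero_iff, Complex.norm_real, Real.norm_eq_abs]
    rw [abs_of_pos (by linarith)]; linarith
  have hnc : ¬ ∃ w, ∀ z ∈ U, f z = w := by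
    rintro ⟨w, hw⟩
    have := hinj h0 h2 ((hw _ h0).trans (hw _ h2).symm)
    have h3 : (0:ℝ) = ρ / 2 := by exact_mod_cast this
    linarith
  have hop : ∀ s ⊆ U, IsOpen s → IsOpen (f '' s) :=
    (han.is_constant_or_isOpen hUc).resolve_left hnc
  have hVo : IsOpen (f '' U) := hop U Subset.rfl hUo
  refine ⟨hVo, Function.invFunOn f U, ?_, fun z hz => hinj.leftInvOn_invFunOn hz⟩
  set g := Function.invFunOn f U with hg
  have hgf : ∀ z ∈ U, g (f z) = z := fun z hz => hinj.leftInvOn_invFunOn hz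
  have hcont : ∀ w ∈ f '' U, ContinuousAt g w := by
    rintro _ ⟨z, hz, rfl⟩
    intro S hS
    rw [hgf z hz] at hS
    obtain ⟨T, hTS, hT, hzT⟩ := _root_.mem_nhds_iff.1 hS
    have : f '' (T ∩ U) ∈ 𝓝 (f z) :=
      (hop _ inter_subset_right (hT.inter hUo)).mem_nhds ⟨z, ⟨hzT, hz⟩, rfl⟩
    refine Filter.mem_map.2 (mem_of_superset this ?_)
    rintro _ ⟨y, ⟨hyT, hyU⟩, rfl⟩
    simp only [mem_preimage]
    rw [hgf y hyU]; exact hTS hyT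
  have hfg : ∀ w ∈ f '' U, f (g w) = w := by
    rintro _ ⟨z, hz, rfl⟩; rw [hgf z hz]
  have hgU : ∀ w ∈ f '' U, g w ∈ U := by
    rintro _ ⟨z, hz, rfl⟩; rw [hgf z hz]; exact hz
  have hreg : ∀ w ∈ f '' U, deriv f (g w) ≠ 0 → DifferentiableAt ℂ g w := by
    intro w hw hne
    have h1 : HasDerivAt f (deriv f (g w)) (g w) :=
      ((hd _ (hgU w hw)).differentiableAt (hUo.mem_nhds (hgU w hw))).hasDerivAt
    exact (HasDerivAt.of_local_left_inverse (hcont w hw) h1 hne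
      (by filter_upwards [hVo.mem_nhds hw] with y hy using hfg y hy)).differentiableAt
  intro w hw
  refine DifferentiableAt.differentiableWithinAt ?_
  by_cases hne : deriv f (g w) = 0
  swap
  · exact hreg w hw hne
  have hdan : AnalyticOnNhd ℂ (deriv f) U := han.deriv
  have hev : ∀ᶠ z in 𝓝[≠] (g w), deriv f z ≠ 0 := by
    rcases (hdan _ (hgU w hw)).eventually_eq_zero_or_eventually_ne_zero with h | h
    · exfalso
      have hz := hdan.eqOn_zero_of_preconnected_of_eventuallyEq_zero hUc (hgU w hw) h
      apply hnc
      refine ⟨f 0, fun z hzU => ?_⟩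
      exact (convex_ball (0:ℂ) ρ).is_const_of_fderivWithin_eq_zero (𝕜 := ℂ) hd
        (fun y hy => by
          rw [fderivWithin_of_isOpen isOpen_ball hy]
          ext; simp; exact hz hy) hzU h0
    · exact h
  refine (Complex.analyticAt_of_differentiable_on_punctured_nhds_of_continuousAt ?_
    (hcont w hw)).differentiableAt
  have hev2 : ∀ᶠ z in 𝓝 (g w), z ≠ g w → deriv f z ≠ 0 := eventually_nhdsWithin_iff.1 hev
  rw [eventually_nhdsWithin_iff]
  filter_upwards [(hcont w hw).eventually hev2, hVo.mem_nhds hw] with y hy hyV hyne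
  refine hreg y hyV (hy ?_)
  intro h
  apply hyne
  simp only [mem_singleton_iff]
  rw [← hfg y hyV, h, hfg w hw]

lemma conv_image (f : ℂ → ℂ) (hf : IsConvexFn f) (ρ : ℝ) (hρ : 0 < ρ) (hρ1 : ρ < 1) :
    Convex ℝ (f '' ball 0 ρ) := by
  have hsub : closedBall (0:ℂ) ρ ⊆ 𝔻 := by
    intro z hz; rw [mem_DD]; simp at hz; linarith
  have hdc : DifferentiableOn ℂ f (closedBall 0 ρ) := hf.1.1.mono hsub
  obtain ⟨hVo, -⟩ := inv_holo f ρ hρ (hdc.mono ball_subset_closedBall)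
    ((conv_inj f hf).mono (ball_subset_closedBall.trans hsub))
  set V := f '' ball 0 ρ with hV
  rw [convex_iff_segment_subset]
  intro A hA B hB
  have hcpt : IsClosed (f '' closedBall 0 ρ) :=
    ((isCompact_closedBall (0:ℂ) ρ).image_of_continuousOn hdc.continuousOn).isClosed
  have hdisj : ∀ W ∈ segment ℝ A B, W ∈ f '' closedBall 0 ρ → W ∈ V := by
    rintro W hW ⟨a, ha, rfl⟩
    by_contra hcon
    have han : ‖a‖ = ρ := by
      simp at ha
      refine ha.eq_or_lt.resolve_right fun h => hcon ⟨a, by simpa using h, rfl⟩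
    have ha0 : a ≠ 0 := by rintro rfl; simp at han; linarith
    have hs : ∀ X ∈ V, 0 < ((f a - X) / (a * deriv f a)).re := by
      rintro _ ⟨c, hc, rfl⟩
      simp at hc
      exact supp_disc f hf a c ha0 (hsub ha) (by linarith) (by rintro rfl; linarith)
    obtain ⟨s, t, hs0, ht0, hst, hW⟩ := hW
    have h1 := hs A hA
    have h2 := hs B hB
    have h3 : s * ((f a - A) / (a * deriv f a)).re + t * ((f a - B) / (a * deriv f a)).re = 0 := by
      rw [← Complex.re_ofReal_mul, ← Complex.re_ofReal_mul, ← Complex.add_re]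
      have : (s:ℂ) * ((f a - A) / (a * deriv f a)) + t * ((f a - B) / (a * deriv f a)) = 0 := by
        have e : (s:ℂ) + t = 1 := by exact_mod_cast hst
        simp only [Complex.real_smul] at hW
        have : (s:ℂ) * (f a - A) + t * (f a - B) = 0 := by
          linear_combination (f a) * e - hW
        rw [← mul_div_assoc, ← mul_div_assoc, ← add_div, this, zero_div]
      rw [this]; simp
    rcases hs0.eq_or_lt with h | h
    · rw [← h] at h3 hst
      have : t = 1 := by linarith
      rw [this] at h3; linarith
    · have := mul_pos h h1
      have := mul_nonneg ht0 h2.le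
      linarith
  have hpre : IsPreconnected (segment ℝ A B) := (convex_segment A B).isPreconnected
  intro W hW
  by_contra hWV
  obtain ⟨X, hX, hX1, hX2⟩ := hpre V (f '' closedBall 0 ρ)ᶜ hVo hcpt.isOpen_compl
    (fun X hX => by
      by_cases h : X ∈ f '' closedBall 0 ρ
      · exact Or.inl (hdisj X hX h)
      · exact Or.inr h)
    ⟨A, left_mem_segment ℝ A B, hA⟩ ⟨W, hW, fun h => hWV (hdisj W hW h)⟩
  exact hX2 (image_mono ball_subset_closedBall hX1)

lemma circle_algebra (a c X : ℂ) (ha0 : a ≠ 0) (hn : ‖a‖ = ‖c‖) (hne : a ≠ c) (d : ℂ) (hd : d ≠ 0)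
    (h : 0 ≤ (X / (a * d)).re) :
    0 ≤ ((a + c) / (a - c) - 2 * c * X / ((a - c) ^ 2 * d)).re := by
  have hc0 : c ≠ 0 := by rw [← norm_pos_iff, ← hn]; exact norm_pos_iff.2 ha0
  have hac : a - c ≠ 0 := sub_ne_zero.2 hne
  have e1 : a * (starRingEnd ℂ) a = ((‖a‖ ^ 2 : ℝ) : ℂ) := by
    rw [Complex.mul_conj, Complex.normSq_eq_norm_sq]
  have e2 : c * (starRingEnd ℂ) c = ((‖a‖ ^ 2 : ℝ) : ℂ) := by
    rw [Complex.mul_conj, Complex.normSq_eq_norm_sq, hn]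
  have e3 : (a - c) * ((starRingEnd ℂ) a - (starRingEnd ℂ) c) = ((‖a - c‖ ^ 2 : ℝ) : ℂ) := by
    rw [← map_sub, Complex.mul_conj, Complex.normSq_eq_norm_sq]
  have hN : ‖a - c‖ ≠ 0 := norm_ne_zero_iff.2 hac
  set κ : ℝ := 2 * ‖a‖ ^ 2 / ‖a - c‖ ^ 2 with hκ
  have hκ0 : 0 ≤ κ := by positivity
  have hk : (κ : ℂ) = -(2 * a * c) / (a - c) ^ 2 := by
    have : (κ : ℂ) = 2 * ((‖a‖ ^ 2 : ℝ) : ℂ) / ((‖a - c‖ ^ 2 : ℝ) : ℂ) := by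
      rw [hκ]; push_cast; ring
    rw [this, div_eq_div_iff (by exact_mod_cast pow_ne_zero 2 hN) (pow_ne_zero 2 hac)]
    rw [← e3]
    linear_combination (-2 * (a - c) * a) * e2 + (2 * (a - c) * c) * e1
  have him : ((a + c) / (a - c)).re = 0 := by
    have h1 : (a + c) / (a - c) + (starRingEnd ℂ) ((a + c) / (a - c)) = 0 := by
      have hac' : (starRingEnd ℂ) a - (starRingEnd ℂ) c ≠ 0 := by
        rw [← map_sub]; exact (map_ne_zero _).2 hac
      rw [map_div₀, map_sub, map_add, div_add_div _ _ hac hac', div_eq_zero_iff]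
      left
      linear_combination 2 * e1 - 2 * e2
    have := congrArg Complex.re h1
    simp only [add_re, conj_re, zero_re] at this
    linarith
  have : 2 * c * X / ((a - c) ^ 2 * d) = -((κ : ℂ) * (X / (a * d))) := by
    rw [hk]; field_simp
  rw [this, sub_neg_eq_add, add_re, him, Complex.re_ofReal_mul]
  have := mul_nonneg hκ0 h
  linarith

open Filter Topology in
lemma key_deriv (f : ℂ → ℂ) (hf : IsConvexFn f) (a c : ℂ) (hc : c ∈ 𝔻) (hac : ‖a‖ < ‖c‖) :
    0 ≤ ((a + c) / (a - c) - 2 * c * (f a - f c) / ((a - c) ^ 2 * deriv f a)).re := by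
  have hcn : 0 < ‖c‖ := lt_of_le_of_lt (norm_nonneg a) hac
  have hd1 : DifferentiableOn ℂ (deriv f) 𝔻 := hf.1.1.deriv isOpen_DD
  have hne := hf.2.1
  have hcm : 𝔻 ∈ 𝓝 c := isOpen_DD.mem_nhds hc
  set D1 := dslope f c with hD1
  have hD1d : DifferentiableOn ℂ D1 𝔻 := (Complex.differentiableOn_dslope hcm).2 hf.1.1
  set N : ℂ → ℂ := fun z => (z + c) * deriv f z - 2 * c * D1 z with hN
  have hNd : DifferentiableOn ℂ N 𝔻 := by
    refine DifferentiableOn.sub (DifferentiableOn.mul ?_ hd1) (hD1d.const_mul _)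
    fun_prop
  have hNc : N c = 0 := by simp [hN, hD1]; ring
  set E : ℂ → ℂ := fun z => dslope N c z / deriv f z with hE
  have hEd : DifferentiableOn ℂ E 𝔻 := ((Complex.differentiableOn_dslope hcm).2 hNd).div hd1 hne
  have hEval : ∀ z ∈ 𝔻, z ≠ c → E z =
      (z + c) / (z - c) - 2 * c * (f z - f c) / ((z - c) ^ 2 * deriv f z) := by
    intro z hz hzc
    have h1 := sub_ne_zero.2 hzc
    have h2 := hne z hz
    simp only [hE, hN, hD1, dslope_of_ne _ hzc, slope_def_field] at *
    rw [hNc]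
    field_simp
    ring
  have hcirc : ∀ z, ‖z‖ = ‖c‖ → z ≠ c → 0 ≤ (E z).re := by
    intro z hz hzc
    have hzD : z ∈ 𝔻 := by rw [mem_DD] at *; rwa [hz]
    have hz0 : z ≠ 0 := by rw [← norm_pos_iff, hz]; exact hcn
    rw [hEval z hzD hzc]
    exact circle_algebra z c _ hz0 hz hzc _ (hne z hzD)
      (supp_disc f hf z c hz0 hzD hz.ge (Ne.symm hzc)).le
  have hcc : 0 ≤ (E c).re := by
    have hEc : ContinuousAt E c := (hEd c hc).differentiableAt hcm |>.continuousAt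
    have hpath : Tendsto (fun t : ℝ => c * exp (t * I)) (𝓝[>] 0) (𝓝 c) := by
      have : Continuous (fun t : ℝ => c * exp (t * I)) := by fun_prop
      have := this.tendsto 0
      simp only [ofReal_zero, zero_mul, Complex.exp_zero, mul_one] at this
      exact this.mono_left nhdsWithin_le_nhds
    have ht := (Complex.continuous_re.tendsto _).comp (hEc.tendsto.comp hpath)
    refine ge_of_tendsto ht ?_
    have : Ioo (0:ℝ) 1 ∈ 𝓝[>] (0:ℝ) := Ioo_mem_nhdsGT one_pos
    filter_upwards [this] with t ht
    refine hcirc _ (by simp [Complex.norm_exp_ofReal_mul_I]) ?_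
    intro h
    have hc0 : c ≠ 0 := norm_pos_iff.1 hcn
    have h1 : exp (t * I) = 1 := mul_left_cancel₀ hc0 (by rw [mul_one]; exact h)
    have h2 := congrArg Complex.im h1
    rw [Complex.exp_ofReal_mul_I_im] at h2
    have := Real.sin_pos_of_pos_of_lt_pi ht.1 (by linarith [ht.2, Real.pi_gt_three])
    simp at h2
    linarith
  have hsub : closedBall (0:ℂ) ‖c‖ ⊆ 𝔻 := by
    intro z hz; rw [mem_DD] at *; simp at hz; linarith
  have hcl : DiffContOnCl ℂ (fun z => exp (-E z)) (ball 0 ‖c‖) := by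
    refine DifferentiableOn.diffContOnCl ?_
    rw [closure_ball _ hcn.ne']
    exact (hEd.mono hsub).neg.cexp
  have hfin : ‖exp (-E a)‖ ≤ 1 := by
    refine Complex.norm_le_of_forall_mem_frontier_norm_le isBounded_ball hcl ?_
      (subset_closure (by simpa using hac))
    intro w hw
    rw [frontier_ball _ hcn.ne'] at hw
    rw [Complex.norm_exp, Real.exp_le_one_iff, neg_re]
    by_cases hwc : w = c
    · rw [hwc]; linarith
    · have := hcirc w (by simpa using hw) hwc
      linarith
  rw [Complex.norm_exp, Real.exp_le_one_iff, neg_re] at hfin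
  rw [← hEval a (by rw [mem_DD] at *; linarith) (by rintro rfl; exact lt_irrefl _ hac)]
  linarith

lemma three_point (f : ℂ → ℂ) (hf : IsConvexFn f) (a b c : ℂ) (hc : c ∈ 𝔻) (hac : ‖a‖ < ‖c‖)
    (hbc : ‖b‖ < ‖c‖) (hab : a ≠ b) :
    0 ≤ (((f a - f c) * ((a + c) / (a - c)) - (f b - f c) * ((b + c) / (b - c))) / (f a - f b)).re := by
  have hcn : 0 < ‖c‖ := lt_of_le_of_lt (norm_nonneg a) hac
  have hc1 : ‖c‖ < 1 := mem_DD.1 hc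
  have hsub : ball (0:ℂ) ‖c‖ ⊆ 𝔻 := by
    intro z hz; rw [mem_DD] at *; simp at hz; linarith
  obtain ⟨hVo, g, hgd, hgf⟩ := inv_holo f ‖c‖ hcn (hf.1.1.mono hsub) ((conv_inj f hf).mono hsub)
  have hconv := conv_image f hf ‖c‖ hcn hc1
  have ha : a ∈ ball (0:ℂ) ‖c‖ := by simpa using hac
  have hb : b ∈ ball (0:ℂ) ‖c‖ := by simpa using hbc
  have hfne : f a - f b ≠ 0 := sub_ne_zero.2 fun h => hab (conv_inj f hf (hsub ha) (hsub hb) h)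
  set Φ : ℂ → ℂ := fun W => (W - f c) * ((g W + c) / (g W - c)) with hΦ
  have hΦd : ∀ W ∈ f '' ball 0 ‖c‖, ∃ d : ℂ, HasDerivAt Φ d W ∧ 0 ≤ d.re := by
    rintro _ ⟨z, hz, rfl⟩
    have hz' := hsub hz
    have hzc : z - c ≠ 0 := sub_ne_zero.2 (by rintro rfl; simp at hz)
    have hgz := hgf z hz
    have hg1 : HasDerivAt g (deriv g (f z)) (f z) :=
      ((hgd _ ⟨z, hz, rfl⟩).differentiableAt (hVo.mem_nhds ⟨z, hz, rfl⟩)).hasDerivAt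
    have hf1 : HasDerivAt f (deriv f z) z :=
      ((hf.1.1 _ hz').differentiableAt (isOpen_DD.mem_nhds hz')).hasDerivAt
    have hg2 : deriv g (f z) * deriv f z = 1 := by
      have h1 := hg1.comp z hf1
      have h2 : HasDerivAt (g ∘ f) 1 z := by
        refine (hasDerivAt_id z).congr_of_eventuallyEq ?_
        filter_upwards [isOpen_ball.mem_nhds hz] with y hy using hgf y hy
      exact h1.unique h2
    have hfz := hf.2.1 z hz'
    have hg3 : deriv g (f z) = 1 / deriv f z := by field_simp; exact hg2
    refine ⟨_, ?_, key_deriv f hf z c hc (by simpa using hz)⟩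
    have h3 := ((hasDerivAt_id (f z)).sub_const (f c)).mul
      ((hg1.add_const c).div (hg1.sub_const c) (by rw [hgz]; exact hzc))
    refine h3.congr_deriv ?_
    simp only [id, Pi.div_apply]
    rw [hgz, hg3]
    field_simp
    ring
  set γ : ℝ → ℂ := fun t => f b + t * (f a - f b) with hγ
  have hγm : ∀ t ∈ Icc (0:ℝ) 1, γ t ∈ f '' ball 0 ‖c‖ := by
    intro t ht
    have := hconv.add_smul_sub_mem (mem_image_of_mem f hb) (mem_image_of_mem f ha) ht
    simpa [hγ] using this
  set h : ℝ → ℝ := fun t => (Φ (γ t) / (f a - f b)).re with hh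
  have hhd : ∀ t ∈ Icc (0:ℝ) 1, ∃ d : ℝ, HasDerivAt h d t ∧ 0 ≤ d := by
    intro t ht
    obtain ⟨d, hd, hd0⟩ := hΦd _ (hγm t ht)
    refine ⟨d.re, ?_, hd0⟩
    have h1 : HasDerivAt γ (f a - f b) t := by
      have := (((hasDerivAt_id (t:ℂ)).mul_const (f a - f b)).const_add (f b)).comp_ofReal
      refine this.congr_deriv ?_
      simp
    have h2 := Complex.reCLM.hasFDerivAt.comp_hasDerivAt t ((hd.comp t h1).div_const (f a - f b))
    refine h2.congr_deriv ?_
    simp only [reCLM_apply]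
    rw [mul_div_assoc, div_self hfne, mul_one]
  have hmono : MonotoneOn h (Icc 0 1) := by
    refine monotoneOn_of_deriv_nonneg (convex_Icc _ _) ?_ ?_ ?_
    · intro t ht
      obtain ⟨d, hd, -⟩ := hhd t ht
      exact hd.continuousAt.continuousWithinAt
    · intro t ht
      obtain ⟨d, hd, -⟩ := hhd t (interior_subset ht)
      exact hd.differentiableAt.differentiableWithinAt
    · intro t ht
      obtain ⟨d, hd, h0⟩ := hhd t (interior_subset ht)
      rw [hd.deriv]; exact h0
  have := hmono (left_mem_Icc.2 zero_le_one) (right_mem_Icc.2 zero_le_one) zero_le_one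
  have e0 : γ 0 = f b := by simp [hγ]
  have e1 : γ 1 = f a := by simp [hγ]
  simp only [hh, e0, e1, hΦ, hgf a ha, hgf b hb] at this
  rw [sub_div, sub_re]
  linarith

lemma herg_avg (p : ℂ → ℂ) (R R' : ℝ) (hR : 0 < R) (hRR : R < R')
    (hp : DifferentiableOn ℂ p (ball 0 R')) (hp0 : p 0 = 1) (x : ℂ) (hx : ‖x‖ < R) :
    CircleIntegrable (fun s => ((2 * (p s).re - 1 : ℝ) : ℂ) * (s / (s - x))) 0 R ∧
    Real.circleAverage (fun s => ((2 * (p s).re - 1 : ℝ) : ℂ) * (s / (s - x))) 0 R = p x := by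
  have hab : |R| = R := abs_of_pos hR
  have hsub : closedBall (0:ℂ) R ⊆ ball 0 R' := closedBall_subset_ball hRR
  have hpc : DifferentiableOn ℂ p (closedBall 0 R) := hp.mono hsub
  have hpcl : DiffContOnCl ℂ p (ball 0 R) := by
    refine DifferentiableOn.diffContOnCl ?_
    rwa [closure_ball _ hR.ne']
  have hxb : x ∈ ball (0:ℂ) |R| := by simpa [hab] using hx
  have hnex : ∀ s ∈ sphere (0:ℂ) R, s - x ≠ 0 := by
    intro s hs h
    rw [sub_eq_zero] at h
    simp at hs
    rw [h] at hs; linarith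
  have hpcont : ContinuousOn p (sphere 0 R) := hpc.continuousOn.mono sphere_subset_closedBall
  have hk : ContinuousOn (fun s : ℂ => s / (s - x)) (sphere 0 R) :=
    continuousOn_id.div (continuousOn_id.sub continuousOn_const) hnex
  have a1 : Real.circleAverage (fun s => (s / (s - x)) * p s) 0 R = p x := by
    have := DiffContOnCl.circleAverage_smul_div (f := p) (c := 0) (R := R) (w := x) (by rwa [hab]) hxb
    simpa using this
  have a2 : Real.circleAverage (fun s => (s / (s - x))) 0 R = 1 := by
    have := DiffContOnCl.circleAverage_smul_div (f := fun _ => (1:ℂ)) (c := 0) (R := R) (w := x)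
      diffContOnCl_const hxb
    simpa using this
  set Q : ℂ → ℂ := fun s => p s * ((R:ℂ) ^ 2 / ((R:ℂ) ^ 2 - (starRingEnd ℂ) x * s)) with hQ
  have hden : ∀ s ∈ closedBall (0:ℂ) R, (R:ℂ) ^ 2 - (starRingEnd ℂ) x * s ≠ 0 := by
    intro s hs h
    have h1 : ‖(R:ℂ) ^ 2‖ = ‖(starRingEnd ℂ) x * s‖ := by rw [sub_eq_zero.1 h]
    rw [norm_mul, norm_pow, Complex.norm_real, RCLike.norm_conj, Real.norm_eq_abs, hab] at h1
    simp at hs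
    have : ‖x‖ * ‖s‖ ≤ ‖x‖ * R := mul_le_mul_of_nonneg_left hs (norm_nonneg _)
    nlinarith
  have hQd : DiffContOnCl ℂ Q (ball 0 |R|) := by
    refine DifferentiableOn.diffContOnCl ?_
    rw [hab, closure_ball _ hR.ne']
    refine hpc.mul (DifferentiableOn.div (differentiableOn_const _) ?_ hden)
    fun_prop
  have a3 : Real.circleAverage Q 0 R = 1 := by
    rw [hQd.circleAverage]
    simp [hQ, hp0, hR.ne']
  have hQc : ContinuousOn Q (sphere 0 R) := by
    have := hQd.2
    rw [hab, closure_ball _ hR.ne'] at this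
    exact this.mono sphere_subset_closedBall
  have hci : ∀ h : ℂ → ℂ, ContinuousOn h (sphere 0 R) → CircleIntegrable h 0 R :=
    fun h hh => hh.circleIntegrable hR.le
  have a4 : Real.circleAverage (fun s => (starRingEnd ℂ) (Q s)) 0 R = 1 := by
    have := ContinuousLinearMap.circleAverage_comp_comm (c := 0) (R := R)
      (Complex.conjCLE : ℂ →L[ℝ] ℂ) (hci Q hQc)
    rw [a3] at this
    simp only [Function.comp_def] at this
    simpa using this
  have heq : EqOn (fun s => ((2 * (p s).re - 1 : ℝ) : ℂ) * (s / (s - x)))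
      (fun s => (s / (s - x)) * p s + (starRingEnd ℂ) (Q s) - (s / (s - x))) (sphere 0 |R|) := by
    intro s hs
    rw [hab] at hs
    have hsn : ‖s‖ = R := by simpa using hs
    have hs0 : s ≠ 0 := by rw [← norm_pos_iff, hsn]; exact hR
    have h1 : s * (starRingEnd ℂ) s = (R:ℂ) ^ 2 := by
      rw [Complex.mul_conj, Complex.normSq_eq_norm_sq, hsn]; push_cast; ring
    have h2 := hnex s hs
    have h3 : (starRingEnd ℂ) (Q s) = (starRingEnd ℂ) (p s) * (s / (s - x)) := by
      simp only [hQ, map_mul, map_div₀, map_sub, map_pow, Complex.conj_conj, Complex.conj_ofReal]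
      congr 1
      have h4 : (R:ℂ) ^ 2 - x * (starRingEnd ℂ) s = (s - x) * (starRingEnd ℂ) s := by
        rw [← h1]; ring
      rw [h4, ← h1]
      have : (starRingEnd ℂ) s ≠ 0 := (map_ne_zero _).2 hs0
      field_simp
    simp only
    rw [h3]
    have h5 : ((2 * (p s).re - 1 : ℝ) : ℂ) = p s + (starRingEnd ℂ) (p s) - 1 := by
      rw [Complex.add_conj]; push_cast; ring
    rw [h5]; ring
  have hQcc : ContinuousOn (fun s => (starRingEnd ℂ) (Q s)) (sphere 0 R) :=
    Complex.continuous_conj.comp_continuousOn hQc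
  constructor
  · apply hci
    refine ContinuousOn.mul ?_ hk
    refine Complex.continuous_ofReal.comp_continuousOn ?_
    exact (continuousOn_const.mul (Complex.continuous_re.comp_continuousOn hpcont)).sub
      continuousOn_const
  · rw [Real.circleAverage_congr_sphere heq,
      Real.circleAverage_fun_sub (f₁ := fun s => (s / (s - x)) * p s + (starRingEnd ℂ) (Q s))
        (hci _ ((hk.mul hpcont).add hQcc)) (hci _ hk),
      Real.circleAverage_fun_add (f₁ := fun s => (s / (s - x)) * p s)
        (hci _ (hk.mul hpcont)) (hci _ hQcc), a1, a2, a4]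
    ring

lemma herg_mem (p : ℂ → ℂ) (R R' : ℝ) (hR : 1 < R) (hRR : R < R')
    (hp : DifferentiableOn ℂ p (ball 0 R')) (hp0 : p 0 = 1)
    (hre : ∀ s ∈ sphere (0:ℂ) R, 0 ≤ 2 * (p s).re - 1) (q : ℝ) (hq0 : 0 < q) (hq1 : q < 1)
    (S : Set ℂ) (hSo : IsOpen S) (hSc : Convex ℝ S)
    (hS : ∀ s ∈ sphere (0:ℂ) R, s / (s - 1) + s / (s - q) - 1 ∈ S) :
    p 1 + p q - 1 ∈ S := by
  by_contra hcon
  have hR0 : 0 < R := by linarith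
  have hab : |R| = R := abs_of_pos hR0
  obtain ⟨l, hl⟩ := geometric_hahn_banach_open_point hSc hSo hcon
  set v := p 1 + p q - 1 with hv
  set k : ℂ → ℂ := fun s => s / (s - 1) + s / (s - q) - 1 with hk
  set w : ℂ → ℝ := fun s => 2 * (p s).re - 1 with hw
  have hsub : closedBall (0:ℂ) R ⊆ ball 0 R' := closedBall_subset_ball hRR
  have hpcont : ContinuousOn p (sphere 0 R) :=
    hp.continuousOn.mono (sphere_subset_closedBall.trans hsub)
  have hne : ∀ x : ℂ, ‖x‖ < R → ∀ s ∈ sphere (0:ℂ) R, s - x ≠ 0 := by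
    intro x hx s hs h
    rw [sub_eq_zero] at h
    simp at hs
    rw [h] at hs; linarith
  have hn1 : ‖(1:ℂ)‖ < R := by simpa using hR
  have hnq : ‖(q:ℂ)‖ < R := by
    rw [Complex.norm_real, Real.norm_eq_abs, abs_of_pos hq0]; linarith
  have hn0 : ‖(0:ℂ)‖ < R := by simpa using hR0
  have hkc : ContinuousOn k (sphere 0 R) := by
    refine ContinuousOn.sub (ContinuousOn.add ?_ ?_) continuousOn_const
    · exact continuousOn_id.div (continuousOn_id.sub continuousOn_const) (hne _ hn1)
    · exact continuousOn_id.div (continuousOn_id.sub continuousOn_const) (hne _ hnq)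
  have hwc : ContinuousOn w (sphere 0 R) :=
    (continuousOn_const.mul (Complex.continuous_re.comp_continuousOn hpcont)).sub
      continuousOn_const
  obtain ⟨i1, A1⟩ := herg_avg p R R' hR0 hRR hp hp0 1 hn1
  obtain ⟨iq, Aq⟩ := herg_avg p R R' hR0 hRR hp hp0 q hnq
  obtain ⟨i0, A0⟩ := herg_avg p R R' hR0 hRR hp hp0 0 hn0
  have hwC : ContinuousOn (fun s => ((w s : ℝ) : ℂ)) (sphere 0 R) :=
    Complex.continuous_ofReal.comp_continuousOn hwc
  have i0' : CircleIntegrable (fun s => ((w s : ℝ) : ℂ)) 0 R := hwC.circleIntegrable hR0.le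
  have A0' : Real.circleAverage (fun s => ((w s : ℝ) : ℂ)) 0 R = 1 := by
    rw [← hp0, ← A0]
    apply Real.circleAverage_congr_sphere
    intro s hs
    rw [hab] at hs
    have := hne 0 hn0 s hs
    rw [sub_zero] at this
    simp [hw, this]
  have Ak : Real.circleAverage (fun s => ((w s : ℝ) : ℂ) * k s) 0 R = v := by
    have e : (fun s => ((w s : ℝ) : ℂ) * k s) =
        fun s => (((w s : ℝ) : ℂ) * (s / (s - 1)) + ((w s : ℝ) : ℂ) * (s / (s - q))) - ((w s : ℝ) : ℂ) := by
      ext s; simp only [hk]; ring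
    rw [e, Real.circleAverage_fun_sub
      (f₁ := fun s => ((w s : ℝ) : ℂ) * (s / (s - 1)) + ((w s : ℝ) : ℂ) * (s / (s - q))) (i1.add iq) i0', A0', Real.circleAverage_fun_add i1 iq, A1, Aq]
  -- minimum of `l v - l (k s)`
  have hdc : ContinuousOn (fun s => l v - l (k s)) (sphere 0 R) :=
    continuousOn_const.sub (l.continuous.comp_continuousOn hkc)
  obtain ⟨s0, hs0, hmin⟩ := (isCompact_sphere (0:ℂ) R).exists_isMinOn
    (NormedSpace.sphere_nonempty.2 hR0.le) hdc
  set ε := l v - l (k s0) with hε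
  have hεpos : 0 < ε := sub_pos.2 (hl _ (hS s0 hs0))
  have hlk : Real.circleAverage (fun s => w s * l (k s)) 0 R = l v := by
    have h1 := ContinuousLinearMap.circleAverage_comp_comm (c := 0) (R := R) l
      (f := fun s => ((w s : ℝ) : ℂ) * k s) ((hwC.mul hkc).circleIntegrable hR0.le)
    rw [Ak] at h1
    rw [← h1]
    congr 1
    ext s
    simp only [Function.comp_apply]
    rw [← Complex.real_smul, map_smul, smul_eq_mul]
  have hw1 : Real.circleAverage w 0 R = 1 := by
    have h1 := ContinuousLinearMap.circleAverage_comp_comm (c := 0) (R := R) Complex.reCLM i0'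
    rw [A0'] at h1
    simp only [Function.comp_def] at h1
    simpa using h1
  have iwk : CircleIntegrable (fun s => w s * l (k s)) 0 R :=
    (hwc.mul (l.continuous.comp_continuousOn hkc)).circleIntegrable hR0.le
  have iw : CircleIntegrable w 0 R := hwc.circleIntegrable hR0.le
  have iwc : CircleIntegrable (fun s => (l v - ε) * w s) 0 R :=
    (continuousOn_const.mul hwc).circleIntegrable hR0.le
  have hmono := Real.circleAverage_mono iwk iwc (by
    intro s hs
    rw [hab] at hs
    have h1 : ε ≤ l v - l (k s) := hmin hs
    have h2 := hre s hs
    have h3 : l (k s) ≤ l v - ε := by linarith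
    have := mul_le_mul_of_nonneg_left h3 h2
    simp only [hw]; linarith)
  rw [hlk] at hmono
  have e2 : Real.circleAverage (fun s => (l v - ε) * w s) 0 R = l v - ε := by
    have := Real.circleAverage_fun_smul (a := l v - ε) (f := w) (c := 0) (R := R)
    simp only [smul_eq_mul] at this
    rw [this, hw1, mul_one]
  rw [e2] at hmono
  linarith

open Filter Topology in
lemma core_s13 (f : ℂ → ℂ) (hf : IsConvexFn f) (q r : ℝ) (hq0 : 0 < q) (hq1 : q < 1)
    (hr1 : r ≤ 1) (a : ℂ) (ha0 : a ≠ 0) (har : ‖a‖ < r)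
    (S : Set ℂ) (hSo : IsOpen S) (hSc : Convex ℝ S)
    (hS : ∀ y : ℂ, y ≠ 0 → ‖y‖ < r → 1 / (1 - y) + 1 / (1 - q * y) - 1 ∈ S) :
    (a * deriv f a - q * a * deriv f (q * a)) / (f a - f (q * a)) ∈ S := by
  have hna : 0 < ‖a‖ := norm_pos_iff.2 ha0
  have hr0 : 0 < r := hna.trans har
  have haD : a ∈ 𝔻 := by rw [mem_DD]; linarith
  have hnq : ‖(q:ℂ)‖ = q := by rw [Complex.norm_real, Real.norm_eq_abs, abs_of_pos hq0]
  have hqaa : ‖(q:ℂ) * a‖ < ‖a‖ := by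
    rw [norm_mul, hnq]; nlinarith
  have hqaD : (q:ℂ) * a ∈ 𝔻 := by rw [mem_DD] at *; linarith
  have hqne : a ≠ q * a := fun h => by rw [← h] at hqaa; exact lt_irrefl _ hqaa
  have hAB : f a - f (q * a) ≠ 0 := sub_ne_zero.2 fun h => hqne (conv_inj f hf haD hqaD h)
  have hq1' : (q:ℂ) ≠ 1 := by exact_mod_cast hq1.ne
  set R' : ℝ := 1 / ‖a‖ with hR'
  have h1R' : 1 / r < R' := one_div_lt_one_div_of_lt hna har
  obtain ⟨R, hR1, hR2⟩ := exists_between h1R'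
  have h1r : 1 ≤ 1 / r := by rw [le_div_iff₀ hr0]; linarith
  have hR : 1 < R := by linarith
  set F : ℂ → ℂ := fun x => f (x * a) with hF
  have hmem : ∀ x ∈ ball (0:ℂ) R', x * a ∈ 𝔻 := by
    intro x hx
    rw [mem_DD, norm_mul]
    simp only [mem_ball_zero_iff, hR'] at hx
    rwa [lt_div_iff₀ hna] at hx
  have hFd : DifferentiableOn ℂ F (ball 0 R') :=
    hf.1.1.comp (differentiableOn_id.mul_const a) hmem
  have hFder : ∀ x ∈ ball (0:ℂ) R', deriv F x = deriv f (x * a) * a := by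
    intro x hx
    have h1 := ((hf.1.1 _ (hmem x hx)).differentiableAt (isOpen_DD.mem_nhds (hmem x hx))).hasDerivAt
    have h2 := h1.comp x ((hasDerivAt_id x).mul_const a)
    have h3 := h2.deriv
    simp only [id, one_mul] at h3
    exact h3
  have m1 : (1:ℂ) ∈ ball (0:ℂ) R' := by
    simp only [mem_ball_zero_iff, norm_one]; linarith
  have mq : (q:ℂ) ∈ ball (0:ℂ) R' := by
    simp only [mem_ball_zero_iff, hnq]; linarith
  set p : ℂ → ℂ := fun x => 1 + x * (dslope F 1 x - dslope F q x) / (f a - f (q * a)) with hp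
  have hpd : DifferentiableOn ℂ p (ball 0 R') := by
    have d1 := (Complex.differentiableOn_dslope (isOpen_ball.mem_nhds m1)).2 hFd
    have dq := (Complex.differentiableOn_dslope (isOpen_ball.mem_nhds mq)).2 hFd
    exact ((differentiableOn_id.mul (d1.sub dq)).div_const _).const_add _
  have hp0 : p 0 = 1 := by simp [hp]
  have hre : ∀ s ∈ sphere (0:ℂ) R, 0 ≤ 2 * (p s).re - 1 := by
    intro s hs
    have hsn : ‖s‖ = R := by simpa using hs
    have hs1 : s ≠ 1 := by rintro rfl; simp at hsn; linarith
    have hsq : s ≠ q := by rintro rfl; rw [hnq] at hsn; linarith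
    have hsa : s * a ∈ 𝔻 := hmem s (by simp only [mem_ball_zero_iff, hsn]; exact hR2)
    have hlt : ‖a‖ < ‖s * a‖ := by rw [norm_mul, hsn]; nlinarith
    have h3 := three_point f hf a (q * a) (s * a) hsa hlt (hqaa.trans hlt) hqne
    have e : 2 * p s - 1 = ((f a - f (s * a)) * ((a + s * a) / (a - s * a)) -
        (f (q * a) - f (s * a)) * ((q * a + s * a) / (q * a - s * a))) / (f a - f (q * a)) := by
      simp only [hp, dslope_of_ne _ hs1, dslope_of_ne _ hsq, slope_def_field, hF, one_mul]
      have n1 : s - 1 ≠ 0 := sub_ne_zero.2 hs1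
      have n2 : s - q ≠ 0 := sub_ne_zero.2 hsq
      have e1 : (a + s * a) / (a - s * a) = -((1 + s) / (s - 1)) := by
        have : a - s * a = -(a * (s - 1)) := by ring
        rw [this]; field_simp
      have e2 : (q * a + s * a) / (q * a - s * a) = -((q + s) / (s - q)) := by
        have : q * a - s * a = -(a * (s - q)) := by ring
        rw [this]; field_simp
      rw [e1, e2]
      clear h3 e1 e2 hp0 hpd hp
      generalize f (q * a) = B at *
      generalize f (s * a) = C at *
      generalize f a = A at *
      field_simp
      ring
    rw [← e] at h3
    simpa using h3
  have hk : ∀ s ∈ sphere (0:ℂ) R, s / (s - 1) + s / (s - q) - 1 ∈ S := by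
    intro s hs
    have hsn : ‖s‖ = R := by simpa using hs
    have hs0 : s ≠ 0 := by rw [← norm_pos_iff, hsn]; linarith
    have hs1 : s ≠ 1 := by rintro rfl; simp at hsn; linarith
    have hsq : s ≠ q := by rintro rfl; rw [hnq] at hsn; linarith
    have n1 : s - 1 ≠ 0 := sub_ne_zero.2 hs1
    have n2 : s - q ≠ 0 := sub_ne_zero.2 hsq
    have := hS s⁻¹ (inv_ne_zero hs0) (by
      rw [norm_inv, hsn, inv_lt_comm₀ (by linarith) hr0, ← one_div]; exact hR1)
    have e1 : 1 / (1 - s⁻¹) = s / (s - 1) := by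
      have : 1 - s⁻¹ = (s - 1) / s := by field_simp
      rw [this, one_div_div]
    have e2 : 1 / (1 - q * s⁻¹) = s / (s - q) := by
      have : 1 - q * s⁻¹ = (s - q) / s := by field_simp
      rw [this, one_div_div]
    rwa [e1, e2] at this
  have hfin := herg_mem p R R' hR hR2 hpd hp0 hre q hq0 hq1 S hSo hSc hk
  convert hfin using 1
  simp only [hp, dslope_same, dslope_of_ne _ hq1', dslope_of_ne _ (Ne.symm hq1'), slope_def_field,
    hFder 1 m1, hFder q mq]
  simp only [hF, one_mul]
  have n1 : (q:ℂ) - 1 ≠ 0 := sub_ne_zero.2 hq1'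
  have n2 : 1 - (q:ℂ) ≠ 0 := sub_ne_zero.2 (Ne.symm hq1')
  have e1 : (f (q * a) - f a) / (q - 1) = (f a - f (q * a)) / (1 - q) := by
    rw [div_eq_div_iff n1 n2]; ring
  rw [e1]
  have key : ∀ A B D1 D2 : ℂ, A - B ≠ 0 → (a * D1 - q * a * D2) / (A - B) =
      1 + 1 * (D1 * a - (A - B) / (1 - q)) / (A - B) +
      (1 + q * ((A - B) / (1 - q) - D2 * a) / (A - B)) - 1 := by
    intro A B D1 D2 h
    field_simp
    ring
  have := key _ _ (deriv f a) (deriv f (q * a)) hAB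
  simpa using this

theorem stmt13 (ψ : ℂ → ℂ) (hψ : MaMinda ψ) (hconv : Convex ℝ (ψ '' 𝔻))
    (q : ℝ) (hq0 : 0 < q) (hq1 : q < 1)
    (r : ℝ) (hr0 : 0 < r) (hr1 : r ≤ 1)
    (hH : StarlikeMM ψ
      (fun z => (((r:ℂ)*z) / ((1 - (q:ℂ)*((r:ℂ)*z)) * (1 - (r:ℂ)*z))) / (r:ℂ)))
    (f : ℂ → ℂ) (hf : IsConvexFn f) :
    StarlikeMM ψ
      (fun z => ((f ((r:ℂ)*z) - f ((q:ℂ)*((r:ℂ)*z))) / (1 - (q:ℂ))) / (r:ℂ)) := by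
  have hq1' : (1:ℂ) - q ≠ 0 := sub_ne_zero.2 (by exact_mod_cast hq1.ne')
  have hr0' : (r:ℂ) ≠ 0 := by exact_mod_cast hr0.ne'
  have hnr : ‖(r:ℂ)‖ = r := by rw [Complex.norm_real, Real.norm_eq_abs, abs_of_pos hr0]
  have hnq : ‖(q:ℂ)‖ = q := by rw [Complex.norm_real, Real.norm_eq_abs, abs_of_pos hq0]
  obtain ⟨hSo, g, hgd, hgf⟩ := inv_holo ψ 1 one_pos hψ.1 hψ.2.1
  have hrz : ∀ z ∈ 𝔻, ‖(r:ℂ) * z‖ < r := by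
    intro z hz; rw [mem_DD] at hz; rw [norm_mul, hnr]; nlinarith
  have hrD : ∀ z ∈ 𝔻, (r:ℂ) * z ∈ 𝔻 := by
    intro z hz; rw [mem_DD]; linarith [hrz z hz]
  have hqD : ∀ z ∈ 𝔻, (q:ℂ) * z ∈ 𝔻 := by
    intro z hz; rw [mem_DD] at *; rw [norm_mul, hnq]; nlinarith [norm_nonneg z]
  -- values of the logarithmic derivative of `H`
  have hS : ∀ y : ℂ, y ≠ 0 → ‖y‖ < r → 1 / (1 - y) + 1 / (1 - q * y) - 1 ∈ ψ '' 𝔻 := by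
    intro y hy0 hyr
    obtain ⟨-, -, ω, -, -, hω, hval⟩ := hH
    set z : ℂ := y / r with hz
    have hzr : (r:ℂ) * z = y := by rw [hz]; field_simp
    have hzD : z ∈ 𝔻 := by
      rw [mem_DD, hz, norm_div, hnr, div_lt_one hr0]; exact hyr
    have hz0 : z ≠ 0 := div_ne_zero hy0 hr0'
    refine ⟨ω z, hω z hzD, ?_⟩
    rw [← hval z hzD]
    simp only [if_neg hz0]
    have hyD : y ∈ 𝔻 := by rw [mem_DD]; linarith
    have n1 : 1 - y ≠ 0 := by
      intro h; rw [sub_eq_zero] at h; rw [mem_DD, ← h] at hyD; simp at hyD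
    have n2 : 1 - q * y ≠ 0 := by
      have := hqD y hyD
      intro h; rw [sub_eq_zero] at h; rw [mem_DD, ← h] at this; simp at this
    have hid : HasDerivAt (fun z : ℂ => (r:ℂ) * z) r z := by
      simpa using (hasDerivAt_id z).const_mul (r:ℂ)
    have hden := ((hid.const_mul (q:ℂ)).const_sub 1).mul (hid.const_sub 1)
    have hder := (hid.div hden (by
      simp only [Pi.mul_apply]; rw [hzr]; exact mul_ne_zero n2 n1)).div_const (r:ℂ)
    have hder' := hder.deriv
    have hfn : (fun z : ℂ => (((r:ℂ)*z) / ((1 - (q:ℂ)*((r:ℂ)*z)) * (1 - (r:ℂ)*z))) / (r:ℂ)) =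
      fun x => ((fun z : ℂ => (r:ℂ) * z) / ((fun x => 1 - (q:ℂ) * (r * x)) * fun x : ℂ => 1 - r * x)) x / r := by
      ext x; simp
    rw [hfn, hder', hzr]
    simp only [Pi.mul_apply, hzr]
    have hzz : z = y / r := hz
    have n2' : 1 - y * q ≠ 0 := by rwa [mul_comm]
    rw [hzz]
    field_simp
    ring
  set G : ℂ → ℂ := fun z => ((f ((r:ℂ)*z) - f ((q:ℂ)*((r:ℂ)*z))) / (1 - (q:ℂ))) / (r:ℂ) with hG
  have hGder : ∀ z ∈ 𝔻, HasDerivAt G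
      ((deriv f (r * z) - q * deriv f (q * (r * z))) / (1 - q)) z := by
    intro z hz
    have hid : HasDerivAt (fun z : ℂ => (r:ℂ) * z) r z := by
      simpa using (hasDerivAt_id z).const_mul (r:ℂ)
    have h1 := ((hf.1.1 _ (hrD z hz)).differentiableAt
      (isOpen_DD.mem_nhds (hrD z hz))).hasDerivAt.comp z hid
    have h2 := ((hf.1.1 _ (hqD _ (hrD z hz))).differentiableAt
      (isOpen_DD.mem_nhds (hqD _ (hrD z hz)))).hasDerivAt.comp z (hid.const_mul (q:ℂ))
    refine (((h1.sub h2).div_const (1 - (q:ℂ))).div_const (r:ℂ)).congr_deriv ?_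
    field_simp
  have hGd : DifferentiableOn ℂ G 𝔻 := fun z hz =>
    (hGder z hz).differentiableAt.differentiableWithinAt
  have h0D : (0:ℂ) ∈ 𝔻 := by rw [mem_DD]; simp
  have hG0 : G 0 = 0 := by simp [hG]
  have hG1 : deriv G 0 = 1 := by
    rw [(hGder 0 h0D).deriv]
    simp [hf.1.2.2, hq1']
  have hGne : ∀ z ∈ 𝔻, z ≠ 0 → G z ≠ 0 := by
    intro z hz hz0 h
    simp only [hG, div_eq_zero_iff, hq1', hr0', or_false, sub_eq_zero] at h
    have h2 := conv_inj f hf (hrD z hz) (hqD _ (hrD z hz)) h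
    have h3 : (r:ℂ) * z ≠ 0 := mul_ne_zero hr0' hz0
    have h4 : (1 - (q:ℂ)) * (r * z) = 0 := by linear_combination h2
    exact mul_ne_zero hq1' h3 h4
  refine ⟨⟨hGd, hG0, hG1⟩, hGne, ?_⟩
  set K : ℂ → ℂ := fun z => if z = 0 then 1 else z * deriv G z / G z with hK
  have hKS : ∀ z ∈ 𝔻, K z ∈ ψ '' 𝔻 := by
    intro z hz
    by_cases hz0 : z = 0
    · simp only [hK, hz0, if_true]
      exact ⟨0, h0D, hψ.2.2.2.1⟩
    · simp only [hK, if_neg hz0]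
      have h1 := core_s13 f hf q r hq0 hq1 hr1 (r * z) (mul_ne_zero hr0' hz0) (hrz z hz) (ψ '' 𝔻)
        hSo hconv hS
      convert h1 using 1
      have h2 : f (r * z) - f (q * (r * z)) ≠ 0 := by
        intro h
        exact hGne z hz hz0 (by simp [hG, h])
      rw [(hGder z hz).deriv]
      simp only [hG]
      field_simp
  have hKd : DifferentiableOn ℂ K 𝔻 := by
    have hm : DifferentiableOn ℂ (dslope G 0) 𝔻 :=
      (Complex.differentiableOn_dslope (isOpen_DD.mem_nhds h0D)).2 hGd
    have hmne : ∀ z ∈ 𝔻, dslope G 0 z ≠ 0 := by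
      intro z hz
      by_cases hz0 : z = 0
      · rw [hz0, dslope_same, hG1]; exact one_ne_zero
      · rw [dslope_of_ne _ hz0, slope_def_field, hG0, sub_zero, sub_zero]
        exact div_ne_zero (hGne z hz hz0) hz0
    refine ((hGd.deriv isOpen_DD).div hm hmne).congr ?_
    intro z hz
    by_cases hz0 : z = 0
    · simp [hK, hz0, hG1]
    · simp only [hK, if_neg hz0, dslope_of_ne _ hz0, slope_def_field, hG0, sub_zero, Pi.div_apply]
      have := hGne z hz hz0
      field_simp
  refine ⟨fun z => g (K z), hgd.comp hKd hKS, ?_, ?_, ?_⟩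
  · simp only [hK, if_true]
    rw [← hψ.2.2.2.1]
    exact hgf 0 h0D
  · intro z hz
    obtain ⟨y, hy, hyz⟩ := hKS z hz
    simp only [← hyz]
    rw [hgf y hy]; exact hy
  · intro z hz
    obtain ⟨y, hy, hyz⟩ := hKS z hz
    simp only [← hyz]
    rw [hgf y hy]
end
end

section
/- Let 0 < q < 1 and let α satisfy (1 − q)/(2(1 + q)) ≤ α < 1. Set r_α = (√(α²(1 − q)² + 4q) − α(1 + q))/(2q(1 + α)). If f is a convex function (f ∈ C), then G(z) = (f(z) − f(qz))/(1 − q) satisfies G(z) ≠ 0 and Re(zG'(z)/G(z)) > α for all z with 0 < |z| < r_α; that is, z·d_q f(z) is starlike of order α on |z| < r_α. -/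
open Complex Metric Set

noncomputable section

open Topology Filter

lemma q_deriv_diff {f : ℂ → ℂ} (hf : DifferentiableOn ℂ f (ball 0 1)) :
    DifferentiableOn ℂ (deriv f) (ball 0 1) := hf.deriv isOpen_ball

lemma q_hasDeriv {f : ℂ → ℂ} (hf : DifferentiableOn ℂ f (ball 0 1)) {z : ℂ}
    (hz : z ∈ ball (0:ℂ) 1) : HasDerivAt f (deriv f z) z :=
  (hf.differentiableAt (isOpen_ball.mem_nhds hz)).hasDerivAt

/-- A holomorphic logarithm of the derivative. -/
lemma q_log {f : ℂ → ℂ} (hf : IsConvexFn f) :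
    ∃ L : ℂ → ℂ, (∀ z ∈ ball (0:ℂ) 1, HasDerivAt L (deriv (deriv f) z / deriv f z) z) ∧
      ∀ z ∈ ball (0:ℂ) 1, deriv f z = exp (L z) := by
  obtain ⟨⟨hd, h0, h1⟩, hne, hre⟩ := hf
  have hd1 := q_deriv_diff hd
  have hd2 := q_deriv_diff hd1
  obtain ⟨L, hL0, hL⟩ := (hd2.div hd1 hne).isExactOn_ball.with_val_at 0 0
  refine ⟨L, hL, ?_⟩
  have hder : ∀ z ∈ ball (0:ℂ) 1, HasDerivAt (fun z => deriv f z * exp (-L z)) 0 z := by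
    intro z hz
    have h := (q_hasDeriv hd1 hz).mul ((hL z hz).neg.cexp)
    refine h.congr_deriv ?_
    have := hne z hz
    simp only [Pi.div_apply]
    field_simp
    ring
  have hconst := fun {x y : ℂ} => isOpen_ball.is_const_of_deriv_eq_zero (f := fun z => deriv f z * exp (-L z))
    (convex_ball (0:ℂ) 1).isPreconnected
    (fun z hz => (hder z hz).differentiableAt.differentiableWithinAt)
    (fun z hz => (hder z hz).deriv) (x := x) (y := y)
  intro z hz
  have := hconst hz (mem_ball_self one_pos)
  simp only [hL0, h1, neg_zero, exp_zero, mul_one] at this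
  rw [Complex.exp_neg] at this
  have he := exp_ne_zero (L z)
  field_simp at this
  exact this

lemma q_circle {f : ℂ → ℂ} (hf : IsConvexFn f) {z : ℂ} (hz0 : z ≠ 0) (hz : z ∈ ball (0:ℂ) 1)
    {θ : ℝ} (hθ0 : 0 < θ) (hθ1 : θ < 2 * Real.pi) :
    0 < ((f z - f (z * exp (θ * I))) * (starRingEnd ℂ) (z * deriv f z)).re := by
  obtain ⟨L, hL, hexp⟩ := q_log hf
  obtain ⟨⟨hd, h0, h1⟩, hne, hre⟩ := hf
  set c : ℝ → ℂ := fun x => z * exp (x * I) with hc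
  have hcb : ∀ x, c x ∈ ball (0:ℂ) 1 := by
    intro x
    simpa [hc, norm_exp_ofReal_mul_I] using hz
  have hcd : ∀ x : ℝ, HasDerivAt c (c x * I) x := by
    intro x
    have h2 : HasDerivAt (fun y : ℝ => (y:ℂ) * I) (1 * I) x :=
      (hasDerivAt_id x).ofReal_comp.mul_const I
    have := (h2.cexp).const_mul z
    refine this.congr_deriv ?_
    simp [hc]; ring
  have hc0 : c 0 = z := by simp [hc]
  have hc2 : c (2 * Real.pi) = z := by simp [hc]
  set ψ : ℝ → ℝ := fun x => x + (L (c x)).im - (L z).im with hψ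
  have hψd : ∀ x, HasDerivAt ψ (1 + (c x * deriv (deriv f) (c x) / deriv f (c x)).re) x := by
    intro x
    have h2 := (hL _ (hcb x)).comp x (hcd x)
    have h3 := (Complex.imCLM.hasFDerivAt.comp_hasDerivAt x h2)
    have h4 := ((hasDerivAt_id x).add h3).sub_const (L z).im
    refine h4.congr_deriv ?_
    have : deriv (deriv f) (c x) / deriv f (c x) * (c x * I)
      = (c x * deriv (deriv f) (c x) / deriv f (c x)) * I := by ring
    simp only [Complex.imCLM_apply]
    rw [this, Complex.mul_I_im]
  have hψpos : ∀ x, 0 < 1 + (c x * deriv (deriv f) (c x) / deriv f (c x)).re := by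
    intro x
    have := hre _ (hcb x)
    simpa using this
  have hψmono : StrictMono ψ := strictMono_of_deriv_pos (fun x => by
    rw [(hψd x).deriv]; exact hψpos x)
  have hψcont : Continuous ψ := continuous_iff_continuousAt.2 fun x => (hψd x).continuousAt
  have hψ0 : ψ 0 = 0 := by simp [hψ, hc0]
  have hψ2 : ψ (2 * Real.pi) = 2 * Real.pi := by simp [hψ, hc2]
  have hpi := Real.pi_pos
  obtain ⟨x0, hx0, hx0e⟩ : ∃ x0 ∈ Icc 0 (2 * Real.pi), ψ x0 = Real.pi := by
    have := intermediate_value_Icc (by positivity : (0:ℝ) ≤ 2 * Real.pi) hψcont.continuousOn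
    exact this ⟨by rw [hψ0]; linarith, by rw [hψ2]; linarith⟩
  set g : ℝ → ℝ := fun x => ((f z - f (c x)) * (starRingEnd ℂ) (z * deriv f z)).re with hg
  set A : ℝ → ℝ := fun x => ‖z‖ ^ 2 * Real.exp ((L (c x)).re + (L z).re) with hA
  have hApos : ∀ x, 0 < A x := fun x => by
    have : 0 < ‖z‖ := norm_pos_iff.2 hz0
    positivity
  have hgd : ∀ x, HasDerivAt g (A x * Real.sin (ψ x)) x := by
    intro x
    have h2 := (q_hasDeriv hd (hcb x)).comp x (hcd x)
    have h3 := (h2.const_sub (f z)).mul_const ((starRingEnd ℂ) (z * deriv f z))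
    have h4 := (Complex.reCLM.hasFDerivAt.comp_hasDerivAt x h3)
    refine h4.congr_deriv ?_
    rw [hexp _ (hcb x), hexp _ hz]
    have e1 : -(exp (L (c x)) * (c x * I)) * (starRingEnd ℂ) (z * exp (L z))
        = -(((‖z‖ ^ 2 : ℝ) : ℂ) * exp (((L (c x)).re + (L z).re : ℝ) + (ψ x : ℝ) * I)) * I := by
      have e2 : ((((L (c x)).re + (L z).re : ℝ) : ℂ) + (ψ x : ℝ) * I)
          = L (c x) + (x * I) + (starRingEnd ℂ) (L z) := by
        apply Complex.ext <;> simp [hψ]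
        ring
      rw [e2, Complex.exp_add, Complex.exp_add, map_mul, ← Complex.exp_conj]
      have e3 : ((‖z‖ ^ 2 : ℝ) : ℂ) = z * (starRingEnd ℂ) z := by
        rw [Complex.mul_conj, Complex.normSq_eq_norm_sq]
      rw [e3]; simp only [hc]; ring
    simp only [Complex.reCLM_apply]
    rw [e1, Complex.mul_I_re, Complex.neg_im, neg_neg, Complex.im_ofReal_mul]
    simp [Complex.exp_im, hA, mul_assoc]
  have hgcont : Continuous g := continuous_iff_continuousAt.2 fun x => (hgd x).continuousAt
  have hg0 : g 0 = 0 := by simp [hg, hc0]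
  have hg2 : g (2 * Real.pi) = 0 := by simp [hg, hc2]
  have hm1 : StrictMonoOn g (Icc 0 x0) := by
    apply strictMonoOn_of_deriv_pos (convex_Icc _ _) hgcont.continuousOn
    intro x hx
    rw [interior_Icc] at hx
    rw [(hgd x).deriv]
    refine mul_pos (hApos x) (Real.sin_pos_of_pos_of_lt_pi ?_ ?_)
    · rw [← hψ0]; exact hψmono hx.1
    · rw [← hx0e]; exact hψmono hx.2
  have hm2 : StrictAntiOn g (Icc x0 (2 * Real.pi)) := by
    apply strictAntiOn_of_deriv_neg (convex_Icc _ _) hgcont.continuousOn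
    intro x hx
    rw [interior_Icc] at hx
    rw [(hgd x).deriv]
    have a1 : Real.pi < ψ x := by rw [← hx0e]; exact hψmono hx.1
    have a2 : ψ x < 2 * Real.pi := by rw [← hψ2]; exact hψmono hx.2
    have : Real.sin (ψ x) < 0 := by
      rw [← Real.sin_sub_two_pi]
      exact Real.sin_neg_of_neg_of_neg_pi_lt (by linarith) (by linarith)
    exact mul_neg_of_pos_of_neg (hApos x) this
  change 0 < g θ
  rcases le_total θ x0 with h | h
  · rw [← hg0]
    exact hm1 ⟨le_rfl, hx0.1⟩ ⟨hθ0.le, h⟩ hθ0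
  · rw [← hg2]
    exact hm2 ⟨h, hθ1.le⟩ ⟨hx0.2, le_rfl⟩ hθ1

lemma q_circle' {f : ℂ → ℂ} (hf : IsConvexFn f) {z ζ : ℂ} (hz : z ∈ ball (0:ℂ) 1)
    (hn : ‖ζ‖ = ‖z‖) (hne : ζ ≠ z) :
    0 < ((f z - f ζ) * (starRingEnd ℂ) (z * deriv f z)).re := by
  have hz0 : z ≠ 0 := by
    rintro rfl
    apply hne
    simpa using hn
  have hu : ‖ζ / z‖ = 1 := by
    rw [norm_div, hn, div_self (norm_ne_zero_iff.2 hz0)]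
  have he : ζ = z * exp ((ζ / z).arg * I) := by
    have := Complex.norm_mul_exp_arg_mul_I (ζ / z)
    rw [hu] at this
    simp only [ofReal_one, one_mul] at this
    rw [this]; field_simp
  have hpi := Real.pi_pos
  have h1 := Complex.neg_pi_lt_arg (ζ / z)
  have h2 := Complex.arg_le_pi (ζ / z)
  set t := (ζ / z).arg with ht
  have ht0 : t ≠ 0 := by
    intro h
    apply hne
    rw [he, h]; simp
  rcases lt_or_gt_of_ne ht0 with h | h
  · have := q_circle hf hz0 hz (θ := t + 2 * Real.pi) (by linarith) (by linarith)
    have e : exp (((t + 2 * Real.pi : ℝ) : ℂ) * I) = exp (t * I) := by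
      push_cast
      rw [add_mul, Complex.exp_add, Complex.exp_two_pi_mul_I, mul_one]
    rw [e, ← he] at this
    exact this
  · have := q_circle hf hz0 hz (θ := t) (by linarith) (by linarith)
    rwa [← he] at this

lemma q_inj_aux {f : ℂ → ℂ} (hf : IsConvexFn f) {z ζ : ℂ} (hz : z ∈ ball (0:ℂ) 1)
    (hn : ‖ζ‖ < ‖z‖) : f z ≠ f ζ := by
  intro heq
  have hz1 : ‖z‖ < 1 := by simpa using hz
  have hz0 : ‖z‖ ≠ 0 := by
    have := norm_nonneg ζ
    linarith
  set a := (starRingEnd ℂ) (z * deriv f z) with ha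
  set h : ℂ → ℂ := fun w => exp (f w * a) with hh
  have hd : DifferentiableOn ℂ h (closedBall 0 ‖z‖) :=
    ((hf.1.1.mono (closedBall_subset_ball hz1)).mul_const a).cexp
  have hdc : DiffContOnCl ℂ h (ball 0 ‖z‖) := hd.diffContOnCl_ball le_rfl
  have hnorm : ∀ w, ‖h w‖ = Real.exp ((f w * a).re) := fun w => Complex.norm_exp _
  have hbd : ∀ w ∈ sphere (0:ℂ) ‖z‖, ‖h w‖ ≤ ‖h z‖ := by
    intro w hw
    rcases eq_or_ne w z with rfl | hwz
    · rfl
    · have := q_circle' hf hz (by simpa using hw) hwz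
      rw [sub_mul, Complex.sub_re] at this
      rw [hnorm, hnorm, Real.exp_le_exp]
      linarith
  have hmax : IsMaxOn (norm ∘ h) (ball 0 ‖z‖) ζ := by
    intro w hw
    have : ‖h w‖ ≤ ‖h z‖ := by
      refine norm_le_of_forall_mem_frontier_norm_le isBounded_ball hdc ?_ (subset_closure hw)
      rw [frontier_ball _ hz0]
      exact hbd
    have e : h ζ = h z := by simp [hh, heq]
    simpa [e] using this
  have hcon := norm_eqOn_closure_of_isPreconnected_of_isMaxOn
    (convex_ball (0:ℂ) ‖z‖).isPreconnected isOpen_ball hdc (by simpa using hn) hmax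
  rw [closure_ball _ hz0] at hcon
  have h1 := hcon (x := -z) (by simp)
  have h2 := q_circle' hf hz (ζ := -z) (by simp) (by
    intro h
    apply hz0
    have : z = 0 := by
      have h3 : (2:ℂ) * z = 0 := by linear_combination -h
      simpa using h3
    simp [this])
  simp only [Function.comp, Function.const, hnorm, Real.exp_eq_exp, ← heq] at h1
  rw [sub_mul, Complex.sub_re] at h2
  linarith

lemma q_inj {f : ℂ → ℂ} (hf : IsConvexFn f) {z ζ : ℂ} (hz : z ∈ ball (0:ℂ) 1)
    (hζ : ζ ∈ ball (0:ℂ) 1) (hne : ζ ≠ z) : f z ≠ f ζ := by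
  rcases lt_trichotomy ‖ζ‖ ‖z‖ with h | h | h
  · exact q_inj_aux hf hz h
  · intro heq
    have := q_circle' hf hz h hne
    simp [heq] at this
  · exact (q_inj_aux hf hζ h).symm

lemma q_max {H : ℂ → ℂ} (hH : DifferentiableOn ℂ H (ball 0 1)) {ρ : ℝ} (h0 : 0 < ρ) (h1 : ρ < 1)
    (hs : ∀ w ∈ sphere (0:ℂ) ρ, 0 ≤ (H w).re) {w : ℂ} (hw : w ∈ ball (0:ℂ) ρ) : 0 ≤ (H w).re := by
  have hd : DifferentiableOn ℂ (fun w => exp (-H w)) (closedBall 0 ρ) :=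
    ((hH.mono (closedBall_subset_ball h1)).neg).cexp
  have hdc : DiffContOnCl ℂ (fun w => exp (-H w)) (ball 0 ρ) := hd.diffContOnCl_ball le_rfl
  have : ‖exp (-H w)‖ ≤ 1 := by
    refine norm_le_of_forall_mem_frontier_norm_le (f := fun w => exp (-H w)) isBounded_ball hdc ?_
      (subset_closure hw)
    rw [frontier_ball _ h0.ne']
    intro v hv
    rw [Complex.norm_exp, Real.exp_le_one_iff]
    simpa using hs v hv
  rw [Complex.norm_exp, Real.exp_le_one_iff] at this
  simpa using this

/-- The Suffridge kernel. -/
def qH (f : ℂ → ℂ) (z ζ : ℂ) : ℂ := 2 * z * deriv f z / (f z - f ζ) - (z + ζ) / (z - ζ)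

lemma q_A {f : ℂ → ℂ} (hf : IsConvexFn f) {z ζ : ℂ} (hz : z ∈ ball (0:ℂ) 1)
    (hn : ‖ζ‖ = ‖z‖) (hne : ζ ≠ z) : 0 ≤ (qH f z ζ).re := by
  have h1 := q_circle' hf hz hn hne
  have e1 : ((z + ζ) / (z - ζ)).re = 0 := by
    have hsq : ‖ζ‖ ^ 2 = ‖z‖ ^ 2 := by rw [hn]
    rw [← Complex.normSq_eq_norm_sq, ← Complex.normSq_eq_norm_sq, Complex.normSq_apply,
      Complex.normSq_apply] at hsq
    rw [Complex.div_re, ← add_div]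
    rw [div_eq_zero_iff]; left
    simp
    linarith
  have e2 : (2 * z * deriv f z / (f z - f ζ)).re
      = 2 * ((f z - f ζ) * (starRingEnd ℂ) (z * deriv f z)).re / normSq (f z - f ζ) := by
    rw [mul_assoc, Complex.div_re, ← add_div]
    congr 1
    simp
    ring
  rw [qH, Complex.sub_re, e1, e2, sub_zero]
  have := Complex.normSq_nonneg (f z - f ζ)
  positivity

def qK (f : ℂ → ℂ) (z ζ : ℂ) : ℂ := 1 + 2 * z * dslope (dslope f z) z ζ / dslope f z ζ

def qJ (f : ℂ → ℂ) (ζ z : ℂ) : ℂ :=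
  1 + 2 * z * dslope (fun w => deriv f w - dslope f ζ w) ζ z / dslope f ζ z

lemma q_dslope_ne {f : ℂ → ℂ} (hf : IsConvexFn f) {z ζ : ℂ} (hz : z ∈ ball (0:ℂ) 1)
    (hζ : ζ ∈ ball (0:ℂ) 1) : dslope f z ζ ≠ 0 := by
  rcases eq_or_ne ζ z with rfl | h
  · rw [dslope_same]; exact hf.2.1 _ hz
  · rw [dslope_of_ne _ h, slope_def_field]
    exact div_ne_zero (sub_ne_zero.2 (q_inj hf hz hζ h).symm) (sub_ne_zero.2 h)

lemma q_dslope_diff {f : ℂ → ℂ} (hf : DifferentiableOn ℂ f (ball 0 1)) {z : ℂ}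
    (hz : z ∈ ball (0:ℂ) 1) : DifferentiableOn ℂ (dslope f z) (ball 0 1) :=
  (differentiableOn_dslope (isOpen_ball.mem_nhds hz)).2 hf

lemma qK_diff {f : ℂ → ℂ} (hf : IsConvexFn f) {z : ℂ} (hz : z ∈ ball (0:ℂ) 1) :
    DifferentiableOn ℂ (qK f z) (ball 0 1) := by
  have h1 := q_dslope_diff hf.1.1 hz
  have h2 := q_dslope_diff h1 hz
  exact (((h2.const_mul (2 * z)).div h1 (fun ζ hζ => q_dslope_ne hf hz hζ))).const_add 1

lemma qJ_diff {f : ℂ → ℂ} (hf : IsConvexFn f) {ζ : ℂ} (hζ : ζ ∈ ball (0:ℂ) 1) :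
    DifferentiableOn ℂ (qJ f ζ) (ball 0 1) := by
  have h1 := q_dslope_diff hf.1.1 hζ
  have h2 := q_dslope_diff ((q_deriv_diff hf.1.1).sub h1) hζ
  exact (((differentiableOn_id.const_mul 2).mul h2).div h1
    (fun z hz => q_dslope_ne hf hζ hz)).const_add 1

lemma qK_eq {f : ℂ → ℂ} (hf : IsConvexFn f) {z ζ : ℂ} (hz : z ∈ ball (0:ℂ) 1)
    (hζ : ζ ∈ ball (0:ℂ) 1) (hne : ζ ≠ z) : qK f z ζ = qH f z ζ := by
  have h1 : f ζ - f z ≠ 0 := sub_ne_zero.2 (q_inj hf hz hζ hne).symm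
  have h2 : f z - f ζ ≠ 0 := sub_ne_zero.2 (q_inj hf hz hζ hne)
  have h3 : ζ - z ≠ 0 := sub_ne_zero.2 hne
  have h4 : z - ζ ≠ 0 := sub_ne_zero.2 hne.symm
  rw [qK, qH, dslope_of_ne _ hne, slope_def_field, dslope_same, dslope_of_ne _ hne,
    slope_def_field]
  field_simp
  ring

lemma qJ_eq {f : ℂ → ℂ} (hf : IsConvexFn f) {z ζ : ℂ} (hz : z ∈ ball (0:ℂ) 1)
    (hζ : ζ ∈ ball (0:ℂ) 1) (hne : ζ ≠ z) : qJ f ζ z = qH f z ζ := by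
  have h1 : f ζ - f z ≠ 0 := sub_ne_zero.2 (q_inj hf hz hζ hne).symm
  have h2 : f z - f ζ ≠ 0 := sub_ne_zero.2 (q_inj hf hz hζ hne)
  have h3 : ζ - z ≠ 0 := sub_ne_zero.2 hne
  have h4 : z - ζ ≠ 0 := sub_ne_zero.2 hne.symm
  rw [qJ, qH, dslope_of_ne _ hne.symm, slope_def_field, dslope_same, dslope_of_ne _ hne.symm,
    slope_def_field]
  field_simp
  ring

lemma q_B {f : ℂ → ℂ} (hf : IsConvexFn f) {z ζ : ℂ} (hz : z ∈ ball (0:ℂ) 1)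
    (hn : ‖ζ‖ < ‖z‖) : 0 ≤ (qH f z ζ).re := by
  have hz1 : ‖z‖ < 1 := by simpa using hz
  have hz0 : 0 < ‖z‖ := (norm_nonneg _).trans_lt hn
  have hζ : ζ ∈ ball (0:ℂ) 1 := by simpa using hn.trans hz1
  have hne : ζ ≠ z := by rintro rfl; exact lt_irrefl _ hn
  rw [← qK_eq hf hz hζ hne]
  have hoff : ∀ w, ‖w‖ = ‖z‖ → w ≠ z → 0 ≤ (qK f z w).re := by
    intro w hw hwz
    rw [qK_eq hf hz (by simpa [hw] using hz1) hwz]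
    exact q_A hf hz hw hwz
  refine q_max (qK_diff hf hz) hz0 hz1 ?_ (by simpa using hn)
  intro w hw
  have hw : ‖w‖ = ‖z‖ := by simpa using hw
  rcases eq_or_ne w z with rfl | hwz
  swap
  · exact hoff w hw hwz
  have hcont : ContinuousAt (qK f w) w :=
    ((qK_diff hf hz).differentiableAt (isOpen_ball.mem_nhds hz)).continuousAt
  have hc : Tendsto (fun t : ℝ => w * exp (t * I)) (𝓝[>] 0) (𝓝 w) := by
    have : Continuous (fun t : ℝ => w * exp (t * I)) := by fun_prop
    have h := this.tendsto 0
    simp only [ofReal_zero, zero_mul, exp_zero, mul_one] at h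
    exact h.mono_left nhdsWithin_le_nhds
  have hlim := (Complex.continuous_re.tendsto _).comp (hcont.tendsto.comp hc)
  refine ge_of_tendsto hlim ?_
  have hpi := Real.pi_pos
  filter_upwards [Ioo_mem_nhdsGT (show (0:ℝ) < 2 * Real.pi by positivity)] with t ht
  apply hoff
  · simp [norm_exp_ofReal_mul_I]
  · intro h
    have := q_circle hf (norm_pos_iff.1 hz0) hz ht.1 ht.2
    have h' : w * exp (t * I) = w := h
    rw [h'] at this
    simp at this

lemma q_C {f : ℂ → ℂ} (hf : IsConvexFn f) {z ζ : ℂ} (hz : z ∈ ball (0:ℂ) 1)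
    (hζ : ζ ∈ ball (0:ℂ) 1) : 0 ≤ (qJ f ζ z).re := by
  have hz1 : ‖z‖ < 1 := by simpa using hz
  have hζ1 : ‖ζ‖ < 1 := by simpa using hζ
  obtain ⟨ρ, hρ, hρ1⟩ := exists_between (max_lt hz1 hζ1)
  have hρz := (le_max_left _ _).trans_lt hρ
  have hρζ := (le_max_right _ _).trans_lt hρ
  refine q_max (qJ_diff hf hζ) ((norm_nonneg _).trans_lt hρz) hρ1 ?_ (by simpa using hρz)
  intro w hw
  have hw : ‖w‖ = ρ := by simpa using hw
  have hwb : w ∈ ball (0:ℂ) 1 := by simpa [hw] using hρ1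
  rw [qJ_eq hf hwb hζ (by rintro rfl; linarith)]
  exact q_B hf hwb (by rw [hw]; exact hρζ)

lemma q_harnack {H : ℂ → ℂ} (hH : DifferentiableOn ℂ H (ball 0 1)) (h0 : H 0 = 1)
    (hp : ∀ w ∈ ball (0:ℂ) 1, 0 ≤ (H w).re) {w : ℂ} (hw : w ∈ ball (0:ℂ) 1) :
    (1 - ‖w‖) / (1 + ‖w‖) ≤ (H w).re := by
  have hw1 : ‖w‖ < 1 := by simpa using hw
  have hne : ∀ v ∈ ball (0:ℂ) 1, H v + 1 ≠ 0 := by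
    intro v hv h
    have := congrArg Complex.re h
    have := hp v hv
    simp at *
    linarith
  have hkey : ‖(H w - 1) / (H w + 1)‖ ≤ ‖w‖ := by
    refine norm_le_norm_of_mapsTo_ball (f := fun v => (H v - 1) / (H v + 1)) (R := 1)
      ((hH.sub_const 1).div (hH.add_const 1) hne) ?_ (by simp [h0]) hw1
    intro v hv
    have h := hp v hv
    simp only [mem_closedBall, dist_zero_right, norm_div]
    refine div_le_one_of_le₀ ?_ (norm_nonneg _)
    rw [← sq_le_sq₀ (norm_nonneg _) (norm_nonneg _), ← Complex.normSq_eq_norm_sq,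
      ← Complex.normSq_eq_norm_sq, Complex.normSq_apply, Complex.normSq_apply]
    simp
    nlinarith
  rw [norm_div, div_le_iff₀ (norm_pos_iff.2 (hne w hw))] at hkey
  have hsq := pow_le_pow_left₀ (norm_nonneg _) hkey 2
  rw [mul_pow, ← Complex.normSq_eq_norm_sq (H w - 1),
      ← Complex.normSq_eq_norm_sq (H w + 1), Complex.normSq_apply, Complex.normSq_apply] at hsq
  simp at hsq
  have hx := hp w hw
  set x := (H w).re
  set y := (H w).im
  set r := ‖w‖
  have hr : 0 ≤ r := norm_nonneg w
  rw [div_le_iff₀ (by positivity)]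
  by_contra hcon
  push Not at hcon
  have hy : 0 ≤ (1 - r ^ 2) * (y * y) := mul_nonneg (by nlinarith) (mul_self_nonneg y)
  have h3 : (1 - x) ^ 2 ≤ (r * (x + 1)) ^ 2 := by nlinarith
  have h4 : r * (x + 1) < 1 - x := by nlinarith
  have h5 : 0 ≤ r * (x + 1) := by positivity
  nlinarith

lemma q_D {f : ℂ → ℂ} (hf : IsConvexFn f) {z ζ : ℂ} (hz : z ∈ ball (0:ℂ) 1)
    (hζ : ζ ∈ ball (0:ℂ) 1) (hne : ζ ≠ z) : (1 - ‖z‖) / (1 + ‖z‖) ≤ (qH f z ζ).re := by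
  rw [← qJ_eq hf hz hζ hne]
  exact q_harnack (qJ_diff hf hζ) (by simp [qJ]) (fun w hw => q_C hf hw hζ) hz

lemma q_alg {q α r : ℝ} (hq0 : 0 < q) (hq1 : q < 1)
    (hα1 : (1 - q)/(2*(1+q)) ≤ α) (hr0 : 0 < r)
    (hr : r < (Real.sqrt (α^2*(1-q)^2 + 4*q) - α*(1+q)) / (2*q*(1+α))) :
    r < 1 ∧ α < ((1 - r) / (1 + r) + (1 - q * r) / (1 + q * r)) / 2 := by
  have hα0 : 0 < α := lt_of_lt_of_le (div_pos (by linarith) (by linarith)) hα1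
  rw [div_le_iff₀ (by linarith)] at hα1
  rw [lt_div_iff₀ (by positivity)] at hr
  have h1 : r * (2*q*(1+α)) + α*(1+q) < Real.sqrt (α^2*(1-q)^2 + 4*q) := by linarith
  have h2 := (Real.lt_sqrt (by positivity)).1 h1
  have h3 : q*(1+α)*r^2 + α*(1+q)*r - (1-α) < 0 := by
    have h4 : 4 * q * (1+α) * (q*(1+α)*r^2 + α*(1+q)*r - (1-α)) < 0 := by nlinarith
    by_contra h
    push Not at h
    have : 0 ≤ 4 * q * (1+α) * (q*(1+α)*r^2 + α*(1+q)*r - (1-α)) := by positivity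
    linarith
  constructor
  · by_contra h
    push Not at h
    have a : 0 ≤ q*(1+α)*(r^2-1) := mul_nonneg (by positivity) (by nlinarith)
    have b : 0 ≤ α*(1+q)*(r-1) := mul_nonneg (by positivity) (by linarith)
    nlinarith
  · have e : ((1 - r) / (1 + r) + (1 - q * r) / (1 + q * r)) / 2
      = (1 - q * r^2) / ((1 + r) * (1 + q * r)) := by
      have : 1 + r ≠ 0 := by positivity
      have : 1 + q * r ≠ 0 := by positivity
      field_simp
      ring
    rw [e, lt_div_iff₀ (by positivity)]
    nlinarith

theorem stmt14 (q α : ℝ) (hq0 : 0 < q) (hq1 : q < 1)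
    (hα1 : (1 - q)/(2*(1+q)) ≤ α) (hα2 : α < 1)
    (f : ℂ → ℂ) (hf : IsConvexFn f) :
    ∀ z : ℂ, 0 < ‖z‖ →
      ‖z‖ < (Real.sqrt (α^2*(1-q)^2 + 4*q) - α*(1+q)) / (2*q*(1+α)) →
      (f z - f ((q:ℂ)*z)) / (1 - (q:ℂ)) ≠ 0 ∧
        α < (z * deriv (fun w => (f w - f ((q:ℂ)*w)) / (1 - (q:ℂ))) z /
          ((f z - f ((q:ℂ)*z)) / (1 - (q:ℂ)))).re := by
  intro z hz0 hzr
  obtain ⟨hz1, hα⟩ := q_alg hq0 hq1 hα1 hz0 hzr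
  have hz : z ∈ ball (0:ℂ) 1 := by simpa using hz1
  have hzne : z ≠ 0 := norm_pos_iff.1 hz0
  have hqn : ‖(q:ℂ) * z‖ = q * ‖z‖ := by
    rw [norm_mul, Complex.norm_real, Real.norm_of_nonneg hq0.le]
  have hqz : (q:ℂ) * z ∈ ball (0:ℂ) 1 := by
    simp only [mem_ball, dist_zero_right, hqn]
    nlinarith
  have hq1c : (1 - (q:ℂ)) ≠ 0 := by
    rw [sub_ne_zero]
    exact_mod_cast hq1.ne'
  have hne : (q:ℂ) * z ≠ z := by
    intro h
    have : (1 - (q:ℂ)) * z = 0 := by linear_combination -h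
    exact (mul_ne_zero hq1c hzne) this
  have hfne : f z - f ((q:ℂ) * z) ≠ 0 := sub_ne_zero.2 (q_inj hf hz hqz hne)
  have hfne' : f ((q:ℂ) * z) - f z ≠ 0 := sub_ne_zero.2 (q_inj hf hz hqz hne).symm
  refine ⟨div_ne_zero hfne hq1c, ?_⟩
  have hder : HasDerivAt (fun w => (f w - f ((q:ℂ)*w)) / (1 - (q:ℂ)))
      ((deriv f z - deriv f ((q:ℂ) * z) * q) / (1 - (q:ℂ))) z := by
    have h2 : HasDerivAt (fun w : ℂ => (q:ℂ) * w) q z := by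
      simpa using (hasDerivAt_id z).const_mul (q:ℂ)
    exact ((q_hasDeriv hf.1.1 hz).sub ((q_hasDeriv hf.1.1 hqz).comp z h2)).div_const _
  rw [hder.deriv]
  have hP := q_D hf hz hqz hne
  have hQ := q_D hf hqz hz hne.symm
  rw [hqn] at hQ
  have key : z * ((deriv f z - deriv f ((q:ℂ) * z) * q) / (1 - (q:ℂ))) /
      ((f z - f ((q:ℂ)*z)) / (1 - (q:ℂ))) = ((1/2 : ℝ) : ℂ) * (qH f z (q * z) + qH f (q * z) z) := by
    have e1 : ((q:ℂ) * z + z) / ((q:ℂ) * z - z) = - ((z + q * z) / (z - q * z)) := by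
      rw [← neg_sub z, div_neg, add_comm]
    have e2 : 2 * ((q:ℂ) * z) * deriv f (q * z) / (f (q * z) - f z)
        = - (2 * ((q:ℂ) * z) * deriv f (q * z) / (f z - f (q * z))) := by
      rw [← neg_sub (f z), div_neg]
    rw [qH, qH, e1, e2]
    push_cast
    field_simp
    ring
  rw [key, Complex.re_ofReal_mul, Complex.add_re]
  linarith
end
end

section
/- (Modified distortion theorem) Let ψ be a Ma-Minda function and let f₀ be the analytic function on 𝔻 with f₀(0) = 0, f₀'(0) = 1, f₀(z) ≠ 0 for z ∈ 𝔻\{0}, and zf₀'(z) = ψ(z)f₀(z) on 𝔻 (since ψ has real Taylor coefficients, f₀ takes real values on (−1,1)). Fix 0 < r < 1 and let m = min_{|z|=r} |ψ(z)| and M = max_{|z|=r} |ψ(z)|. If f ∈ S*(ψ) and |z₀| = r, then m·(−f₀(−r))/r ≤ |f'(z₀)| ≤ (f₀(r)/r)·M, where f₀(−r) and f₀(r) are real numbers. -/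
open Complex Metric Set

noncomputable section

lemma aux_logd {g : ℂ → ℂ} {z c : ℂ} (hg : DifferentiableAt ℂ g z) (hne : g z ≠ 0) :
    HasDerivAt (fun s : ℝ => Real.log ‖g (z * Complex.exp (c * s))‖)
      ((c * (z * deriv g z / g z)).re) 0 := by
  have h1 : HasDerivAt (fun s : ℝ => z * Complex.exp (c * s)) (z * c) 0 := by
    have : HasDerivAt (fun s : ℂ => z * Complex.exp (c * s)) (z * c) ((0:ℝ):ℂ) := by
      have h := (((hasDerivAt_id ((0:ℝ):ℂ)).const_mul c).cexp).const_mul z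
      simpa using h
    exact this.comp_ofReal
  have h2 : HasDerivAt (fun s : ℝ => g (z * Complex.exp (c * s))) (deriv g z * (z * c)) 0 := by
    have hg' : HasDerivAt g (deriv g z) (z * Complex.exp (c * ((0:ℝ):ℂ))) := by
      simpa using hg.hasDerivAt
    exact HasDerivAt.comp (0:ℝ) hg' h1
  have h3 := h2.div_const (g z)
  have h4 := h3.clog_real (by simp [hne])
  have h5 : HasDerivAt (fun s : ℝ => (Complex.log (g (z * Complex.exp (c * s)) / g z)).re)
      ((c * (z * deriv g z / g z)).re) 0 := by
    have := (Complex.reCLM.hasFDerivAt).comp_hasDerivAt (0:ℝ) h4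
    refine HasDerivAt.congr_deriv this ?_
    change (deriv g z * (z * c) / g z / (g (z * Complex.exp (c * ((0:ℝ):ℂ))) / g z)).re = _
    rw [Complex.ofReal_zero, mul_zero, Complex.exp_zero, mul_one, div_self hne, div_one]
    congr 1
    ring
  have h6 := h5.add_const (Real.log ‖g z‖)
  refine h6.congr_of_eventuallyEq ?_
  have hc : ∀ᶠ s : ℝ in nhds 0, g (z * Complex.exp (c * s)) ≠ 0 :=
    h2.continuousAt.eventually_ne (by simpa using hne)
  filter_upwards [hc] with s hs
  rw [Complex.log_re, norm_div, Real.log_div (norm_ne_zero_iff.2 hs) (norm_ne_zero_iff.2 hne)]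
  ring

lemma aux_left {φ : ℝ → ℝ} {a : ℝ} (h : HasDerivAt φ a 0) (hle : ∀ s < 0, φ s ≤ φ 0) :
    0 ≤ a := by
  have h1 := (hasDerivAt_iff_tendsto_slope.1 h).mono_left
    (nhdsWithin_mono 0 (fun x (hx : x ∈ Iio (0:ℝ)) => ne_of_lt hx))
  refine ge_of_tendsto h1 ?_
  filter_upwards [self_mem_nhdsWithin] with s hs
  rw [slope_def_field]
  exact div_nonneg_of_nonpos (by linarith [hle s hs]) (by simpa using le_of_lt hs)

lemma aux_key (g g0 P Q : ℂ → ℂ) (σ : ℝ) (hσ : |σ| = 1)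
    (hg : DifferentiableOn ℂ g 𝔻) (hgne : ∀ z ∈ 𝔻, g z ≠ 0) (hg1 : g 0 = 1)
    (hg0 : DifferentiableOn ℂ g0 𝔻) (hg0ne : ∀ z ∈ 𝔻, g0 z ≠ 0) (hg01 : g0 0 = 1)
    (hP : ∀ z ∈ 𝔻, z * deriv g z = (P z - 1) * g z)
    (hQ : ∀ z ∈ 𝔻, z * deriv g0 z = (Q z - 1) * g0 z)
    (hPQ : ∀ z ∈ 𝔻, (P z).im = 0 → σ * (P z).re ≤ σ * (Q ((σ * ‖z‖ : ℝ) : ℂ)).re)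
    (z : ℂ) (hz : z ∈ 𝔻) :
    σ * Real.log ‖g z‖ ≤ σ * Real.log ‖g0 ((σ * ‖z‖ : ℝ) : ℂ)‖ := by
  have hD : ∀ w : ℂ, w ∈ 𝔻 ↔ ‖w‖ < 1 := fun w => by simp [𝔻]
  have hDn : ∀ w : ℂ, w ∈ 𝔻 → 𝔻 ∈ nhds w := fun w hw => Metric.isOpen_ball.mem_nhds hw
  have hσD : ∀ w : ℂ, w ∈ 𝔻 → ((σ * ‖w‖ : ℝ) : ℂ) ∈ 𝔻 := fun w hw => by
    rw [hD] at *
    rw [Complex.norm_real, Real.norm_eq_abs, abs_mul, hσ, one_mul, abs_norm]; exact hw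
  suffices H : ∀ ε > 0, σ * (Real.log ‖g z‖ - Real.log ‖g0 ((σ * ‖z‖ : ℝ) : ℂ)‖) - ε * ‖z‖ ≤ 0 by
    have : σ * (Real.log ‖g z‖ - Real.log ‖g0 ((σ * ‖z‖ : ℝ) : ℂ)‖) ≤ 0 := by
      refine le_of_forall_pos_le_add fun ε hε => ?_
      have h1 := H ε hε
      have h2 := (hD z).1 hz
      nlinarith [norm_nonneg z]
    linarith
  intro ε hε
  set K : ℂ → ℝ := fun w =>
    σ * (Real.log ‖g w‖ - Real.log ‖g0 ((σ * ‖w‖ : ℝ) : ℂ)‖) - ε * ‖w‖ with hK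
  have hsub : Metric.closedBall (0:ℂ) ‖z‖ ⊆ 𝔻 := fun w hw => by
    rw [hD] at *
    simp at hw; linarith
  have hKc : ContinuousOn K (Metric.closedBall (0:ℂ) ‖z‖) := by
    refine ContinuousOn.sub (continuousOn_const.mul (ContinuousOn.sub ?_ ?_)) (by fun_prop)
    · exact ContinuousOn.log (hg.continuousOn.mono hsub).norm
        fun w hw => norm_ne_zero_iff.2 (hgne w (hsub hw))
    · refine ContinuousOn.log (ContinuousOn.norm ?_)
        fun w hw => norm_ne_zero_iff.2 (hg0ne _ (hσD w (hsub hw)))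
      exact hg0.continuousOn.comp (t := 𝔻) (by fun_prop) fun w hw => hσD w (hsub hw)
  obtain ⟨x, hx, hmax⟩ := (isCompact_closedBall (0:ℂ) ‖z‖).exists_isMaxOn
    ⟨0, by simp⟩ hKc
  have hmax' : ∀ w : ℂ, ‖w‖ ≤ ‖z‖ → K w ≤ K x := fun w hw => hmax (by simpa using hw)
  have hxz : ‖x‖ ≤ ‖z‖ := by simpa using hx
  have hxD := hsub hx
  change K z ≤ 0
  refine (hmax' z le_rfl).trans ?_
  by_cases hx0 : x = 0
  · simp [hK, hx0, hg1, hg01]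
  exfalso
  have hxpos : 0 < ‖x‖ := norm_pos_iff.2 hx0
  have e1 : x * deriv g x / g x = P x - 1 := by
    rw [hP x hxD]; field_simp [hgne x hxD]
  have e2 : ((σ * ‖x‖ : ℝ) : ℂ) * deriv g0 ((σ * ‖x‖ : ℝ) : ℂ) / g0 ((σ * ‖x‖ : ℝ) : ℂ)
      = Q ((σ * ‖x‖ : ℝ) : ℂ) - 1 := by
    rw [hQ _ (hσD x hxD)]; exact mul_div_cancel_right₀ _ (hg0ne _ (hσD x hxD))
  have hgx : DifferentiableAt ℂ g x := hg.differentiableAt (hDn x hxD)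
  have hg0x := hg0.differentiableAt (hDn _ (hσD x hxD))
  -- tangential
  have him : (P x).im = 0 := by
    have h := aux_logd (c := I) hgx (hgne x hxD)
    rw [e1] at h
    have h' := ((h.sub_const (Real.log ‖g0 ((σ * ‖x‖ : ℝ) : ℂ)‖)).const_mul σ).sub_const (ε * ‖x‖)
    have hloc : IsLocalMax (fun s : ℝ => σ * (Real.log ‖g (x * Complex.exp (I * s))‖
        - Real.log ‖g0 ((σ * ‖x‖ : ℝ) : ℂ)‖) - ε * ‖x‖) 0 := by
      refine Filter.Eventually.of_forall fun s => ?_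
      have hn : ‖x * Complex.exp (I * s)‖ = ‖x‖ := by
        rw [norm_mul, Complex.norm_exp]; simp
      have := hmax' (x * Complex.exp (I * s)) (by rw [hn]; exact hxz)
      simp only [hK, hn] at this
      simpa using this
    have h0 := hloc.hasDerivAt_eq_zero h'
    have hσ0 : σ ≠ 0 := by rintro rfl; simp at hσ
    simpa [hσ0] using h0
  have hrad : 0 ≤ σ * ((P x - 1).re - (Q ((σ * ‖x‖ : ℝ) : ℂ) - 1).re) - ε * ‖x‖ := by
    have h1 := aux_logd (c := 1) hgx (hgne x hxD)
    have h2 := aux_logd (c := 1) hg0x (hg0ne _ (hσD x hxD))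
    rw [e1, one_mul] at h1
    rw [e2, one_mul] at h2
    have h3 : HasDerivAt (fun s : ℝ => ε * (‖x‖ * Real.exp s)) (ε * ‖x‖) 0 := by
      simpa using ((Real.hasDerivAt_exp 0).const_mul ‖x‖).const_mul ε
    refine aux_left (((h1.sub h2).const_mul σ).sub h3) fun s hs => ?_
    have hn : ‖x * Complex.exp (1 * s)‖ = ‖x‖ * Real.exp s := by
      rw [norm_mul, Complex.norm_exp]; simp
    have hle := hmax' (x * Complex.exp (1 * s)) (by
      rw [hn]
      have : Real.exp s ≤ 1 := Real.exp_le_one_iff.2 hs.le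
      nlinarith)
    simp only [hK, hn] at hle
    have e : ((σ * (‖x‖ * Real.exp s) : ℝ) : ℂ)
        = ((σ * ‖x‖ : ℝ) : ℂ) * Complex.exp (1 * s) := by
      push_cast; rw [one_mul]; ring
    rw [e] at hle
    simpa using hle
  have := hPQ x hxD him
  simp only [Complex.sub_re, Complex.one_re] at hrad
  nlinarith [mul_pos hε hxpos]

lemma aux_dslope {f ψ : ℂ → ℂ} (hd : DifferentiableOn ℂ f 𝔻) (h0 : f 0 = 0) (h1 : deriv f 0 = 1)
    (hne : ∀ z ∈ 𝔻, z ≠ 0 → f z ≠ 0) (hψ0 : ψ 0 = 1)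
    (heq : ∀ z ∈ 𝔻, z * deriv f z = ψ z * f z) :
    DifferentiableOn ℂ (dslope f 0) 𝔻 ∧ (∀ z ∈ 𝔻, dslope f 0 z ≠ 0) ∧ dslope f 0 0 = 1 ∧
    (∀ z, f z = z * dslope f 0 z) ∧
    ∀ z ∈ 𝔻, z * deriv (dslope f 0) z = (ψ z - 1) * dslope f 0 z := by
  have hf : ∀ z, f z = z * dslope f 0 z := fun z => by
    have := sub_smul_dslope f 0 z
    simpa [h0] using this.symm
  have hn0 : 𝔻 ∈ nhds (0:ℂ) := Metric.isOpen_ball.mem_nhds (by simp)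
  have hD : DifferentiableOn ℂ (dslope f 0) 𝔻 := (Complex.differentiableOn_dslope hn0).2 hd
  refine ⟨hD, fun z hz => ?_, by simp [h1], hf, fun z hz => ?_⟩
  · by_cases hz0 : z = 0
    · simp [hz0, h1]
    · intro h
      exact hne z hz hz0 (by rw [hf, h, mul_zero])
  · by_cases hz0 : z = 0
    · simp [hz0, hψ0]
    have hda := hD.differentiableAt (Metric.isOpen_ball.mem_nhds hz)
    have h2 : HasDerivAt f (1 * dslope f 0 z + z * deriv (dslope f 0) z) z := by
      have := (hasDerivAt_id z).mul hda.hasDerivAt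
      refine this.congr_of_eventuallyEq (Filter.Eventually.of_forall fun w => ?_)
      simpa using hf w
    have h3 := heq z hz
    rw [h2.deriv, hf z] at h3
    refine mul_left_cancel₀ hz0 ?_
    linear_combination h3

lemma aux_mono {ψ : ℂ → ℂ} (hψ : MaMinda ψ) :
    StrictMonoOn (fun x : ℝ => (ψ x).re) (Ioo (-1) 1) := by
  obtain ⟨hd, hinj, -, -, hpos, -, hconj⟩ := hψ
  have hmem : ∀ x : ℝ, x ∈ Ioo (-1:ℝ) 1 → (x:ℂ) ∈ 𝔻 := fun x hx => by
    simp [𝔻, abs_lt]; exact hx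
  have him : ∀ x : ℝ, x ∈ Ioo (-1:ℝ) 1 → (ψ x).im = 0 := fun x hx => by
    have := hconj x (hmem x hx)
    rw [Complex.conj_ofReal] at this
    exact Complex.conj_eq_iff_im.1 this.symm
  have hc : ContinuousOn (fun x : ℝ => (ψ x).re) (Ioo (-1) 1) :=
    Complex.continuous_re.comp_continuousOn
      (hd.continuousOn.comp (t := 𝔻) (by fun_prop) hmem)
  have hi : InjOn (fun x : ℝ => (ψ x).re) (Ioo (-1) 1) := fun x hx y hy h => by
    have : ψ x = ψ y := Complex.ext h (by rw [him x hx, him y hy])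
    exact_mod_cast hinj (hmem x hx) (hmem y hy) this
  rcases hc.strictMonoOn_of_injOn_Ioo (by norm_num) hi with h | h
  · exact h
  exfalso
  have h0 : (0:ℝ) ∈ Ioo (-1:ℝ) 1 := by norm_num
  have hda : HasDerivAt ψ (deriv ψ 0) ((0:ℝ):ℂ) := by
    simpa using (hd.differentiableAt (Metric.isOpen_ball.mem_nhds (by simp))).hasDerivAt
  have hr : HasDerivAt (fun x : ℝ => (ψ x).re) (deriv ψ 0).re 0 := hda.real_of_complex
  have h1 := hasDerivAt_iff_tendsto_slope.1 hr
  have h2 := le_of_tendsto h1 (b := 0) (by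
    filter_upwards [self_mem_nhdsWithin, mem_nhdsWithin_of_mem_nhds (Ioo_mem_nhds h0.1 h0.2)]
      with s hs hs'
    rw [slope_def_field]
    rcases lt_or_gt_of_ne hs with hs | hs
    · exact div_nonpos_of_nonneg_of_nonpos (by linarith [h hs' h0 hs]) (by linarith)
    · exact div_nonpos_of_nonpos_of_nonneg (by linarith [h h0 hs' hs]) (by linarith))
  linarith

theorem stmt17 (ψ f₀ f : ℂ → ℂ) (hψ : MaMinda ψ)
    (hf₀d : DifferentiableOn ℂ f₀ 𝔻) (hf₀0 : f₀ 0 = 0) (hf₀1 : deriv f₀ 0 = 1)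
    (hf₀ne : ∀ z ∈ 𝔻, z ≠ 0 → f₀ z ≠ 0)
    (hf₀eq : ∀ z ∈ 𝔻, z * deriv f₀ z = ψ z * f₀ z)
    (hreal : ∀ x : ℝ, |x| < 1 → (f₀ (x:ℂ)).im = 0)
    (r : ℝ) (hr0 : 0 < r) (hr1 : r < 1) (m M : ℝ)
    (hm : IsLeast ((fun z => ‖ψ z‖) '' Metric.sphere (0:ℂ) r) m)
    (hM : IsGreatest ((fun z => ‖ψ z‖) '' Metric.sphere (0:ℂ) r) M)
    (hf : StarlikeMM ψ f) (z₀ : ℂ) (hz₀ : ‖z₀‖ = r) :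
    m * (-(f₀ (-(r:ℂ))).re) / r ≤ ‖deriv f z₀‖ ∧
      ‖deriv f z₀‖ ≤ ((f₀ (r:ℂ)).re / r) * M := by
  obtain ⟨hψd, hψinj, hψre, hψ0, -, -, hψconj⟩ := id hψ
  obtain ⟨⟨hfd, hf0, hf1⟩, hfne, ω, hωd, hω0, hωD, hω⟩ := hf
  have hD : ∀ w : ℂ, w ∈ 𝔻 ↔ ‖w‖ < 1 := fun w => by simp [𝔻]
  have hmono := aux_mono hψ
  have hfeq : ∀ z ∈ 𝔻, z * deriv f z = ψ (ω z) * f z := fun z hz => by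
    by_cases hz0 : z = 0
    · simp [hz0, hf0]
    have := hω z hz
    simp only [hz0, if_false] at this
    rw [← this, div_mul_cancel₀ _ (hfne z hz hz0)]
  have hS : ∀ z ∈ 𝔻, ‖ω z‖ ≤ ‖z‖ := fun z hz =>
    Complex.norm_le_norm_of_mapsTo_ball (R := 1) hωd
      (fun w hw => Metric.ball_subset_closedBall (hωD w hw)) hω0 ((hD z).1 hz)
  obtain ⟨g1, g2, g3, g4, g5⟩ := aux_dslope (ψ := fun z => ψ (ω z)) hfd hf0 hf1 hfne
    (by simp [hω0, hψ0]) hfeq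
  obtain ⟨k1, k2, k3, k4, k5⟩ := aux_dslope hf₀d hf₀0 hf₀1 hf₀ne hψ0 hf₀eq
  have hreal_of : ∀ z ∈ 𝔻, (ψ (ω z)).im = 0 → ∃ x : ℝ, ω z = x ∧ |x| ≤ ‖z‖ := fun z hz h => by
    have h1 : starRingEnd ℂ (ω z) = ω z := by
      refine hψinj ?_ (hωD z hz) ?_
      · rw [hD, Complex.norm_conj, ← hD]; exact hωD z hz
      · rw [hψconj _ (hωD z hz)]; exact Complex.conj_eq_iff_im.2 h
    obtain ⟨x, hx⟩ := Complex.conj_eq_iff_real.1 h1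
    refine ⟨x, hx, ?_⟩
    have := hS z hz
    rwa [hx, Complex.norm_real] at this
  have hz₀D : z₀ ∈ 𝔻 := by rw [hD, hz₀]; exact hr1
  have hz₀0 : z₀ ≠ 0 := by rw [← norm_pos_iff, hz₀]; exact hr0
  have up := aux_key (dslope f 0) (dslope f₀ 0) (fun z => ψ (ω z)) ψ 1 (by simp) g1 g2 g3 k1 k2 k3
    g5 k5 (fun z hz h => by
      obtain ⟨x, hx, hxz⟩ := hreal_of z hz h
      have hz1 := (hD z).1 hz
      have := abs_le.1 hxz
      simp only [hx, one_mul]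
      exact hmono.monotoneOn ⟨by linarith, by linarith⟩ ⟨by linarith [norm_nonneg z], hz1⟩ this.2)
    z₀ hz₀D
  have lo := aux_key (dslope f 0) (dslope f₀ 0) (fun z => ψ (ω z)) ψ (-1) (by simp) g1 g2 g3 k1 k2 k3
    g5 k5 (fun z hz h => by
      obtain ⟨x, hx, hxz⟩ := hreal_of z hz h
      have hz1 := (hD z).1 hz
      have := abs_le.1 hxz
      simp only [hx, neg_mul, one_mul]
      exact neg_le_neg (hmono.monotoneOn ⟨by linarith, by linarith [norm_nonneg z]⟩
        ⟨by linarith, by linarith⟩ this.1))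
    z₀ hz₀D
  have hrD : (r:ℂ) ∈ 𝔻 := by rw [hD]; simpa [abs_of_pos hr0] using hr1
  have hrD' : (-(r:ℂ)) ∈ 𝔻 := by rw [hD]; simpa [abs_of_pos hr0] using hr1
  rw [hz₀] at up lo
  simp only [one_mul] at up
  simp only [neg_mul, one_mul, Complex.ofReal_neg, neg_le_neg_iff] at lo
  have up' := (Real.log_le_log_iff (norm_pos_iff.2 (g2 _ hz₀D)) (norm_pos_iff.2 (k2 _ hrD))).1 up
  have lo' := (Real.log_le_log_iff (norm_pos_iff.2 (k2 _ hrD')) (norm_pos_iff.2 (g2 _ hz₀D))).1 lo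
  have hderiv : ‖deriv f z₀‖ = ‖dslope f 0 z₀‖ * ‖ψ (ω z₀)‖ := by
    rw [← norm_mul]
    congr 1
    refine mul_left_cancel₀ hz₀0 ?_
    rw [hfeq z₀ hz₀D, g4 z₀]; ring
  have hsub : Metric.closedBall (0:ℂ) r ⊆ 𝔻 := fun w hw => by
    rw [hD]; simp at hw; linarith
  have hclos : closure (Metric.ball (0:ℂ) r) = Metric.closedBall 0 r := closure_ball _ hr0.ne'
  have hfr : frontier (Metric.ball (0:ℂ) r) = Metric.sphere 0 r := frontier_ball _ hr0.ne'
  have hωcl : ω z₀ ∈ closure (Metric.ball (0:ℂ) r) := by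
    rw [hclos]; simpa [hz₀] using hS z₀ hz₀D
  have hψne : ∀ z ∈ 𝔻, ψ z ≠ 0 := fun z hz h => by
    have := hψre z hz; rw [h] at this; simp at this
  have hMle : ‖ψ (ω z₀)‖ ≤ M := by
    refine Complex.norm_le_of_forall_mem_frontier_norm_le Metric.isBounded_ball
      (DifferentiableOn.diffContOnCl (hψd.mono (by rw [hclos]; exact hsub))) (fun w hw => ?_) hωcl
    rw [hfr] at hw
    exact hM.2 ⟨w, hw, rfl⟩
  have hmpos : 0 < m := by
    obtain ⟨w, hw, rfl⟩ := hm.1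
    exact norm_pos_iff.2 (hψne w (hsub (Metric.sphere_subset_closedBall hw)))
  have hmle : m ≤ ‖ψ (ω z₀)‖ := by
    have : ‖(ψ (ω z₀))⁻¹‖ ≤ m⁻¹ := by
      refine Complex.norm_le_of_forall_mem_frontier_norm_le (f := fun z => (ψ z)⁻¹)
        Metric.isBounded_ball (DifferentiableOn.diffContOnCl ?_) (fun w hw => ?_) hωcl
      · rw [hclos]
        exact (hψd.mono hsub).inv fun w hw => hψne w (hsub hw)
      · rw [hfr] at hw
        rw [norm_inv]
        exact inv_anti₀ hmpos (hm.2 ⟨w, hw, rfl⟩)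
    rw [norm_inv] at this
    exact (inv_le_inv₀ (norm_pos_iff.2 (hψne _ (hωD z₀ hz₀D))) hmpos).1 this
  have hnr : ‖dslope f₀ 0 (r:ℂ)‖ = ‖f₀ r‖ / r := by
    rw [k4 r, norm_mul, Complex.norm_real, Real.norm_eq_abs, abs_of_pos hr0]; field_simp
  have hnr' : ‖dslope f₀ 0 (-(r:ℂ))‖ = ‖f₀ (-(r:ℂ))‖ / r := by
    rw [k4 (-(r:ℂ)), norm_mul, norm_neg, Complex.norm_real, Real.norm_eq_abs, abs_of_pos hr0]
    field_simp
  -- positivity of `f₀ r`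
  have hpos : 0 < (dslope f₀ 0 (r:ℂ)).re := by
    by_contra hcon
    push Not at hcon
    have hIcc : ∀ x ∈ Icc (0:ℝ) r, (x:ℂ) ∈ 𝔻 := fun x hx => by
      rw [hD, Complex.norm_real, Real.norm_eq_abs, abs_of_nonneg hx.1]; linarith [hx.2]
    have hc : ContinuousOn (fun x : ℝ => (dslope f₀ 0 (x:ℂ)).re) (Icc 0 r) :=
      Complex.continuous_re.comp_continuousOn
        (k1.continuousOn.comp (t := 𝔻) (by fun_prop) hIcc)
    obtain ⟨x, hx, hx0⟩ := intermediate_value_Icc' hr0.le hc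
      (show (0:ℝ) ∈ _ from ⟨hcon, by simp [hf₀1]⟩)
    have hxne : x ≠ 0 := by
      rintro rfl
      simp [hf₀1] at hx0
    have hfx : (f₀ x).re = 0 := by
      have him := hreal x (by rw [abs_of_nonneg hx.1]; linarith [hx.2])
      rw [k4 x] at him ⊢
      simp only [Complex.re_ofReal_mul] 
      simp at hx0
      rw [hx0, mul_zero]
    refine hf₀ne x (hIcc x hx) (by exact_mod_cast hxne) (Complex.ext hfx ?_)
    exact hreal x (by rw [abs_of_nonneg hx.1]; linarith [hx.2])
  have hfr_re : ‖f₀ r‖ = (f₀ r).re := by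
    have him := hreal r (by rw [abs_of_pos hr0]; exact hr1)
    have h0 : 0 ≤ (f₀ r).re := by
      rw [k4 r, Complex.re_ofReal_mul]; positivity
    have : f₀ r = (((f₀ r).re : ℝ) : ℂ) := Complex.ext (by simp) (by simpa using him)
    rw [this, Complex.norm_real, Real.norm_eq_abs, Complex.ofReal_re, abs_of_nonneg h0]
  have hlow : -(f₀ (-(r:ℂ))).re ≤ ‖f₀ (-(r:ℂ))‖ :=
    (neg_le_abs _).trans (Complex.abs_re_le_norm _)
  rw [hnr, hfr_re] at up'
  rw [hnr'] at lo'
  rw [hderiv]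
  constructor
  · calc m * (-(f₀ (-(r:ℂ))).re) / r ≤ m * ‖f₀ (-(r:ℂ))‖ / r := by gcongr
      _ = (‖f₀ (-(r:ℂ))‖ / r) * m := by ring
      _ ≤ _ := by gcongr
  · have : 0 ≤ (f₀ r).re / r := (norm_nonneg _).trans up'
    gcongr
end
end
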